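/- arXiv:2507.06142 — 11 statements merged into one kernel-verified Lean document; each statement's English description precedes it below -/
import Mathlib

section
/- Let α₋ < 0 < α₊ be real numbers and let f : ℝ → ℂ be Lebesgue integrable. Suppose there exist constants C > 0 and R > 0 such that |𝓕[f](ξ)| ≤ C·e^{2π α₊ ξ} for all ξ ≤ −R and |𝓕[f](ξ)| ≤ C·e^{2π α₋ ξ} for all ξ ≥ R. Then there exists a function F : ℂ → ℂ that is holomorphic on the open horizontal strip {z ∈ ℂ : α₋ < Im z < α₊} and satisfies F(t) = f(t) for almost every t ∈ ℝ. -/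
open MeasureTheory FourierTransform Filter Real

open scoped ContDiff in
lemma inv_ae (f : ℝ → ℂ) (hf : Integrable f) (hF : Integrable (𝓕 f)) :
    ∀ᵐ t : ℝ, 𝓕⁻ (𝓕 f) t = f t := by
  have hcont : Continuous (𝓕⁻ (𝓕 f)) :=
    VectorFourier.fourierIntegral_continuous Real.continuous_fourierChar
      (L := -innerₗ ℝ) (by
        have : Continuous fun p : ℝ × ℝ ↦ - (inner ℝ p.1 p.2) := by fun_prop
        exact this) hF
  apply ae_eq_of_integral_contDiff_smul_eq hcont.locallyIntegrable hf.locallyIntegrable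
  intro g g_smooth g_cpt
  have hg₁ : HasCompactSupport (Complex.ofRealCLM ∘ g) := g_cpt.comp_left rfl
  have hg₂ : ContDiff ℝ ∞ (Complex.ofRealCLM ∘ g) := by fun_prop
  let φ := hg₁.toSchwartzMap hg₂
  have hφ : ∀ x, φ x = (g x : ℂ) := fun x => rfl
  have h1 : ∫ x, (𝓕 (𝓕⁻ φ)) x • f x = ∫ x, (𝓕⁻ φ) x • 𝓕 f x := by
    have := VectorFourier.integral_fourierIntegral_smul_eq_flip (L := innerₗ ℝ) (μ := volume)
      (ν := volume) (f := (𝓕⁻ φ : SchwartzMap ℝ ℂ)) (g := f) Real.continuous_fourierChar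
      continuous_inner (𝓕⁻ φ).integrable hf
    rw [flip_innerₗ] at this
    exact this
  have h2 : ∫ x, (𝓕⁻ φ) x • 𝓕 f x = ∫ x, φ x • 𝓕⁻ (𝓕 f) x := by
    have := VectorFourier.integral_fourierIntegral_smul_eq_flip (L := -innerₗ ℝ) (μ := volume)
      (ν := volume) (f := φ) (g := 𝓕 f) Real.continuous_fourierChar
      (by
        have : Continuous fun p : ℝ × ℝ ↦ - (inner ℝ p.1 p.2) := by fun_prop
        exact this) φ.integrable hF
    have e : (-innerₗ ℝ : ℝ →ₗ[ℝ] ℝ →ₗ[ℝ] ℝ).flip = -innerₗ ℝ := by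
      ext; simp
    rw [e] at this
    rw [SchwartzMap.fourierInv_coe]
    exact this
  rw [FourierTransform.fourier_fourierInv_eq, h2] at h1
  simp only [hφ] at h1
  simpa using h1.symm

lemma integrable_exp_neg_mul_abs' {c : ℝ} (hc : 0 < c) :
    Integrable (fun x : ℝ => Real.exp (-c * |x|)) := by
  rw [← integrableOn_univ, ← Set.Iic_union_Ioi (a := (0:ℝ))]
  apply IntegrableOn.union
  · refine (integrableOn_exp_mul_Iic hc 0).congr_fun (fun x hx => ?_) measurableSet_Iic
    simp only [abs_of_nonpos (Set.mem_Iic.1 hx)]; ring_nf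
  · refine (integrableOn_exp_mul_Ioi (neg_lt_zero.2 hc) 0).congr_fun (fun x hx => ?_)
      measurableSet_Ioi
    simp only [abs_of_pos (Set.mem_Ioi.1 hx)]

lemma one_side (g : ℝ → ℂ) (M C R a : ℝ) (hM : 0 ≤ M) (ha : 0 < a) (hg : ∀ x, ‖g x‖ ≤ M)
    (hC : 0 < C) (h : ∀ x, R ≤ x → ‖g x‖ ≤ C * Real.exp (-a * x)) :
    ∀ x, ‖g x‖ ≤ (C + M * Real.exp (a * R)) * Real.exp (-a * x) := by
  intro x
  have e := Real.exp_pos (-a * x)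
  rcases le_total R x with hx | hx
  · refine (h x hx).trans ?_
    gcongr
    have := Real.exp_pos (a * R)
    nlinarith
  · have : 1 ≤ Real.exp (a * R) * Real.exp (-a * x) := by
      rw [← Real.exp_add]; apply Real.one_le_exp; nlinarith
    have := hg x
    nlinarith

lemma comb (αm αp : ℝ) (g : ℝ → ℂ) (K : ℝ) (hK : 0 ≤ K)
    (h1 : ∀ x, ‖g x‖ ≤ K * Real.exp (2 * π * αp * x))
    (h2 : ∀ x, ‖g x‖ ≤ K * Real.exp (2 * π * αm * x)) (δ y : ℝ)
    (hy1 : αm + δ ≤ y) (hy2 : y ≤ αp - δ) (x : ℝ) :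
    ‖g x‖ * Real.exp (-2 * π * x * y) ≤ K * Real.exp (-(2 * π * δ) * |x|) := by
  have hp := Real.pi_pos
  rcases le_total 0 x with hx | hx
  · calc _ ≤ (K * Real.exp (2 * π * αm * x)) * Real.exp (-2 * π * x * y) := by
          gcongr; exact h2 x
      _ = K * Real.exp (2 * π * (x * (αm - y))) := by
          rw [mul_assoc, ← Real.exp_add]; ring_nf
      _ ≤ _ := by
          rw [abs_of_nonneg hx, show -(2 * π * δ) * x = 2 * π * (x * (-δ)) by ring]
          gcongr; linarith
  · calc _ ≤ (K * Real.exp (2 * π * αp * x)) * Real.exp (-2 * π * x * y) := by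
          gcongr; exact h1 x
      _ = K * Real.exp (2 * π * ((-x) * (y - αp))) := by
          rw [mul_assoc, ← Real.exp_add]; ring_nf
      _ ≤ _ := by
          rw [abs_of_nonpos hx, show -(2 * π * δ) * -x = 2 * π * ((-x) * (-δ)) by ring]
          have : 0 ≤ -x := by linarith
          gcongr; linarith

lemma norm_kernel (z : ℂ) (x : ℝ) :
    ‖Complex.exp (2 * π * x * Complex.I * z)‖ = Real.exp (-2 * π * x * z.im) := by
  rw [Complex.norm_exp]; congr 1; simp

lemma diff_main (αm αp : ℝ) (g : ℝ → ℂ) (hgc : Continuous g) (K : ℝ) (hK : 0 ≤ K)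
    (h1 : ∀ x, ‖g x‖ ≤ K * Real.exp (2 * π * αp * x))
    (h2 : ∀ x, ‖g x‖ ≤ K * Real.exp (2 * π * αm * x)) :
    DifferentiableOn ℂ (fun z : ℂ => ∫ x : ℝ, Complex.exp (2 * π * x * Complex.I * z) * g x)
      {z : ℂ | αm < z.im ∧ z.im < αp} := by
  intro z hz
  obtain ⟨hz1, hz2⟩ := hz
  have hp := Real.pi_pos
  obtain ⟨δ, hδ, hd1, hd2⟩ : ∃ δ : ℝ, 0 < δ ∧ αm + δ < z.im ∧ z.im < αp - δ := by
    refine ⟨min (z.im - αm) (αp - z.im) / 2, ?_, ?_, ?_⟩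
    · have := lt_min (sub_pos.2 hz1) (sub_pos.2 hz2); linarith
    · have := min_le_left (z.im - αm) (αp - z.im); linarith
    · have := min_le_right (z.im - αm) (αp - z.im); linarith
  have hs : {w : ℂ | αm + δ < w.im ∧ w.im < αp - δ} ∈ nhds z := by
    refine IsOpen.mem_nhds ?_ ⟨hd1, hd2⟩
    exact (isOpen_lt continuous_const Complex.continuous_im).inter
      (isOpen_lt Complex.continuous_im continuous_const)
  have key := hasDerivAt_integral_of_dominated_loc_of_deriv_le (μ := (volume : Measure ℝ))
    (F := fun (z : ℂ) (x : ℝ) => Complex.exp (2 * π * x * Complex.I * z) * g x)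
    (F' := fun (z : ℂ) (x : ℝ) =>
      Complex.exp (2 * π * x * Complex.I * z) * (2 * π * x * Complex.I) * g x)
    (bound := fun x => (2 / δ) * K * Real.exp (-(π * δ) * |x|)) hs ?_ ?_ ?_ ?_ ?_ ?_
  · exact key.2.differentiableAt.differentiableWithinAt
  · exact Eventually.of_forall fun w => (by fun_prop : Continuous _).aestronglyMeasurable
  · refine Integrable.mono' ((integrable_exp_neg_mul_abs' (c := 2 * π * δ) (by positivity)).const_mul K)
      (by fun_prop : Continuous _).aestronglyMeasurable (Eventually.of_forall fun x => ?_)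
    rw [norm_mul, norm_kernel, mul_comm]
    exact comb αm αp g K hK h1 h2 δ z.im hd1.le hd2.le x
  · exact (by fun_prop : Continuous _).aestronglyMeasurable
  · refine Eventually.of_forall fun x w hw => ?_
    have c := comb αm αp g K hK h1 h2 δ w.im hw.1.le hw.2.le x
    rw [norm_mul, norm_mul, norm_kernel]
    have e1 : ‖(2 * π * x * Complex.I : ℂ)‖ = 2 * π * |x| := by
      simp [abs_of_pos hp]
    rw [e1]
    have e2 : 2 * π * |x| ≤ (2 / δ) * Real.exp (π * δ * |x|) := by
      have := Real.add_one_le_exp (π * δ * |x|)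
      rw [div_mul_eq_mul_div, le_div_iff₀ hδ]
      nlinarith
    calc _ = (2 * π * |x|) * (‖g x‖ * Real.exp (-2 * π * x * w.im)) := by ring
      _ ≤ ((2 / δ) * Real.exp (π * δ * |x|)) * (K * Real.exp (-(2 * π * δ) * |x|)) := by
        gcongr
      _ = (2 / δ) * K * (Real.exp (π * δ * |x|) * Real.exp (-(2 * π * δ) * |x|)) := by ring
      _ = _ := by rw [← Real.exp_add]; ring_nf
  · exact (integrable_exp_neg_mul_abs' (by positivity)).const_mul _
  · refine Eventually.of_forall fun x w hw => ?_
    have := ((hasDerivAt_id w).const_mul (2 * π * x * Complex.I : ℂ)).cexp.mul_const (g x)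
    simpa using this

/-- If `f ∈ L¹(ℝ)` and its Fourier transform decays like `e^{2π α₊ ξ}` as
`ξ → -∞` and like `e^{2π α₋ ξ}` as `ξ → +∞` (with `α₋ < 0 < α₊`), then `f` agrees a.e. with a
function holomorphic on the open horizontal strip `{z : α₋ < Im z < α₊}`. -/
theorem stmt_0 (αm αp : ℝ) (hαm : αm < 0) (hαp : 0 < αp)
    (f : ℝ → ℂ) (hf : Integrable f)
    (C R : ℝ) (hC : 0 < C) (hR : 0 < R)
    (hdecay_neg : ∀ ξ : ℝ, ξ ≤ -R → ‖𝓕 f ξ‖ ≤ C * Real.exp (2 * π * αp * ξ))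
    (hdecay_pos : ∀ ξ : ℝ, R ≤ ξ → ‖𝓕 f ξ‖ ≤ C * Real.exp (2 * π * αm * ξ)) :
    ∃ F : ℂ → ℂ, DifferentiableOn ℂ F {z : ℂ | αm < z.im ∧ z.im < αp} ∧
      ∀ᵐ t : ℝ, F (t : ℂ) = f t := by
  have hp := Real.pi_pos
  have hgc : Continuous (𝓕 f) :=
    VectorFourier.fourierIntegral_continuous Real.continuous_fourierChar
      (L := innerₗ ℝ) continuous_inner hf
  have hM : ∀ x, ‖𝓕 f x‖ ≤ ∫ t, ‖f t‖ := fun x =>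
    VectorFourier.norm_fourierIntegral_le_integral_norm _ _ _ _ _
  have hM0 : 0 ≤ ∫ t, ‖f t‖ := integral_nonneg fun _ => norm_nonneg _
  have b1 := one_side (𝓕 f) _ C R (-(2 * π * αm)) hM0 (by nlinarith) hM hC
    (fun x hx => by simpa using hdecay_pos x hx)
  have b2 := one_side (fun x => 𝓕 f (-x)) _ C R (2 * π * αp) hM0 (by positivity)
    (fun x => hM _) hC
    (fun x hx => by simpa using hdecay_neg (-x) (by linarith))
  obtain ⟨K, hK, h1, h2⟩ : ∃ K : ℝ, 0 ≤ K ∧ (∀ x, ‖𝓕 f x‖ ≤ K * Real.exp (2 * π * αp * x)) ∧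
      (∀ x, ‖𝓕 f x‖ ≤ K * Real.exp (2 * π * αm * x)) := by
    refine ⟨max (C + (∫ t, ‖f t‖) * Real.exp (-(2 * π * αm) * R))
      (C + (∫ t, ‖f t‖) * Real.exp ((2 * π * αp) * R)),
      le_max_of_le_left (by positivity), fun x => ?_, fun x => ?_⟩
    · have := b2 (-x)
      simp only [neg_neg, neg_mul_neg] at this
      refine this.trans ?_
      gcongr
      exact le_max_right _ _
    · have := b1 x
      simp only [neg_neg] at this
      refine this.trans ?_
      gcongr
      exact le_max_left _ _
  refine ⟨_, diff_main αm αp (𝓕 f) hgc K hK h1 h2, ?_⟩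
  have hF : Integrable (𝓕 f) := by
    have hδ : 0 < min (-αm) αp := lt_min (by linarith) hαp
    refine Integrable.mono' ((integrable_exp_neg_mul_abs' (c := 2 * π * min (-αm) αp)
      (by positivity)).const_mul K) hgc.aestronglyMeasurable (Eventually.of_forall fun x => ?_)
    have := comb αm αp (𝓕 f) K hK h1 h2 (min (-αm) αp) 0
      (by have := min_le_left (-αm) αp; linarith) (by have := min_le_right (-αm) αp; linarith) x
    simpa using this
  filter_upwards [inv_ae f hf hF] with t ht
  rw [← ht, Real.fourierInv_eq']
  congr 1
  ext x
  simp only [smul_eq_mul]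
  congr 2
  simp
  ring
end

section
/- Let α > 0, let σ ∈ {1, −1}, and let f : ℂ → ℂ be holomorphic on an open set containing the closed horizontal strip {z ∈ ℂ : σ·Im z ∈ [0, α]}. Assume that the functions t ↦ f(t) and t ↦ f(t + σiα) are Lebesgue integrable on ℝ, and that sup_{y : σ y ∈ [0,α]} |f(t + i y)| → 0 as t → +∞ and as t → −∞. Then for every ξ ∈ ℝ, |𝓕[f|_ℝ](ξ)| ≤ e^{2πσαξ} · ∫_ℝ |f(t + iσα)| dt. -/
open MeasureTheory FourierTransform Filter Real

theorem strip_aux (β : ℝ) (f : ℂ → ℂ)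
    (hd : ∀ z : ℂ, z.im ∈ Set.uIcc 0 β → DifferentiableAt ℂ f z)
    (hint₁ : Integrable (fun t : ℝ => f t))
    (hint₂ : Integrable (fun t : ℝ => f (t + (β : ℂ) * Complex.I)))
    (hdecay : ∀ ε > 0, ∃ T : ℝ, ∀ t : ℝ, T ≤ |t| → ∀ y : ℝ, y ∈ Set.uIcc 0 β →
      ‖f (t + (y : ℂ) * Complex.I)‖ ≤ ε) (ξ : ℝ) :
    ‖𝓕 (fun t : ℝ => f t) ξ‖ ≤
      Real.exp (2 * π * β * ξ) * ∫ t : ℝ, ‖f (t + (β : ℂ) * Complex.I)‖ := by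
  set g : ℂ → ℂ := fun z => Complex.exp (-2 * π * Complex.I * ξ * z) * f z with hg
  have hgn : ∀ t y : ℝ, ‖g (t + (y : ℂ) * Complex.I)‖ =
      Real.exp (2 * π * y * ξ) * ‖f (t + (y : ℂ) * Complex.I)‖ := by
    intro t y
    simp only [hg, norm_mul, Complex.norm_exp]
    congr 2
    simp
    ring
  have hgn0 : ∀ t : ℝ, ‖g t‖ = ‖f t‖ := by
    intro t
    have := hgn t 0
    simpa using this
  have hdg : ∀ z : ℂ, z.im ∈ Set.uIcc 0 β → DifferentiableAt ℂ g z := by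
    intro z hz
    have := hd z hz
    simp only [hg]
    fun_prop
  have hc : Continuous fun t : ℝ => g t := by
    rw [continuous_iff_continuousAt]
    intro t
    have := (hdg t (by simp)).continuousAt
    exact ContinuousAt.comp (f := fun t : ℝ => (t : ℂ)) (g := g) this (by fun_prop)
  have hc2 : Continuous fun t : ℝ => g (t + (β : ℂ) * Complex.I) := by
    rw [continuous_iff_continuousAt]
    intro t
    have := (hdg (t + (β : ℂ) * Complex.I) (by simp)).continuousAt
    exact ContinuousAt.comp (f := fun t : ℝ => (t + (β : ℂ) * Complex.I : ℂ)) (g := g) this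
      (by fun_prop)
  have hg1 : Integrable (fun t : ℝ => g t) :=
    hint₁.mono hc.aestronglyMeasurable (.of_forall fun t => (hgn0 t).le)
  have hg2 : Integrable (fun t : ℝ => g (t + (β : ℂ) * Complex.I)) := by
    refine (hint₂.norm.const_mul (Real.exp (2 * π * β * ξ))).mono' hc2.aestronglyMeasurable
      (.of_forall fun t => (hgn t β).le)
  have hF : 𝓕 (fun t : ℝ => f t) ξ = ∫ t : ℝ, g t := by
    rw [Real.fourier_real_eq_integral_exp_smul]
    congr 1
    ext t
    simp only [hg, smul_eq_mul]
    congr 2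
    push_cast
    ring
  -- side integrals
  have side : ∀ s : ℝ → ℝ, (∀ T, |s T| = |T|) →
      Tendsto (fun T : ℝ => ∫ y in (0:ℝ)..β, g (s T + (y : ℂ) * Complex.I)) atTop (nhds 0) := by
    intro s hs
    set M := Real.exp (2 * π * |β| * |ξ|) with hM
    have hMpos : 0 < M := Real.exp_pos _
    rw [Metric.tendsto_atTop]
    intro ε hε
    obtain ⟨T, hT⟩ := hdecay (ε / (M * (|β| + 1))) (by positivity)
    refine ⟨T, fun t ht => ?_⟩
    rw [dist_zero_right]
    have hb : ∀ y ∈ Set.uIoc 0 β, ‖g (s t + (y : ℂ) * Complex.I)‖ ≤ M * (ε / (M * (|β| + 1))) := by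
      intro y hy
      have hy' : y ∈ Set.uIcc 0 β := Set.uIoc_subset_uIcc hy
      have hyb : |y| ≤ |β| := by
        have := Set.abs_sub_left_of_mem_uIcc hy'
        simpa using this
      rw [hgn]
      have h1 := hT (s t) (by rw [hs]; exact ht.trans (le_abs_self t)) y hy'
      have h2 : Real.exp (2 * π * y * ξ) ≤ M := by
        rw [hM]
        apply Real.exp_le_exp.2
        have h3 : y * ξ ≤ |β| * |ξ| := by
          calc y * ξ ≤ |y * ξ| := le_abs_self _
            _ = |y| * |ξ| := abs_mul _ _
            _ ≤ _ := by gcongr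
        have := mul_le_mul_of_nonneg_left h3 (by positivity : 0 ≤ 2 * π)
        linarith
      gcongr
    refine (intervalIntegral.norm_integral_le_of_norm_le_const hb).trans_lt ?_
    have : M * (ε / (M * (|β| + 1))) * |β - 0| = ε * (|β| / (|β| + 1)) := by
      rw [sub_zero]; field_simp
    rw [this]
    have : |β| / (|β| + 1) < 1 := by
      rw [div_lt_one (by positivity)]; linarith
    nlinarith
  have hL : Tendsto (fun T : ℝ => ∫ x in (-T)..T, g x) atTop (nhds (∫ x : ℝ, g x)) :=
    intervalIntegral_tendsto_integral hg1 tendsto_neg_atTop_atBot tendsto_id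
  have hU : Tendsto (fun T : ℝ => ∫ x in (-T)..T, g (x + (β : ℂ) * Complex.I)) atTop
      (nhds (∫ x : ℝ, g (x + (β : ℂ) * Complex.I))) :=
    intervalIntegral_tendsto_integral hg2 tendsto_neg_atTop_atBot tendsto_id
  have hR := side (fun T => T) (fun T => rfl)
  have hLe := side (fun T => -T) (fun T => abs_neg T)
  have hsum := ((hL.sub hU).add (hR.const_smul Complex.I)).sub (hLe.const_smul Complex.I)
  have hzero : ∀ T : ℝ, (∫ x in (-T)..T, g x) - (∫ x in (-T)..T, g (x + (β : ℂ) * Complex.I))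
      + Complex.I • (∫ y in (0:ℝ)..β, g ((T : ℝ) + (y : ℂ) * Complex.I))
      - Complex.I • (∫ y in (0:ℝ)..β, g ((-T : ℝ) + (y : ℂ) * Complex.I)) = 0 := by
    intro T
    have := Complex.integral_boundary_rect_eq_zero_of_differentiableOn g ((-T : ℝ) : ℂ)
      ((T : ℂ) + (β : ℂ) * Complex.I) (by
        intro z hz
        refine (hdg z ?_).differentiableWithinAt
        have := hz.2
        simpa using this)
    simpa using this
  have heq := tendsto_nhds_unique hsum (by
    simp only [hzero]
    exact tendsto_const_nhds)
  have heq' : ∫ x : ℝ, g x = ∫ x : ℝ, g (x + (β : ℂ) * Complex.I) := by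
    simpa [sub_eq_zero] using heq
  rw [hF, heq', ← integral_const_mul]
  refine (norm_integral_le_integral_norm _).trans (le_of_eq ?_)
  simp only [hgn]

/-- If `f` is holomorphic on an open set containing the closed horizontal
strip `{z : σ Im z ∈ [0, α]}`, with `t ↦ f t` and `t ↦ f (t + σiα)` integrable on `ℝ`, and
`sup_{σ y ∈ [0,α]} |f(t+iy)| → 0` as `t → ±∞`, then for every `ξ`,
`|𝓕[f|_ℝ](ξ)| ≤ e^{2πσαξ} ∫ |f(t + iσα)| dt`. -/
theorem stmt_1 (α : ℝ) (hα : 0 < α) (σ : ℝ) (hσ : σ = 1 ∨ σ = -1)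
    (f : ℂ → ℂ)
    (hol : ∃ U : Set ℂ, IsOpen U ∧ {z : ℂ | σ * z.im ∈ Set.Icc 0 α} ⊆ U ∧
      DifferentiableOn ℂ f U)
    (hint₁ : Integrable (fun t : ℝ => f t))
    (hint₂ : Integrable (fun t : ℝ => f (t + ((σ * α : ℝ) : ℂ) * Complex.I)))
    (hdecay : ∀ ε > 0, ∃ T : ℝ, ∀ t : ℝ, T ≤ |t| → ∀ y : ℝ, σ * y ∈ Set.Icc 0 α →
      ‖f (t + (y : ℂ) * Complex.I)‖ ≤ ε) :
    ∀ ξ : ℝ, ‖𝓕 (fun t : ℝ => f t) ξ‖ ≤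
      Real.exp (2 * π * σ * α * ξ) * ∫ t : ℝ, ‖f (t + ((σ * α : ℝ) : ℂ) * Complex.I)‖ := by
  intro ξ
  obtain ⟨U, hU, hsub, hdf⟩ := hol
  have hmem : ∀ y : ℝ, y ∈ Set.uIcc 0 (σ * α) → σ * y ∈ Set.Icc 0 α := by
    intro y hy
    rcases hσ with rfl | rfl
    · rw [one_mul, Set.uIcc_of_le hα.le] at hy
      simpa using hy
    · rw [Set.uIcc_of_ge (by linarith)] at hy
      constructor <;> linarith [hy.1, hy.2]
  have := strip_aux (σ * α) f
    (fun z hz => hdf.differentiableAt (hU.mem_nhds (hsub (hmem _ hz)))) hint₁ hint₂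
    (fun ε hε => by
      obtain ⟨T, hT⟩ := hdecay ε hε
      exact ⟨T, fun t ht y hy => hT t ht y (hmem y hy)⟩) ξ
  rwa [← mul_assoc (2 * π) σ α] at this
end

section
/- Let J be a finite index set, let d be a positive integer, let (c_j)_{j∈J} be complex numbers, and let ((γ_j, φ_j))_{j∈J} be a family of pairwise distinct pairs where each γ_j ∈ ℝ and each φ_j is a real polynomial with φ_j(0) = 0. Define E : (0,∞) → ℂ by E(y) = ∑_{j∈J} c_j · y^{iγ_j} · e^{i φ_j(y^{−1/d})}. If c_j ≠ 0 for some j ∈ J, then there exist ε > 0 and a sequence (s_i)_{i∈ℕ} of positive reals converging to 0 such that |E(s_i)| ≥ ε for all i ∈ ℕ. -/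
open Filter

lemma aux_bdd {u v : ℝ → ℂ} (hu : ∀ x, ‖u x‖ = 1) (hv : Tendsto v atTop (nhds 0)) :
    Tendsto (fun x => u x * v x) atTop (nhds 0) := by
  rw [tendsto_zero_iff_norm_tendsto_zero] at hv ⊢
  simpa [hu] using hv

lemma aux_norm (r : ℝ) : ‖Complex.exp (Complex.I * (r : ℂ))‖ = 1 := by
  rw [mul_comm]; exact Complex.norm_exp_ofReal_mul_I r

lemma aux_indep {J : Type*} [DecidableEq J] (ψ : J → ℝ → ℝ)
    (H : ∀ S : Finset J, ∀ l ∈ S, S ≠ {l} → ∃ m ∈ S, m ≠ l ∧ ∃ g : ℝ → ℝ, ∃ θ : J → ℝ,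
      Tendsto g atTop atTop ∧ θ m = Real.pi ∧ ∀ j ∈ S,
        Tendsto (fun x => (ψ j (g x) - ψ l (g x)) - (ψ j x - ψ l x)) atTop (nhds (θ j))) :
    ∀ n : ℕ, ∀ S : Finset J, S.card = n → ∀ c : J → ℂ,
      Tendsto (fun x => ∑ j ∈ S, c j * Complex.exp (Complex.I * (ψ j x : ℂ))) atTop (nhds 0) →
      ∀ l ∈ S, c l = 0 := by
  intro n
  induction n with
  | zero =>
    intro S hS c _ l hl
    rw [Finset.card_eq_zero] at hS
    simp [hS] at hl
  | succ n ih =>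
    intro S hS c hF l hl
    -- divide by the l-th term
    have hU : Tendsto (fun x => ∑ j ∈ S, c j * Complex.exp (Complex.I * ((ψ j x - ψ l x : ℝ) : ℂ)))
        atTop (nhds 0) := by
      have := aux_bdd (u := fun x => Complex.exp (Complex.I * ((-ψ l x : ℝ) : ℂ)))
        (fun x => aux_norm _) hF
      refine this.congr fun x => ?_
      rw [Finset.mul_sum]
      refine Finset.sum_congr rfl fun j _ => ?_
      rw [mul_left_comm, ← Complex.exp_add]
      congr 2
      push_cast; ring
    by_cases hSl : S = {l}
    · subst hSl
      simp only [Finset.sum_singleton, sub_self, Complex.ofReal_zero, mul_zero, Complex.exp_zero,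
        mul_one] at hU
      exact tendsto_nhds_unique tendsto_const_nhds hU
    obtain ⟨m, hm, hml, g, θ, hg, hθm, hθ⟩ := H S l hl hSl
    have hθl : θ l = 0 := by
      have := hθ l hl
      simp only [sub_self] at this
      exact tendsto_nhds_unique this tendsto_const_nhds
    have hUg := hU.comp hg
    have hdiff : Tendsto (fun x => ∑ j ∈ S, c j * (Complex.exp (Complex.I * ((ψ j x - ψ l x : ℝ) : ℂ))
        * (Complex.exp (Complex.I * (((ψ j (g x) - ψ l (g x)) - (ψ j x - ψ l x) : ℝ) : ℂ))
          - Complex.exp (Complex.I * (θ j : ℂ))))) atTop (nhds 0) := by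
      rw [← Finset.sum_const_zero (s := S)]
      refine tendsto_finsetSum _ fun j hj => ?_
      rw [← mul_zero (c j)]
      refine Tendsto.const_mul _ ?_
      refine aux_bdd (fun x => aux_norm _) ?_
      rw [← sub_self (Complex.exp (Complex.I * (θ j : ℂ)))]
      refine Tendsto.sub_const ?_ _
      have hcont : Continuous fun r : ℝ => Complex.exp (Complex.I * (r : ℂ)) := by fun_prop
      exact (hcont.tendsto (θ j)).comp (hθ j hj)
    have hV : Tendsto (fun x => ∑ j ∈ S, (c j * (Complex.exp (Complex.I * (θ j : ℂ)) + 1)) *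
        Complex.exp (Complex.I * ((ψ j x - ψ l x : ℝ) : ℂ))) atTop (nhds 0) := by
      have h3 := (hUg.sub hdiff).add hU
      simp only [sub_zero, add_zero] at h3
      refine h3.congr fun x => ?_
      simp only [Function.comp]
      rw [← Finset.sum_sub_distrib, ← Finset.sum_add_distrib]
      refine Finset.sum_congr rfl fun j _ => ?_
      have : Complex.exp (Complex.I * ((ψ j (g x) - ψ l (g x) : ℝ) : ℂ)) =
          Complex.exp (Complex.I * ((ψ j x - ψ l x : ℝ) : ℂ)) *
          Complex.exp (Complex.I * (((ψ j (g x) - ψ l (g x)) - (ψ j x - ψ l x) : ℝ) : ℂ)) := by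
        rw [← Complex.exp_add]; congr 1; push_cast; ring
      rw [this]; ring
    have hW : Tendsto (fun x => ∑ j ∈ S.erase m, (c j * (Complex.exp (Complex.I * (θ j : ℂ)) + 1)) *
        Complex.exp (Complex.I * (ψ j x : ℂ))) atTop (nhds 0) := by
      have := aux_bdd (u := fun x => Complex.exp (Complex.I * ((ψ l x : ℝ) : ℂ)))
        (fun x => aux_norm _) hV
      refine this.congr fun x => ?_
      rw [← Finset.add_sum_erase _ _ hm, hθm, mul_comm Complex.I (Real.pi : ℂ), Complex.exp_pi_mul_I]
      simp only [neg_add_cancel, mul_zero, zero_mul, zero_add]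
      rw [Finset.mul_sum]
      refine Finset.sum_congr rfl fun j _ => ?_
      rw [mul_left_comm, ← Complex.exp_add]
      congr 2
      push_cast; ring
    have := ih (S.erase m) (by rw [Finset.card_erase_of_mem hm, hS]; rfl) _ hW l
      (Finset.mem_erase.2 ⟨hml.symm, hl⟩)
    rw [hθl] at this
    simp only [Complex.ofReal_zero, mul_zero, Complex.exp_zero] at this
    rcases mul_eq_zero.1 this with h | h
    · exact h
    · norm_num at h

lemma aux_mono (h : ℝ) (k n : ℕ) (hk : 0 < k) (hn : n ≤ k) :
    Tendsto (fun x : ℝ => (x * (1 + h * (x ^ k)⁻¹)) ^ n - x ^ n) atTop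
      (nhds (if n = k then h * k else 0)) := by
  have h0 : HasDerivAt (fun u : ℝ => (1 + h * u) ^ n) (n * h) 0 := by
    have := (((hasDerivAt_id (0:ℝ)).const_mul h).const_add 1).pow n
    simp only [id, mul_zero, add_zero, one_pow, mul_one] at this
    exact this
  have hu : Tendsto (fun x : ℝ => (x ^ k)⁻¹) atTop (nhdsWithin 0 {0}ᶜ) := by
    rw [tendsto_nhdsWithin_iff]
    refine ⟨(tendsto_pow_atTop hk.ne').inv_tendsto_atTop, ?_⟩
    filter_upwards [eventually_gt_atTop 0] with x hx
    simp [hx.ne']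
  have hs := (hasDerivAt_iff_tendsto_slope.1 h0).comp hu
  have hp : Tendsto (fun x : ℝ => x ^ n * (x ^ k)⁻¹) atTop (nhds (if n = k then 1 else 0)) := by
    split_ifs with hnk
    · subst hnk
      refine tendsto_const_nhds.congr' ?_
      filter_upwards [eventually_gt_atTop 0] with x hx
      field_simp
    · have hlt : 0 < k - n := by omega
      refine (tendsto_pow_atTop (α := ℝ) hlt.ne').inv_tendsto_atTop.congr' ?_
      filter_upwards [eventually_gt_atTop 0] with x hx
      have : x ^ k = x ^ n * x ^ (k - n) := by rw [← pow_add]; congr 1; omega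
      simp only [Pi.inv_apply]
      rw [this]; field_simp
  have hm := hp.mul hs
  have e : (if n = k then (1:ℝ) else 0) * (n * h) = if n = k then h * k else 0 := by
    split_ifs with hnk
    · subst hnk; ring
    · ring
  rw [e] at hm
  refine hm.congr' ?_
  filter_upwards [eventually_gt_atTop 0] with x hx
  simp only [Function.comp, slope_def_field]
  rw [mul_pow]
  simp only [mul_zero, add_zero, one_pow, sub_zero]
  field_simp

lemma aux_poly (h : ℝ) (k : ℕ) (hk : 0 < k) (p : Polynomial ℝ) (hp : p.natDegree ≤ k) :
    Tendsto (fun x : ℝ => p.eval (x * (1 + h * (x ^ k)⁻¹)) - p.eval x) atTop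
      (nhds (p.coeff k * (h * k))) := by
  have key : Tendsto (fun x : ℝ => ∑ n ∈ Finset.range (k+1), p.coeff n *
      ((x * (1 + h * (x ^ k)⁻¹)) ^ n - x ^ n)) atTop
      (nhds (∑ n ∈ Finset.range (k+1), p.coeff n * (if n = k then h * k else 0))) := by
    refine tendsto_finsetSum _ fun n hn => ?_
    exact (aux_mono h k n hk (by rw [Finset.mem_range] at hn; omega)).const_mul _
  have e : (∑ n ∈ Finset.range (k+1), p.coeff n * (if n = k then h * (k:ℝ) else 0))
      = p.coeff k * (h * k) := by
    simp
  rw [e] at key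
  refine key.congr fun x => ?_
  rw [Polynomial.eval_eq_sum_range' (Nat.lt_succ_of_le hp),
    Polynomial.eval_eq_sum_range' (Nat.lt_succ_of_le hp), ← Finset.sum_sub_distrib]
  exact Finset.sum_congr rfl fun n _ => by ring

lemma aux_H {J : Type*} [DecidableEq J] (β : J → ℝ) (φ : J → Polynomial ℝ)
    (hφ0 : ∀ j, (φ j).eval 0 = 0)
    (hdist : Function.Injective fun j => (β j, φ j)) :
    ∀ S : Finset J, ∀ l ∈ S, S ≠ {l} → ∃ m ∈ S, m ≠ l ∧ ∃ g : ℝ → ℝ, ∃ θ : J → ℝ,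
      Tendsto g atTop atTop ∧ θ m = Real.pi ∧ ∀ j ∈ S,
        Tendsto (fun x => ((β j * Real.log (g x) + (φ j).eval (g x)) -
          (β l * Real.log (g x) + (φ l).eval (g x))) -
          ((β j * Real.log x + (φ j).eval x) - (β l * Real.log x + (φ l).eval x)))
          atTop (nhds (θ j)) := by
  intro S l hl hS
  have hne : (S.erase l).Nonempty := by
    rw [Finset.nonempty_iff_ne_empty]
    intro h
    rcases Finset.erase_eq_empty_iff _ _ |>.1 h with h | h
    · simp [h] at hl
    · exact hS h
  obtain ⟨m, hm, hmax⟩ := Finset.exists_max_image (S.erase l)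
    (fun j => (φ j - φ l).natDegree) hne
  obtain ⟨hml, hmS⟩ := Finset.mem_erase.1 hm
  have hmax' : ∀ j ∈ S, (φ j - φ l).natDegree ≤ (φ m - φ l).natDegree := by
    intro j hj
    by_cases hjl : j = l
    · subst hjl; simp
    · exact hmax j (Finset.mem_erase.2 ⟨hjl, hj⟩)
  refine ⟨m, hmS, hml, ?_⟩
  obtain hk | hk := Nat.eq_zero_or_pos (φ m - φ l).natDegree
  · -- all polynomials equal
    have heq : ∀ j ∈ S, φ j = φ l := by
      intro j hj
      have h1 : (φ j - φ l).natDegree = 0 := by have := hmax' j hj; omega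
      have h2 := Polynomial.eq_C_of_natDegree_eq_zero h1
      have h3 : (φ j - φ l).eval 0 = 0 := by simp [hφ0]
      rw [Polynomial.coeff_zero_eq_eval_zero, h3, map_zero] at h2
      exact sub_eq_zero.1 h2
    have hβ : β m - β l ≠ 0 := by
      intro h
      apply hml
      apply hdist
      simp only [Prod.mk.injEq]
      exact ⟨sub_eq_zero.1 h, heq m hmS⟩
    set a := Real.pi / (β m - β l) with ha
    refine ⟨fun x => x * Real.exp a, fun j => (β j - β l) * a, ?_, ?_, ?_⟩
    · exact tendsto_id.atTop_mul_const (Real.exp_pos a)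
    · simp only [ha]; field_simp
    · intro j hj
      refine tendsto_const_nhds.congr' ?_
      filter_upwards [eventually_gt_atTop 0] with x hx
      rw [heq j hj, Real.log_mul hx.ne' (Real.exp_pos a).ne', Real.log_exp]
      ring
  · set k := (φ m - φ l).natDegree with hkdef
    have hlc : (φ m - φ l).coeff k ≠ 0 := by
      have : φ m - φ l ≠ 0 := by
        intro h; rw [hkdef, h] at hk; simp at hk
      simpa [hkdef] using this
    have hk' : (k:ℝ) ≠ 0 := by exact_mod_cast hk.ne'
    set h := Real.pi / ((φ m - φ l).coeff k * k) with hh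
    have hu : Tendsto (fun x : ℝ => 1 + h * (x ^ k)⁻¹) atTop (nhds 1) := by
      have := ((tendsto_pow_atTop (α := ℝ) hk.ne').inv_tendsto_atTop.const_mul h).const_add 1
      simpa using this
    refine ⟨fun x => x * (1 + h * (x ^ k)⁻¹), fun j => (φ j - φ l).coeff k * (h * k), ?_, ?_, ?_⟩
    · exact tendsto_id.atTop_mul_pos one_pos hu
    · simp only [hh]; field_simp
    · intro j hj
      have h1 := aux_poly h k hk (φ j - φ l) (hmax' j hj)
      have h2 := ((Real.continuousAt_log one_ne_zero).tendsto.comp hu).const_mul (β j - β l)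
      have h3 := h2.add h1
      simp only [Real.log_one, mul_zero, zero_add] at h3
      refine h3.congr' ?_
      filter_upwards [eventually_gt_atTop 0, hu.eventually (lt_mem_nhds one_pos)] with x hx hx'
      rw [Real.log_mul hx.ne' hx'.ne']
      simp only [Function.comp, Polynomial.eval_sub]
      ring

theorem stmt_2 {J : Type*} [Fintype J] (d : ℕ) (hd : 0 < d)
    (c : J → ℂ) (γ : J → ℝ) (φ : J → Polynomial ℝ)
    (hφ0 : ∀ j, (φ j).eval 0 = 0)
    (hdist : Function.Injective fun j => (γ j, φ j))
    (E : ℝ → ℂ)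
    (hE : ∀ y : ℝ, 0 < y →
      E y = ∑ j, c j * (y : ℂ) ^ (Complex.I * (γ j : ℂ)) *
        Complex.exp (Complex.I * (((φ j).eval (y ^ (-1 / (d : ℝ))) : ℝ) : ℂ)))
    (hc : ∃ j, c j ≠ 0) :
    ∃ ε > 0, ∃ s : ℕ → ℝ, (∀ i, 0 < s i) ∧
      Tendsto s atTop (nhds 0) ∧ ∀ i, ε ≤ ‖E (s i)‖ := by
  classical
  have hd' : (d:ℝ) ≠ 0 := by exact_mod_cast hd.ne'
  by_contra hcon
  have hE0 : Tendsto E (nhdsWithin 0 (Set.Ioi 0)) (nhds 0) := by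
    rw [Metric.tendsto_nhds]
    intro ε hε
    by_contra hfr
    apply hcon
    have hfr' : ∃ᶠ y in nhdsWithin (0:ℝ) (Set.Ioi 0), 0 < y ∧ ε ≤ ‖E y‖ := by
      have h1 : ∃ᶠ y in nhdsWithin (0:ℝ) (Set.Ioi 0), ¬ dist (E y) 0 < ε := not_eventually.1 hfr
      refine (h1.and_eventually self_mem_nhdsWithin).mono ?_
      rintro y ⟨hy, hy0⟩
      exact ⟨hy0, by simpa using hy⟩
    obtain ⟨s, hs, hs'⟩ := exists_seq_forall_of_frequently hfr'
    exact ⟨ε, hε, s, fun i => (hs' i).1, (tendsto_nhdsWithin_iff.1 hs).1, fun i => (hs' i).2⟩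
  obtain ⟨l, hl⟩ := hc
  apply hl
  have hinj : Function.Injective fun j => (-(d:ℝ) * γ j, φ j) := by
    intro a b hab
    simp only [Prod.mk.injEq] at hab
    apply hdist
    simp only [Prod.mk.injEq]
    exact ⟨mul_left_cancel₀ (neg_ne_zero.2 hd') hab.1, hab.2⟩
  refine aux_indep (fun j x => -(d:ℝ) * γ j * Real.log x + (φ j).eval x)
    (aux_H (fun j => -(d:ℝ) * γ j) φ hφ0 hinj) _ Finset.univ rfl c ?_ l (Finset.mem_univ l)
  have hx : Tendsto (fun x : ℝ => (x ^ d)⁻¹) atTop (nhdsWithin 0 (Set.Ioi 0)) :=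
    tendsto_inv_atTop_nhdsGT_zero.comp (tendsto_pow_atTop hd.ne')
  refine (hE0.comp hx).congr' ?_
  filter_upwards [eventually_gt_atTop 0] with x hx
  have hy : 0 < (x ^ d)⁻¹ := by positivity
  have hpow : ((x ^ d)⁻¹ : ℝ) ^ (-1 / (d:ℝ)) = x := by
    rw [← Real.rpow_natCast, ← Real.rpow_neg hx.le, ← Real.rpow_mul hx.le]
    have : -(d:ℝ) * (-1 / d) = 1 := by field_simp
    rw [this, Real.rpow_one]
  simp only [Function.comp]
  rw [hE _ hy, hpow]
  refine Finset.sum_congr rfl fun j _ => ?_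
  rw [mul_assoc, Complex.cpow_def_of_ne_zero (by exact_mod_cast hy.ne'), ← Complex.ofReal_log hy.le,
    ← Complex.exp_add, Real.log_inv, Real.log_pow]
  congr 2
  push_cast; ring
end

section
/- Let J be a finite index set, let d be a positive integer, let (c_j)_{j∈J} be complex numbers, and let ((γ_j, φ_j))_{j∈J} be a family of pairwise distinct pairs where each γ_j ∈ ℝ and each φ_j is a real polynomial with φ_j(0) = 0. Define E : (0,∞) → ℂ by E(y) = ∑_{j∈J} c_j · y^{iγ_j} · e^{i φ_j(y^{−1/d})}. If there exists j ∈ J with c_j ≠ 0 and (γ_j, φ_j) ≠ (0, 0), then there exist ε > 0 and two sequences (s_i)_{i∈ℕ} and (t_i)_{i∈ℕ} of positive reals converging to 0 such that |E(s_i) − E(t_i)| ≥ ε for all i ∈ ℕ. -/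
open Filter

def HasMn (f : ℝ → ℂ) (m : ℂ) : Prop :=
  ∃ (G D : ℝ → ℂ) (B : ℝ), (∀ᶠ u in atTop, HasDerivAt G (D u) u ∧ ‖G u‖ ≤ B) ∧
    Tendsto (fun u => f u - D u) atTop (nhds m)

lemma HasMn.add {f g : ℝ → ℂ} {m n : ℂ} (hf : HasMn f m) (hg : HasMn g n) :
    HasMn (fun u => f u + g u) (m + n) := by
  obtain ⟨G, D, B, h1, h2⟩ := hf
  obtain ⟨G', D', B', h1', h2'⟩ := hg
  refine ⟨fun u => G u + G' u, fun u => D u + D' u, B + B', ?_, ?_⟩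
  · filter_upwards [h1, h1'] with u hu hu'
    exact ⟨hu.1.add hu'.1, (norm_add_le _ _).trans (add_le_add hu.2 hu'.2)⟩
  · refine (h2.add h2').congr fun u => ?_
    ring

lemma HasMn.const_mul {f : ℝ → ℂ} {m : ℂ} (c : ℂ) (hf : HasMn f m) :
    HasMn (fun u => c * f u) (c * m) := by
  obtain ⟨G, D, B, h1, h2⟩ := hf
  refine ⟨fun u => c * G u, fun u => c * D u, ‖c‖ * B, ?_, ?_⟩
  · filter_upwards [h1] with u hu
    refine ⟨hu.1.const_mul c, ?_⟩
    rw [norm_mul]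
    exact mul_le_mul_of_nonneg_left hu.2 (norm_nonneg _)
  · refine (h2.const_mul c).congr fun u => ?_
    ring

lemma HasMn.of_tendsto {f : ℝ → ℂ} {m : ℂ} (hf : Tendsto f atTop (nhds m)) : HasMn f m := by
  refine ⟨fun _ => 0, fun _ => 0, 0, ?_, ?_⟩
  · exact Eventually.of_forall fun u => ⟨hasDerivAt_const _ _, by simp⟩
  · simpa using hf

lemma HasMn.sum {ι : Type*} (s : Finset ι) {f : ι → ℝ → ℂ} {m : ι → ℂ}
    (h : ∀ i ∈ s, HasMn (f i) (m i)) : HasMn (fun u => ∑ i ∈ s, f i u) (∑ i ∈ s, m i) := by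
  classical
  induction s using Finset.induction_on with
  | empty => simpa using HasMn.of_tendsto (f := fun _ => 0) (m := 0) tendsto_const_nhds
  | insert a s ha ih =>
    simp only [Finset.sum_insert ha]
    exact (h a (by simp)).add (ih fun i hi => h i (by simp [hi]))

lemma HasMn.zero_eq {m : ℂ} (h : HasMn (fun _ => 0) m) : m = 0 := by
  obtain ⟨G, D, B, h1, h2⟩ := h
  by_contra hm
  have hm' : 0 < ‖m‖ := norm_pos_iff.2 hm
  have h3 : ∀ᶠ u in atTop, ‖(0 - D u) - m‖ < ‖m‖ / 2 := by
    have := h2.sub_const m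
    rw [sub_self] at this
    have := this.norm
    rw [norm_zero] at this
    exact this.eventually (gt_mem_nhds (by positivity))
  obtain ⟨U, hU⟩ := eventually_atTop.1 (h1.and h3)
  have key : ∀ v, U ≤ v → ‖m‖ / 2 * (v - U) ≤ 2 * B := by
    intro v hv
    have hmv := (convex_Icc U v).norm_image_sub_le_of_norm_hasDerivWithin_le
      (f := fun u : ℝ => G u + (u : ℂ) * m) (f' := fun u => D u + 1 * m) (C := ‖m‖ / 2)
      (fun x hx => by
        have hd := ((hU x hx.1).1.1).add (((hasDerivAt_id x).ofReal_comp).mul_const m)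
        exact (hd.congr_deriv (by simp)).hasDerivWithinAt)
      (fun x hx => by
        have := (hU x hx.1).2
        rw [← norm_neg]
        refine le_of_eq_of_le ?_ this.le
        congr 1; ring)
      (Set.left_mem_Icc.2 hv) (Set.right_mem_Icc.2 hv)
    have e : (((v - U : ℝ)) : ℂ) * m = ((G v + (v : ℂ) * m) - (G U + (U : ℂ) * m)) - G v + G U := by
      push_cast; ring
    have e2 : (v - U) * ‖m‖ = ‖(((v - U : ℝ)) : ℂ) * m‖ := by
      rw [norm_mul, Complex.norm_real, Real.norm_of_nonneg (by linarith)]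
    rw [e] at e2
    rw [Real.norm_of_nonneg (by linarith : 0 ≤ v - U)] at hmv
    have a1 := norm_add_le (((G v + (v : ℂ) * m) - (G U + (U : ℂ) * m)) - G v) (G U)
    have a2 := norm_sub_le ((G v + (v : ℂ) * m) - (G U + (U : ℂ) * m)) (G v)
    have b1 := (hU v hv).1.2
    have b2 := (hU U le_rfl).1.2
    nlinarith
  have hB : 0 ≤ B := (norm_nonneg _).trans (hU U le_rfl).1.2
  have := key (U + (2 * B + 1) * 2 / ‖m‖) (by
    have : 0 ≤ (2 * B + 1) * 2 / ‖m‖ := by positivity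
    linarith)
  have e : ‖m‖ / 2 * (U + (2 * B + 1) * 2 / ‖m‖ - U) = 2 * B + 1 := by
    field_simp; ring
  linarith

open Polynomial in
lemma HasMn.exp_poly (P : ℝ[X]) (a : ℝ) (h0 : P.eval 0 = 0) (hne : ¬ (a = 0 ∧ P = 0)) :
    HasMn (fun u => Complex.exp (Complex.I * ((P.eval (Real.exp u) + a * u : ℝ) : ℂ))) 0 := by
  set Q : ℝ[X] := X * derivative P + C a with hQ
  have hQ0 : Q ≠ 0 := by
    intro h
    apply hne
    have ha : a = 0 := by
      have := congrArg (fun p => p.coeff 0) h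
      simpa [hQ] using this
    refine ⟨ha, ?_⟩
    ext n
    cases n with
    | zero => simpa [coeff_zero_eq_eval_zero] using h0
    | succ n =>
      have := congrArg (fun p => p.coeff (n+1)) h
      simp [hQ, coeff_derivative, ha] at this
      rcases this with h | h
      · simpa using h
      · exfalso; have : (0:ℝ) < (n:ℝ) + 1 := by positivity
        linarith
  have hev : ∀ᶠ x in atTop, Q.eval x ≠ 0 := by
    have := Q.eventually_atTop_not_isRoot hQ0
    simpa [IsRoot] using this
  have hbd : ∃ B, ∀ᶠ x in atTop, |1 / Q.eval x| ≤ B := by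
    have := Polynomial.isBigO_atTop_of_degree_le (1 : ℝ[X]) Q (by
      rw [degree_one]; exact zero_le_degree_iff.2 hQ0)
    obtain ⟨B, hB⟩ := this.bound
    refine ⟨B, ?_⟩
    filter_upwards [hB, hev] with x hx hx'
    have : 0 < |Q.eval x| := abs_pos.2 hx'
    simp only [eval_one, Real.norm_eq_abs, abs_one] at hx
    rw [abs_div, abs_one, div_le_iff₀ this]
    exact hx
  have hlim : Tendsto (fun x => eval x (X * derivative Q) / eval x (Q ^ 2)) atTop (nhds 0) := by
    apply Polynomial.div_tendsto_atTop_zero_of_degree_lt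
    by_cases hd : Q.natDegree = 0
    · rw [derivative_of_natDegree_zero hd]
      simp only [mul_zero, degree_zero]
      exact bot_lt_iff_ne_bot.2 (degree_ne_bot.2 (pow_ne_zero 2 hQ0))
    · have h1 : (X * derivative Q).degree ≤ ((Q.natDegree : ℕ) : WithBot ℕ) := by
        rw [degree_le_iff_coeff_zero]
        intro m hm
        have hm : Q.natDegree < m := by exact_mod_cast hm
        cases m with
        | zero => simp
        | succ m =>
          rw [coeff_X_mul, coeff_derivative, coeff_eq_zero_of_natDegree_lt hm, zero_mul]
      refine h1.trans_lt ?_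
      rw [degree_eq_natDegree (pow_ne_zero 2 hQ0), natDegree_pow]
      norm_cast
      omega
  obtain ⟨B, hB⟩ := hbd
  have hexp := Real.tendsto_exp_atTop
  set ψ : ℝ → ℝ := fun u => P.eval (Real.exp u) + a * u with hψ
  have hψd : ∀ u, HasDerivAt ψ (Q.eval (Real.exp u)) u := by
    intro u
    have := ((P.hasDerivAt (Real.exp u)).comp u (Real.hasDerivAt_exp u)).add
      ((hasDerivAt_id u).const_mul a)
    exact this.congr_deriv (by simp [hQ]; ring)
  refine ⟨fun u => Complex.exp (Complex.I * (ψ u : ℂ)) * (-Complex.I * ((1 / Q.eval (Real.exp u) : ℝ) : ℂ)),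
    fun u => Complex.exp (Complex.I * (ψ u : ℂ)) + Complex.exp (Complex.I * (ψ u : ℂ)) *
      (Complex.I * ((eval (Real.exp u) (X * derivative Q) / eval (Real.exp u) (Q ^ 2) : ℝ) : ℂ)), B, ?_, ?_⟩
  · filter_upwards [hexp.eventually hB, hexp.eventually hev] with u hu hu'
    constructor
    · have d1 := ((hψd u).ofReal_comp.const_mul Complex.I).cexp
      have d2 := (((Q.hasDerivAt (Real.exp u)).comp u (Real.hasDerivAt_exp u)).inv hu').ofReal_comp.const_mul (-Complex.I)
      have d3 := d1.mul d2
      have hc : ((Q.eval (Real.exp u) : ℝ) : ℂ) ≠ 0 := by exact_mod_cast hu'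
      refine HasDerivAt.congr_of_eventuallyEq (HasDerivAt.congr_deriv d3 ?_)
        (Eventually.of_forall fun v => by simp)
      show _ = Complex.exp (Complex.I * (ψ u : ℂ)) + Complex.exp (Complex.I * (ψ u : ℂ)) *
        (Complex.I * ((eval (Real.exp u) (X * derivative Q) / eval (Real.exp u) (Q ^ 2) : ℝ) : ℂ))
      simp only [Function.comp, eval_mul, eval_X, eval_pow, Pi.inv_apply]
      push_cast
      field_simp
      have hI := Complex.I_mul_I
      linear_combination (-((eval (Real.exp u) Q : ℝ) : ℂ) ^ 2) * hI
    · rw [norm_mul, norm_mul, Complex.norm_real, norm_neg, Complex.norm_I, one_mul,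
        mul_comm Complex.I, Complex.norm_exp_ofReal_mul_I, one_mul]
      exact hu
  · rw [tendsto_zero_iff_norm_tendsto_zero]
    have := (hlim.comp hexp).norm
    rw [norm_zero] at this
    refine this.congr fun u => ?_
    have e : ∀ z w : ℂ, z - (z + w) = -w := fun z w => by ring
    rw [e, norm_neg, norm_mul, norm_mul, Complex.norm_real, Complex.norm_I, one_mul,
        mul_comm Complex.I, Complex.norm_exp_ofReal_mul_I, one_mul]
    rfl

/-- **Noncompensation, part 2.** For
`E(y) = ∑_{j∈J} c_j y^{iγ_j} e^{i φ_j(y^{-1/d})}` with pairwise distinct pairs `(γ_j, φ_j)`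
(`φ_j(0) = 0`), if some `j` has `c_j ≠ 0` and `(γ_j, φ_j) ≠ (0, 0)`, then there are `ε > 0`
and two sequences of positive reals tending to `0` with `|E(s_i) - E(t_i)| ≥ ε` for all `i`. -/
theorem stmt_3 {J : Type*} [Fintype J] (d : ℕ) (hd : 0 < d)
    (c : J → ℂ) (γ : J → ℝ) (φ : J → Polynomial ℝ)
    (hφ0 : ∀ j, (φ j).eval 0 = 0)
    (hdist : Function.Injective fun j => (γ j, φ j))
    (E : ℝ → ℂ)
    (hE : ∀ y : ℝ, 0 < y →
      E y = ∑ j, c j * (y : ℂ) ^ (Complex.I * (γ j : ℂ)) *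
        Complex.exp (Complex.I * (((φ j).eval (y ^ (-1 / (d : ℝ))) : ℝ) : ℂ)))
    (hc : ∃ j, c j ≠ 0 ∧ (γ j, φ j) ≠ (0, 0)) :
    ∃ ε > 0, ∃ s t : ℕ → ℝ, (∀ i, 0 < s i) ∧ (∀ i, 0 < t i) ∧
      Tendsto s atTop (nhds 0) ∧ Tendsto t atTop (nhds 0) ∧
      ∀ i, ε ≤ ‖E (s i) - E (t i)‖ := by
  classical
  by_contra hcon
  have hC : ∀ ε > 0, ∃ δ > 0, ∀ s t : ℝ, 0 < s → s < δ → 0 < t → t < δ → ‖E s - E t‖ < ε := by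
    intro ε hε
    by_contra hno
    push Not at hno
    apply hcon
    choose s t h1 h2 h3 h4 h5 using fun i : ℕ => hno (1 / ((i : ℝ) + 1)) (by positivity)
    refine ⟨ε, hε, s, t, h1, h3, ?_, ?_, h5⟩
    · exact squeeze_zero (fun i => (h1 i).le) (fun i => (h2 i).le) tendsto_one_div_add_atTop_nhds_zero_nat
    · exact squeeze_zero (fun i => (h3 i).le) (fun i => (h4 i).le) tendsto_one_div_add_atTop_nhds_zero_nat
  have hd' : (0 : ℝ) < d := by exact_mod_cast hd
  have hlimE : ∃ L, Tendsto E (nhdsWithin 0 (Set.Ioi 0)) (nhds L) := by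
    apply cauchy_map_iff_exists_tendsto.1
    rw [Metric.cauchy_iff]
    refine ⟨inferInstance, fun ε hε => ?_⟩
    obtain ⟨δ, hδ, h⟩ := hC ε hε
    refine ⟨E '' Set.Ioo 0 δ, image_mem_map (Ioo_mem_nhdsGT hδ), ?_⟩
    rintro _ ⟨s, hs, rfl⟩ _ ⟨t, ht, rfl⟩
    rw [dist_eq_norm]
    exact h s t hs.1 hs.2 ht.1 ht.2
  obtain ⟨L, hL⟩ := hlimE
  have hy : Tendsto (fun u : ℝ => Real.exp (-(d * u))) atTop (nhdsWithin 0 (Set.Ioi 0)) := by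
    rw [tendsto_nhdsWithin_iff]
    refine ⟨Real.tendsto_exp_neg_atTop_nhds_zero.comp (tendsto_id.const_mul_atTop hd'), ?_⟩
    exact Eventually.of_forall fun u => Real.exp_pos _
  have hEL := hL.comp hy
  have hEu : ∀ u : ℝ, E (Real.exp (-(d * u))) =
      ∑ j, c j * Complex.exp (Complex.I * (((φ j).eval (Real.exp u) + (-(d * γ j)) * u : ℝ) : ℂ)) := by
    intro u
    rw [hE _ (Real.exp_pos _)]
    refine Finset.sum_congr rfl fun j _ => ?_
    have e1 : Real.exp (-(d * u)) ^ (-1 / (d : ℝ)) = Real.exp u := by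
      rw [← Real.exp_mul]; congr 1; field_simp
    rw [e1, Complex.cpow_def_of_ne_zero (by exact_mod_cast (Real.exp_pos _).ne'),
      ← Complex.ofReal_log (Real.exp_pos _).le, Real.log_exp, mul_assoc, ← Complex.exp_add]
    congr 2
    push_cast; ring
  obtain ⟨k, hck, hk⟩ := hc
  apply hck
  set ek : ℝ → ℂ := fun u => Complex.exp
    (Complex.I * (((-φ k).eval (Real.exp u) + (d * γ k) * u : ℝ) : ℂ)) with hek
  have hekn : ∀ u, ‖ek u‖ = 1 := by
    intro u
    rw [hek]; simp only
    rw [mul_comm Complex.I, Complex.norm_exp_ofReal_mul_I]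
  have m1 : HasMn ek 0 := by
    apply HasMn.exp_poly
    · simp [hφ0]
    · rintro ⟨h1, h2⟩
      apply hk
      rw [neg_eq_zero] at h2
      rcases mul_eq_zero.1 h1 with h | h
      · exact absurd h hd'.ne'
      · rw [h, h2]
  have m2 : HasMn (fun u => ∑ j, c j * Complex.exp (Complex.I *
      (((φ j - φ k).eval (Real.exp u) + (d * (γ k - γ j)) * u : ℝ) : ℂ)))
      (∑ j, if j = k then c j else 0) := by
    refine HasMn.sum _ fun j _ => ?_
    by_cases hj : j = k
    · subst hj
      apply HasMn.of_tendsto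
      simp
    · rw [if_neg hj, ← mul_zero (c j)]
      refine HasMn.const_mul _ (HasMn.exp_poly _ _ (by simp [hφ0]) ?_)
      rintro ⟨h1, h2⟩
      apply hj
      apply hdist
      rcases mul_eq_zero.1 h1 with h | h
      · exact absurd h hd'.ne'
      · simp only [Prod.mk.injEq]
        exact ⟨(sub_eq_zero.1 h).symm, sub_eq_zero.1 h2⟩
  have m3 : HasMn (fun u => (-1) * ((E (Real.exp (-(d * u))) - L) * ek u)) (-1 * 0) := by
    refine HasMn.const_mul _ (HasMn.of_tendsto ?_)
    rw [tendsto_zero_iff_norm_tendsto_zero]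
    have := (hEL.sub_const L).norm
    rw [sub_self, norm_zero] at this
    refine this.congr fun u => ?_
    rw [norm_mul, hekn, mul_one]; rfl
  have m4 := (m2.add (m1.const_mul (-L))).add m3
  have hz := HasMn.zero_eq (m := ((∑ j, if j = k then c j else 0) + -L * 0) + -1 * 0) (by
    convert m4 using 2 with u
    have : ∑ j, c j * Complex.exp (Complex.I *
      (((φ j - φ k).eval (Real.exp u) + (d * (γ k - γ j)) * u : ℝ) : ℂ)) =
        E (Real.exp (-(d * u))) * ek u := by
      rw [hEu, Finset.sum_mul]
      refine Finset.sum_congr rfl fun j _ => ?_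
      simp only [hek]
      rw [mul_assoc (c j) (Complex.exp _), ← Complex.exp_add]
      congr 2
      simp only [Polynomial.eval_sub, Polynomial.eval_neg]
      push_cast; ring
    rw [this]; ring)
  simpa using hz
end

section
/- Let J be a finite index set, let d be a positive integer, let (c_j)_{j∈J} be complex numbers, and let ((γ_j, φ_j))_{j∈J} be a family of pairwise distinct pairs where each γ_j ∈ ℝ and each φ_j is a real polynomial with φ_j(0) = 0. Define E : (0,∞) → ℂ by E(y) = ∑_{j∈J} c_j · y^{iγ_j} · e^{i φ_j(y^{−1/d})}. Let b > 0, let r ≤ −1 be real, let s ∈ ℕ, and let f : (0,b) → ℂ be given by f(y) = y^r (log y)^s E(y) + g(y), where g : (0,b) → ℂ satisfies g(y) = o(y^r (log y)^s) as y → 0⁺. If f is Lebesgue integrable on (0,b), then c_j = 0 for all j ∈ J. -/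
open Filter Asymptotics MeasureTheory

open Topology in
lemma keyA (d : ℕ) (hd : 0 < d) (γ : ℝ) (P : Polynomial ℝ) (hP : P.eval 0 = 0)
    (h : ¬ (γ = 0 ∧ P = 0)) :
    ∃ (G R : ℝ → ℂ) (C : ℝ), Tendsto R (𝓝[>] 0) (𝓝 0) ∧ (∀ᶠ y in 𝓝[>] (0:ℝ), ‖G y‖ ≤ C) ∧
      ∀ᶠ y in 𝓝[>] (0:ℝ), HasDerivAt G
        ((Complex.exp (Complex.I * ((γ * Real.log y + P.eval (y ^ (-1 / (d:ℝ))) : ℝ) : ℂ)) + R y) / y) y := by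
  have hd' : (0:ℝ) < d := by exact_mod_cast hd
  set Q : Polynomial ℝ := Polynomial.C γ - Polynomial.C (1/(d:ℝ)) * (Polynomial.X * Polynomial.derivative P) with hQ
  have hQ0 : Q ≠ 0 := by
    intro h0
    have hγ : γ = 0 := by
      have := congrArg (Polynomial.eval 0) h0
      simpa [hQ] using this
    apply h
    refine ⟨hγ, ?_⟩
    have h1 : Polynomial.X * Polynomial.derivative P = 0 := by
      have : Polynomial.C (1/(d:ℝ)) * (Polynomial.X * Polynomial.derivative P) = 0 := by
        rw [hQ, hγ] at h0; simpa using h0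
      rcases mul_eq_zero.1 this with h2 | h2
      · exfalso; rw [Polynomial.C_eq_zero] at h2; have : (0:ℝ) < 1/d := by positivity
        linarith
      · exact h2
    have h2 : Polynomial.derivative P = 0 := by simpa using h1
    have h3 := Polynomial.eq_C_of_derivative_eq_zero h2
    rw [h3] at hP ⊢
    simp at hP
    simp [hP]
  have hx : Tendsto (fun y : ℝ => y ^ (-1 / (d:ℝ))) (𝓝[>] 0) atTop := by
    have := tendsto_rpow_neg_nhdsGT_zero (y := -1/(d:ℝ)) (by rw [neg_div]; simp; exact hd)
    exact this
  have hne : ∀ᶠ x in atTop, Q.eval x ≠ 0 := by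
    have := Polynomial.eventually_atTop_not_isRoot Q hQ0
    exact this
  have hbd : (fun x : ℝ => (1:ℝ)) =O[atTop] (fun x => Q.eval x) := by
    have := Polynomial.isBigO_atTop_of_degree_le (1 : Polynomial ℝ) Q (by
      rw [Polynomial.degree_one]; exact Polynomial.zero_le_degree_iff.2 hQ0)
    simpa using this
  have hlim : Tendsto (fun x : ℝ => (Polynomial.X * Polynomial.derivative Q).eval x / (Q^2).eval x) atTop (𝓝 0) := by
    by_cases hq : Polynomial.derivative Q = 0
    · simp [hq]
    · apply Polynomial.div_tendsto_atTop_zero_of_degree_lt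
      have hlt := Polynomial.degree_derivative_lt hQ0
      have hn : Q.natDegree ≠ 0 := by
        intro h0
        exact hq (Polynomial.derivative_of_natDegree_zero h0)
      have := Polynomial.natDegree_derivative_lt hn
      apply Polynomial.degree_lt_degree
      rw [Polynomial.natDegree_pow, Polynomial.natDegree_mul Polynomial.X_ne_zero hq, Polynomial.natDegree_X]
      omega
  obtain ⟨C, hC⟩ := hbd.bound
  refine ⟨fun y => Complex.exp (Complex.I * ((γ * Real.log y + P.eval (y ^ (-1 / (d:ℝ))) : ℝ) : ℂ)) * (-Complex.I) *
      (((Q.eval (y ^ (-1 / (d:ℝ))))⁻¹ : ℝ) : ℂ),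
    fun y => Complex.exp (Complex.I * ((γ * Real.log y + P.eval (y ^ (-1 / (d:ℝ))) : ℝ) : ℂ)) * (-Complex.I) *
      (((1 / (d:ℝ)) * ((Polynomial.X * Polynomial.derivative Q).eval (y ^ (-1 / (d:ℝ))) / (Q^2).eval (y ^ (-1 / (d:ℝ)))) : ℝ) : ℂ), C, ?_, ?_, ?_⟩
  · rw [tendsto_zero_iff_norm_tendsto_zero]
    have h1 := ((hlim.comp hx).const_mul (1/(d:ℝ))).norm
    simp only [mul_zero, norm_zero] at h1
    refine h1.congr fun y => ?_
    symm
    rw [norm_mul, norm_mul, mul_comm Complex.I, Complex.norm_exp_ofReal_mul_I, norm_neg, Complex.norm_I, Complex.norm_real]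
    simp only [one_mul, Function.comp]
  · filter_upwards [hx.eventually hC, hx.eventually hne] with y hy hy2
    rw [norm_mul, norm_mul, mul_comm Complex.I, Complex.norm_exp_ofReal_mul_I, norm_neg, Complex.norm_I, Complex.norm_real,
      norm_inv, one_mul, one_mul]
    rw [norm_one] at hy
    rw [inv_le_iff_one_le_mul₀ (norm_pos_iff.2 hy2)]
    exact hy
  · filter_upwards [hx.eventually hne, self_mem_nhdsWithin] with y hy2 hy
    have hy : 0 < y := hy
    have dx : HasDerivAt (fun y : ℝ => y ^ (-1 / (d:ℝ))) (-1/(d:ℝ) * y ^ (-1 / (d:ℝ)) / y) y := by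
      have := Real.hasDerivAt_rpow_const (x := y) (p := -1/(d:ℝ)) (Or.inl hy.ne')
      rw [Real.rpow_sub_one hy.ne'] at this
      convert this using 1; ring
    have dP := (P.hasDerivAt (y ^ (-1 / (d:ℝ)))).comp y dx
    have dQ1 := (Q.hasDerivAt (y ^ (-1 / (d:ℝ)))).comp y dx
    have dQ0 : HasDerivAt (fun y : ℝ => Q.eval (y ^ (-1 / (d:ℝ))))
      ((Polynomial.derivative Q).eval (y ^ (-1 / (d:ℝ))) * (-1/(d:ℝ) * y ^ (-1 / (d:ℝ)) / y)) y := dQ1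
    have dQ := dQ0.inv hy2
    have dθ := (((Real.hasDerivAt_log hy.ne').const_mul γ).add dP).ofReal_comp.const_mul Complex.I
    have dG := ((dθ.cexp).mul_const (-Complex.I)).mul dQ.ofReal_comp
    refine dG.congr_deriv ?_
    simp only [Function.comp, Pi.add_apply, Pi.inv_apply]
    have hQe : Q.eval (y ^ (-1 / (d:ℝ))) = γ - 1/d * (y ^ (-1 / (d:ℝ)) * (Polynomial.derivative P).eval (y ^ (-1 / (d:ℝ)))) := by
      simp [hQ]
    generalize hz : y ^ (-1 / (d:ℝ)) = x at *
    have e1 : γ * y⁻¹ + (Polynomial.derivative P).eval x * (-1/(d:ℝ) * x / y) = Q.eval x / y := by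
      rw [hQe]; field_simp; ring
    rw [e1]
    simp only [Polynomial.eval_mul, Polynomial.eval_X, Polynomial.eval_pow]
    have hyc : (y:ℂ) ≠ 0 := by exact_mod_cast hy.ne'
    have hdc : (d:ℂ) ≠ 0 := by exact_mod_cast hd.ne'
    have hqc : ((Q.eval x : ℝ):ℂ) ≠ 0 := by exact_mod_cast hy2
    push_cast
    generalize Complex.exp _ = ee
    field_simp
    ring_nf
    simp only [Complex.I_sq]
    ring

open Topology in
lemma keyB (b : ℝ) (hb : 0 < b) (f Φ D : ℝ → ℂ) (c : ℂ) (C : ℝ)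
    (hint : IntegrableOn f (Set.Ioo 0 b))
    (hD : ∀ᶠ y in 𝓝[>] (0:ℝ), HasDerivAt Φ (D y) y)
    (hle : ∀ ε > 0, ∀ᶠ y in 𝓝[>] (0:ℝ), ‖D y‖ ≤ ‖f y‖ + ε / y)
    (hΦ : ∀ᶠ y in 𝓝[>] (0:ℝ), ‖Φ y - c * Real.log y‖ ≤ C) : c = 0 := by
  by_contra hc
  have hc' : 0 < ‖c‖ := norm_pos_iff.2 hc
  have hev := (hD.and (hle (‖c‖/2) (by positivity))).and hΦ
  obtain ⟨a₀, ha₀, hsub⟩ := mem_nhdsGT_iff_exists_Ioo_subset.1 hev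
  have ha₀ : 0 < a₀ := ha₀
  obtain ⟨a, ha, ham⟩ := exists_between (lt_min ha₀ hb)
  have haa : a < a₀ := lt_of_lt_of_le ham (min_le_left _ _)
  have hab : a < b := lt_of_lt_of_le ham (min_le_right _ _)
  set M := ∫ y in Set.Ioo 0 b, ‖f y‖ with hM
  have main : ∀ δ, 0 < δ → δ < a → ‖Φ a - Φ δ‖ ≤ M + ‖c‖/2 * (Real.log a - Real.log δ) := by
    intro δ hδ hδa
    have hpos : ∀ y ∈ Set.uIcc δ a, 0 < y := by
      intro y hy; rw [Set.uIcc_of_le hδa.le] at hy; exact hδ.trans_le hy.1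
    have hin : ∀ y ∈ Set.uIcc δ a, y ∈ Set.Ioo 0 a₀ := by
      intro y hy; rw [Set.uIcc_of_le hδa.le] at hy; exact ⟨hδ.trans_le hy.1, hy.2.trans_lt haa⟩
    have hs : Set.Ioc δ a ⊆ Set.Ioo 0 b := fun y hy => ⟨hδ.trans hy.1, hy.2.trans_lt hab⟩
    have if1 : IntervalIntegrable (fun y => ‖f y‖) volume δ a := by
      rw [intervalIntegrable_iff_integrableOn_Ioc_of_le hδa.le]
      exact (hint.mono_set hs).norm
    have if2 : IntervalIntegrable (fun y : ℝ => ‖c‖/2 / y) volume δ a := by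
      apply ContinuousOn.intervalIntegrable
      apply ContinuousOn.div continuousOn_const continuousOn_id
      intro y hy; exact (hpos y hy).ne'
    have ifD : IntervalIntegrable (deriv Φ) volume δ a := by
      refine (if1.add if2).mono_fun' (measurable_deriv Φ).aestronglyMeasurable ?_
      rw [Set.uIoc_of_le hδa.le]
      filter_upwards [ae_restrict_mem measurableSet_Ioc] with y hy
      have := (hsub (hin y (by rw [Set.uIcc_of_le hδa.le]; exact ⟨hy.1.le, hy.2⟩))).1
      rw [this.1.deriv]; exact this.2
    have hFTC := intervalIntegral.integral_eq_sub_of_hasDerivAt (f := Φ) (f' := deriv Φ) (a := δ) (b := a)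
      (fun y hy => by have := (hsub (hin y hy)).1.1; rwa [this.deriv]) ifD
    rw [← hFTC]
    have h1 := intervalIntegral.norm_integral_le_integral_norm (f := deriv Φ) (μ := volume) hδa.le
    have h2 : ∫ y in δ..a, ‖deriv Φ y‖ ≤ ∫ y in δ..a, (‖f y‖ + ‖c‖/2 / y) := by
      apply intervalIntegral.integral_mono_on hδa.le ifD.norm (if1.add if2)
      intro y hy
      have := (hsub (hin y (by rw [Set.uIcc_of_le hδa.le]; exact hy))).1
      rw [this.1.deriv]; exact this.2
    rw [intervalIntegral.integral_add if1 if2] at h2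
    have h3 : ∫ y in δ..a, ‖f y‖ ≤ M := by
      rw [intervalIntegral.integral_of_le hδa.le]
      exact setIntegral_mono_set hint.norm (ae_of_all _ fun y => norm_nonneg _) (ae_of_all _ hs)
    have h4 : ∫ y in δ..a, ‖c‖/2 / y = ‖c‖/2 * (Real.log a - Real.log δ) := by
      simp only [div_eq_mul_inv (‖c‖/2)]
      rw [intervalIntegral.integral_const_mul, integral_inv_of_pos hδ ha, Real.log_div ha.ne' hδ.ne']
    linarith
  have hlog : Tendsto Real.log (𝓝[>] 0) atBot := Real.tendsto_log_nhdsGT_zero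
  have hfin : ∀ᶠ y in 𝓝[>] (0:ℝ), Real.log y < Real.log a - (M + 2*C + 1) / (‖c‖/2) :=
    hlog.eventually (eventually_lt_atBot _)
  obtain ⟨δ, hδ1, hδ2⟩ := (hfin.and (Ioo_mem_nhdsGT ha)).exists
  have h1 := main δ hδ2.1 hδ2.2
  have h2 := (hsub ⟨ha, haa⟩).2
  have h3 := (hsub ⟨hδ2.1, hδ2.2.trans haa⟩).2
  have hll : Real.log δ < Real.log a := Real.log_lt_log hδ2.1 hδ2.2
  have h4 : ‖c‖ * (Real.log a - Real.log δ) ≤ ‖Φ a - Φ δ‖ + 2 * C := by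
    have e : c * ((Real.log a - Real.log δ : ℝ) : ℂ) = (Φ a - Φ δ) - (Φ a - c * Real.log a) + (Φ δ - c * Real.log δ) := by
      push_cast; ring
    have := congrArg norm e
    rw [norm_mul, Complex.norm_real, Real.norm_of_nonneg (by linarith)] at this
    rw [this]
    have := norm_add_le ((Φ a - Φ δ) - (Φ a - c * Real.log a)) (Φ δ - c * Real.log δ)
    have := norm_sub_le (Φ a - Φ δ) (Φ a - c * Real.log a)
    have h2' : ‖Φ a - c * Real.log a‖ ≤ C := h2
    have h3' : ‖Φ δ - c * Real.log δ‖ ≤ C := h3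
    linarith
  have h5 : (M + 2*C + 1) / (‖c‖/2) < Real.log a - Real.log δ := by linarith
  rw [div_lt_iff₀ (by positivity)] at h5
  nlinarith

open scoped Topology

/-- **Noncompensation, part 3.** With
`E(y) = ∑_{j∈J} c_j y^{iγ_j} e^{i φ_j(y^{-1/d})}` as before, let `b > 0`, `r ≤ -1`, `s ∈ ℕ`,
and `f(y) = y^r (log y)^s E(y) + g(y)` on `(0,b)` with `g(y) = o(y^r (log y)^s)` as `y → 0⁺`.
If `f` is Lebesgue integrable on `(0,b)`, then all `c_j = 0`. -/
theorem stmt_4 {J : Type*} [Fintype J] (d : ℕ) (hd : 0 < d)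
    (c : J → ℂ) (γ : J → ℝ) (φ : J → Polynomial ℝ)
    (hφ0 : ∀ j, (φ j).eval 0 = 0)
    (hdist : Function.Injective fun j => (γ j, φ j))
    (E : ℝ → ℂ)
    (hE : ∀ y : ℝ, 0 < y →
      E y = ∑ j, c j * (y : ℂ) ^ (Complex.I * (γ j : ℂ)) *
        Complex.exp (Complex.I * (((φ j).eval (y ^ (-1 / (d : ℝ))) : ℝ) : ℂ)))
    (b : ℝ) (hb : 0 < b) (r : ℝ) (hr : r ≤ -1) (s : ℕ)
    (f g : ℝ → ℂ)
    (hg : g =o[nhdsWithin 0 (Set.Ioi 0)] fun y : ℝ => y ^ r * (Real.log y) ^ s)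
    (hf : ∀ y ∈ Set.Ioo (0 : ℝ) b,
      f y = ((y ^ r * (Real.log y) ^ s : ℝ) : ℂ) * E y + g y)
    (hint : IntegrableOn f (Set.Ioo 0 b)) :
    ∀ j, c j = 0 := by
  classical
  intro j₀
  let e : J → ℝ → ℂ := fun j y =>
    Complex.exp (Complex.I * ((γ j * Real.log y + (φ j).eval (y ^ (-1 / (d:ℝ))) : ℝ) : ℂ))
  let q : J → ℝ → ℂ := fun j y =>
    Complex.exp (Complex.I * (((γ j - γ j₀) * Real.log y + (φ j - φ j₀).eval (y ^ (-1 / (d:ℝ))) : ℝ) : ℂ))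
  have key : ∀ j, ∃ (G R : ℝ → ℂ) (C : ℝ), Tendsto R (𝓝[>] 0) (𝓝 0) ∧
      (∀ᶠ y in 𝓝[>] (0:ℝ), ‖G y - (if j = j₀ then 1 else 0) * (Real.log y : ℂ)‖ ≤ C) ∧
      ∀ᶠ y in 𝓝[>] (0:ℝ), HasDerivAt G ((q j y + R y) / y) y := by
    intro j
    by_cases hj : j = j₀
    · refine ⟨fun y => (Real.log y : ℂ), fun _ => 0, 0, tendsto_const_nhds, ?_, ?_⟩
      · simp [hj]
      · filter_upwards [self_mem_nhdsWithin] with y hy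
        have hy : 0 < y := hy
        refine (Real.hasDerivAt_log hy.ne').ofReal_comp.congr_deriv ?_
        simp [q, hj]
    · obtain ⟨G, R, C, h1, h2, h3⟩ := keyA d hd (γ j - γ j₀) (φ j - φ j₀) (by simp [hφ0]) (by
        rintro ⟨h1, h2⟩
        exact hj (hdist (Prod.ext (sub_eq_zero.1 h1) (sub_eq_zero.1 h2))))
      refine ⟨G, R, C, h1, ?_, h3⟩
      simpa [hj] using h2
  choose G R C hR hG hder using key
  have hq : ∀ j y, q j y * e j₀ y = e j y := by
    intro j y
    simp only [q, e]
    rw [← Complex.exp_add]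
    congr 1
    simp only [Polynomial.eval_sub]
    push_cast
    ring
  have hne : ∀ j y, ‖e j y‖ = 1 := by
    intro j y
    simp only [e]
    rw [mul_comm Complex.I, Complex.norm_exp_ofReal_mul_I]
  have hEe : ∀ y, 0 < y → E y = ∑ j, c j * e j y := by
    intro y hy
    rw [hE y hy]
    refine Finset.sum_congr rfl fun j _ => ?_
    rw [mul_assoc, Complex.cpow_def_of_ne_zero (by exact_mod_cast hy.ne'), ← Complex.exp_add,
      ← Complex.ofReal_log hy.le]
    simp only [e]
    congr 2
    push_cast
    ring
  refine keyB b hb f (fun y => ∑ j, c j * G j y) (fun y => ∑ j, c j * ((q j y + R j y) / y)) (c j₀)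
    (∑ j, ‖c j‖ * C j) hint ?_ ?_ ?_
  · filter_upwards [eventually_all.2 hder] with y hy
    exact HasDerivAt.fun_sum fun j _ => (hy j).const_mul (c j)
  · intro ε hε
    have hRs : Tendsto (fun y => ∑ j, c j * R j y) (𝓝[>] 0) (𝓝 0) := by
      have := tendsto_finsetSum Finset.univ (fun j _ => (hR j).const_mul (c j))
      simpa using this
    have hRe : ∀ᶠ y in 𝓝[>] (0:ℝ), ‖∑ j, c j * R j y‖ < ε / 2 := by
      have := hRs.norm
      rw [norm_zero] at this
      exact this.eventually (gt_mem_nhds (by positivity))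
    have hge := hg.bound (c := ε / 2) (by positivity)
    have hsm : ∀ᶠ y in 𝓝[>] (0:ℝ), y ∈ Set.Ioo 0 (min b (Real.exp (-1))) :=
      Ioo_mem_nhdsGT (lt_min hb (Real.exp_pos _))
    filter_upwards [hRe, hge, hsm] with y h1 h2 h3
    have hy : 0 < y := h3.1
    have hyb : y < b := h3.2.trans_le (min_le_left _ _)
    have hye : y < Real.exp (-1) := h3.2.trans_le (min_le_right _ _)
    have hy1 : y ≤ 1 := hye.le.trans (Real.exp_le_one_iff.2 (by norm_num))
    have hl : Real.log y < -1 := (Real.log_lt_iff_lt_exp hy).2 hye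
    have hw : 1 / y ≤ ‖y ^ r * (Real.log y) ^ s‖ := by
      rw [norm_mul, norm_pow]
      have a1 : 1 / y ≤ ‖y ^ r‖ := by
        rw [Real.norm_of_nonneg (Real.rpow_nonneg hy.le _), one_div, ← Real.rpow_neg_one]
        exact Real.rpow_le_rpow_of_exponent_ge hy hy1 hr
      have a2 : 1 ≤ ‖Real.log y‖ ^ s := by
        apply one_le_pow₀
        rw [Real.norm_eq_abs, abs_of_neg (by linarith)]
        linarith
      calc 1 / y ≤ ‖y ^ r‖ := a1
        _ ≤ _ := le_mul_of_one_le_right (norm_nonneg _) a2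
    set w : ℝ := y ^ r * (Real.log y) ^ s with hwdef
    have hwpos : 0 < ‖w‖ := lt_of_lt_of_le (by positivity) hw
    have hEn : ‖E y‖ = ‖∑ j, c j * q j y‖ := by
      rw [hEe y hy]
      have : ∑ j, c j * e j y = (∑ j, c j * q j y) * e j₀ y := by
        rw [Finset.sum_mul]
        exact Finset.sum_congr rfl fun j _ => by rw [mul_assoc, hq]
      rw [this, norm_mul, hne, mul_one]
    have hb1 : ‖w‖ * ‖E y‖ ≤ ‖f y‖ + ε / 2 * ‖w‖ := by
      have : (w : ℂ) * E y = f y - g y := by rw [hf y ⟨hy, hyb⟩]; ring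
      rw [← Complex.norm_real w, ← norm_mul, this, Complex.norm_real]
      exact (norm_sub_le _ _).trans (by linarith)
    have hb2 : ‖E y‖ / y ≤ ‖f y‖ + ε / 2 / y := by
      have h5 : ‖E y‖ - ε / 2 ≤ ‖f y‖ / ‖w‖ := by
        rw [le_div_iff₀ hwpos]; nlinarith
      have h6 : ‖f y‖ / ‖w‖ ≤ ‖f y‖ * y := by
        rw [div_le_iff₀ hwpos, mul_assoc]
        apply le_mul_of_one_le_right (norm_nonneg _)
        rw [div_le_iff₀ hy] at hw
        linarith
      rw [div_le_iff₀ hy, add_mul, div_mul_cancel₀ _ hy.ne']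
      linarith
    have hsum : ∑ j, c j * ((q j y + R j y) / y) = (∑ j, c j * q j y + ∑ j, c j * R j y) / y := by
      rw [← Finset.sum_add_distrib, Finset.sum_div]
      exact Finset.sum_congr rfl fun j _ => by ring
    rw [hsum, norm_div, Complex.norm_real, Real.norm_of_nonneg hy.le]
    calc _ ≤ (‖E y‖ + ε / 2) / y := by
          gcongr
          rw [hEn]
          exact (norm_add_le _ _).trans (by linarith)
      _ = ‖E y‖ / y + ε / 2 / y := by ring
      _ ≤ ‖f y‖ + ε / 2 / y + ε / 2 / y := by linarith
      _ = _ := by ring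
  · filter_upwards [eventually_all.2 hG] with y hy
    have : ∑ j, c j * G j y - c j₀ * (Real.log y : ℂ)
        = ∑ j, c j * (G j y - (if j = j₀ then 1 else 0) * (Real.log y : ℂ)) := by
      simp [mul_sub, Finset.sum_sub_distrib]
    rw [this]
    refine (norm_sum_le _ _).trans (Finset.sum_le_sum fun j _ => ?_)
    rw [norm_mul]
    exact mul_le_mul_of_nonneg_left (hy j) (norm_nonneg _)
end

section
/- Let m ≥ 1, let Γ be a finite subset of ℂ^m, let S be a finite subset of ℕ^m, and let (c_{r,s})_{(r,s) ∈ (Γ+ℕ^m) × S} be complex coefficients indexed by the set (Γ+ℕ^m) × S, where Γ+ℕ^m = {γ + α : γ ∈ Γ, α ∈ ℕ^m} ⊆ ℂ^m. Suppose that for every x = (x_1,…,x_m) ∈ (0,1)^m the family ((r,s) ↦ c_{r,s} · x^r · (log x)^s) is summable, where x^r = ∏_{i=1}^m x_i^{r_i} and (log x)^s = ∏_{i=1}^m (log x_i)^{s_i}, and define f(x) to be its sum. Then f(x) = 0 for all x ∈ (0,1)^m if and only if c_{r,s} = 0 for all (r,s) ∈ (Γ+ℕ^m) × S. -/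
open Filter Topology

theorem aux_const {ι : Type*} [DecidableEq ι] (θ : ι → ℝ) (hθ : Function.Injective θ) (F : Finset ι) :
    ∀ a : ι → ℂ, Tendsto (fun u : ℝ => ∑ r ∈ F, a r * Complex.exp (-(u * θ r) * Complex.I)) atTop (𝓝 0) →
      ∀ r ∈ F, a r = 0 := by
  induction F using Finset.induction_on with
  | empty => simp
  | insert b F hb ih =>
    intro a h
    have key : ∀ r ∈ F, a r = 0 := by
      intro r hr
      have hne : θ r - θ b ≠ 0 := by
        intro h0
        have := hθ (sub_eq_zero.mp h0)
        subst this; exact hb hr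
      set d : ℝ := Real.pi / (θ r - θ b) with hd
      have h1 : Tendsto (fun u : ℝ => u + d) atTop atTop := tendsto_atTop_add_const_right _ _ tendsto_id
      have h2 := (h.comp h1).sub (h.const_mul (Complex.exp (-(d * θ b) * Complex.I)))
      simp only [mul_zero, sub_zero] at h2
      have h3 := ih (fun q => a q * (Complex.exp (-(d * θ q) * Complex.I) - Complex.exp (-(d * θ b) * Complex.I))) (by
        refine h2.congr ?_
        intro u
        simp only [Function.comp, Finset.sum_insert hb, Finset.mul_sum, mul_add]
        have e : ∀ q, Complex.exp (-(((u + d : ℝ) : ℂ) * θ q) * Complex.I) =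
          Complex.exp (-(u * θ q) * Complex.I) * Complex.exp (-(d * θ q) * Complex.I) := by
          intro q
          rw [← Complex.exp_add]; push_cast; ring_nf
        simp only [e]
        rw [add_sub_add_comm, ← Finset.sum_sub_distrib]
        have : a b * (Complex.exp (-(u * θ b) * Complex.I) * Complex.exp (-(d * θ b) * Complex.I)) -
          Complex.exp (-(d * θ b) * Complex.I) * (a b * Complex.exp (-(u * θ b) * Complex.I)) = 0 := by ring
        rw [this, zero_add]
        refine Finset.sum_congr rfl fun q _ => by ring) r hr
      rcases mul_eq_zero.mp h3 with h4 | h4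
      · exact h4
      · exfalso
        have e : Complex.exp (-(d * θ r) * Complex.I) = - Complex.exp (-(d * θ b) * Complex.I) := by
          have : (-(d * θ r) * Complex.I : ℂ) = -(d * θ b) * Complex.I + -(Real.pi * Complex.I) := by
            have : d * θ r = d * θ b + Real.pi := by
              rw [hd]; field_simp; ring
            have : (d * θ r : ℂ) = d * θ b + Real.pi := by exact_mod_cast this
            rw [this]; ring
          rw [this, Complex.exp_add, Complex.exp_neg (Real.pi * Complex.I), Complex.exp_pi_mul_I]
          norm_num
        rw [e] at h4
        have h5 : (-2 : ℂ) * Complex.exp (-(d * θ b) * Complex.I) = 0 := by linear_combination h4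
        simp [Complex.exp_ne_zero] at h5
    intro r hr
    rcases Finset.mem_insert.mp hr with rfl | hr
    · have h1 : (fun u : ℝ => ∑ q ∈ insert r F, a q * Complex.exp (-(u * θ q) * Complex.I)) =
          fun u : ℝ => a r * Complex.exp (-(u * θ r) * Complex.I) := by
        funext u
        rw [Finset.sum_insert hb, Finset.sum_eq_zero, add_zero]
        intro q hq; rw [key q hq, zero_mul]
      rw [h1] at h
      have h2 := h.norm
      have h3 : (fun u : ℝ => ‖a r * Complex.exp (-(u * θ r) * Complex.I)‖) = fun _ => ‖a r‖ := by
        funext u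
        rw [norm_mul, Complex.norm_exp]; simp
      rw [h3, norm_zero] at h2
      exact norm_eq_zero.mp (tendsto_nhds_unique tendsto_const_nhds h2)
    · exact key r hr

theorem aux_poly_s6 {ι : Type*} [DecidableEq ι] (θ : ι → ℝ) (F : Finset ι) (hθ : Set.InjOn θ F)
    (N : ℕ) (a : ι → ℕ → ℂ)
    (h : Tendsto (fun u : ℝ => ∑ r ∈ F, (∑ k ∈ Finset.range N, a r k * (u : ℂ) ^ k) * Complex.exp (-(u * θ r) * Complex.I)) atTop (𝓝 0)) :
      ∀ r ∈ F, ∀ k < N, a r k = 0 := by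
  induction N with
  | zero => simp
  | succ N ih =>
    have hN : ∀ r ∈ F, a r N = 0 := by
      have h0 : Tendsto (fun u : ℝ => (((u ^ N)⁻¹ : ℝ) : ℂ) * ∑ r ∈ F, (∑ k ∈ Finset.range (N+1), a r k * (u : ℂ) ^ k) * Complex.exp (-(u * θ r) * Complex.I)) atTop (𝓝 0) := by
        have hn := h.norm
        rw [norm_zero] at hn
        refine squeeze_zero_norm' ?_ hn
        filter_upwards [eventually_ge_atTop 1] with u hu
        rw [norm_mul]
        refine mul_le_of_le_one_left (norm_nonneg _) ?_
        rw [Complex.norm_real, Real.norm_of_nonneg (by positivity)]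
        exact inv_le_one_of_one_le₀ (one_le_pow₀ hu)
      have h1 : Tendsto (fun u : ℝ => ∑ r ∈ F, (∑ k ∈ Finset.range N, a r k * (((u ^ k / u ^ N : ℝ) : ℂ))) * Complex.exp (-(u * θ r) * Complex.I)) atTop (𝓝 0) := by
        rw [← Finset.sum_const_zero (s := F)]
        refine tendsto_finsetSum _ fun r _ => ?_
        have h2 : Tendsto (fun u : ℝ => ∑ k ∈ Finset.range N, a r k * (((u ^ k / u ^ N : ℝ) : ℂ))) atTop (𝓝 0) := by
          rw [← Finset.sum_const_zero (s := Finset.range N)]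
          refine tendsto_finsetSum _ fun k hk => ?_
          have := tendsto_pow_div_pow_atTop_zero (𝕜 := ℝ) (Finset.mem_range.mp hk)
          have := (Complex.continuous_ofReal.tendsto 0).comp this
          simpa using this.const_mul (a r k)
        refine squeeze_zero_norm (fun u => ?_) (by simpa using h2.norm)
        rw [norm_mul, Complex.norm_exp]; simp
      have h2 := h0.sub h1
      rw [sub_zero] at h2
      have h3 := aux_const (fun r : F => θ r) (fun r q hrq => Subtype.ext (hθ r.2 q.2 hrq)) Finset.univ (fun r => a r N) (by
        refine h2.congr' ?_
        filter_upwards [eventually_gt_atTop 0] with u hu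
        rw [Finset.mul_sum, ← Finset.sum_sub_distrib,
          Finset.sum_coe_sort F (fun r => a r N * Complex.exp (-(u * θ r) * Complex.I))]
        refine Finset.sum_congr rfl fun r _ => ?_
        rw [Finset.sum_range_succ, ← mul_assoc, ← sub_mul]
        congr 1
        have hu' : (u : ℂ) ≠ 0 := by exact_mod_cast hu.ne'
        have : ∑ k ∈ Finset.range N, a r k * (((u ^ k / u ^ N : ℝ) : ℂ)) = (((u ^ N)⁻¹ : ℝ) : ℂ) * ∑ k ∈ Finset.range N, a r k * (u:ℂ) ^ k := by
          rw [Finset.mul_sum]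
          refine Finset.sum_congr rfl fun k _ => ?_
          push_cast; ring
        rw [this]; push_cast
        field_simp
        ring)
      intro r hr
      exact h3 ⟨r, hr⟩ (Finset.mem_univ _)
    have ih' := ih (by
      refine h.congr fun u => Finset.sum_congr rfl fun r hr => ?_
      rw [Finset.sum_range_succ, hN r hr]; simp)
    intro r hr k hk
    rcases Nat.lt_succ_iff_lt_or_eq.mp hk with hk | rfl
    · exact ih' r hr k hk
    · exact hN r hr

theorem aux_dir {ι : Type*} (l : ι → ℂ) (hl : Function.Injective l)
    (hfin : ∀ B : ℝ, {r | (l r).re ≤ B}.Finite) (N : ℕ) (a : ι → ℕ → ℂ) (M : ι → ℝ)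
    (hM : ∀ r, ∑ k ∈ Finset.range N, ‖a r k‖ ≤ M r)
    (hMs : Summable fun r => M r * Real.exp (-(l r).re))
    (hs : ∀ u : ℝ, 1 ≤ u → HasSum (fun r => (∑ k ∈ Finset.range N, a r k * (u : ℂ) ^ k) * Complex.exp (-(u * l r))) 0) :
    ∀ r, ∀ k < N, a r k = 0 := by
  classical
  by_contra! hcon
  obtain ⟨r1, k1, hk1, hne1⟩ := hcon
  obtain ⟨r0, ⟨hr0, k0, hk0, hne0⟩, hmin0⟩ := Set.exists_min_image {r | (l r).re ≤ (l r1).re ∧ ∃ k < N, a r k ≠ 0} (fun r => (l r).re)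
    ((hfin _).subset fun r hr => hr.1) ⟨r1, le_rfl, k1, hk1, hne1⟩
  set μ := (l r0).re with hμ
  have hmin : ∀ r, (l r).re < μ → ∀ k < N, a r k = 0 := by
    intro r hr k hk
    by_contra hne
    exact absurd (hmin0 r ⟨hr.le.trans hr0, k, hk, hne⟩) (not_le.mpr hr)
  have hFfin : {r | (l r).re = μ}.Finite := (hfin μ).subset fun r hr => le_of_eq hr
  set F := hFfin.toFinset with hF
  have hmemF : ∀ r, r ∈ F ↔ (l r).re = μ := by simp [hF]
  obtain ⟨B, hB, hBμ⟩ : ∃ B, (∀ r, μ < (l r).re → B ≤ (l r).re) ∧ μ < B := by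
    have hA : {r | μ < (l r).re ∧ (l r).re ≤ μ + 1}.Finite := (hfin (μ+1)).subset fun r hr => hr.2
    have h1 : ∀ᶠ B in 𝓝[>] μ, ∀ r ∈ {r | μ < (l r).re ∧ (l r).re ≤ μ + 1}, B ≤ (l r).re := by
      rw [Filter.eventually_all_finite hA]
      intro r hr
      exact mem_nhdsWithin_of_mem_nhds (Iic_mem_nhds hr.1)
    have h2 : ∀ᶠ B in 𝓝[>] μ, B ≤ μ + 1 := mem_nhdsWithin_of_mem_nhds (Iic_mem_nhds (by linarith))
    obtain ⟨B, h1, h2, h3⟩ := (h1.and (h2.and self_mem_nhdsWithin)).exists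
    refine ⟨B, fun r hr => ?_, h3⟩
    by_cases h : (l r).re ≤ μ + 1
    · exact h1 r ⟨hr, h⟩
    · linarith
  set K := ∑' r, M r * Real.exp (-(l r).re) with hK
  have hMnn : ∀ r, 0 ≤ M r := fun r => (Finset.sum_nonneg fun _ _ => norm_nonneg _).trans (hM r)
  -- bound for the finite part
  have hbound : ∀ u : ℝ, 1 ≤ u → ‖∑ r ∈ F, (∑ k ∈ Finset.range N, a r k * (u : ℂ) ^ k) * Complex.exp (-(u * l r))‖ ≤ u ^ N * Real.exp (-((u - 1) * B)) * K := by
    intro u hu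
    set g : ι → ℂ := fun r => (∑ k ∈ Finset.range N, a r k * (u : ℂ) ^ k) * Complex.exp (-(u * l r)) with hg
    have h1 : HasSum (fun r => if r ∈ F then g r else 0) (∑ r ∈ F, g r) := by
      have := hasSum_sum_of_ne_finset_zero (L := SummationFilter.unconditional ι) (f := fun r => if r ∈ F then g r else 0) (s := F) (fun b hb => if_neg hb)
      rwa [Finset.sum_congr rfl (fun r hr => if_pos hr)] at this
    have h2 := h1.sub (hs u hu)
    rw [sub_zero] at h2
    have h3 : HasSum (fun r => u ^ N * Real.exp (-((u - 1) * B)) * (M r * Real.exp (-(l r).re))) (u ^ N * Real.exp (-((u - 1) * B)) * K) :=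
      hMs.hasSum.mul_left _
    refine h2.norm_le_of_bounded h3 fun r => ?_
    have hnn : 0 ≤ u ^ N * Real.exp (-((u - 1) * B)) * (M r * Real.exp (-(l r).re)) := by
      have := hMnn r
      positivity
    by_cases hr : r ∈ F
    · simp only [if_pos hr]; simpa [hg] using hnn
    · simp only [if_neg hr, zero_sub, norm_neg]
      rcases lt_trichotomy (l r).re μ with h | h | h
      · have : ∑ k ∈ Finset.range N, a r k * (u : ℂ) ^ k = 0 :=
          Finset.sum_eq_zero fun k hk => by rw [hmin r h k (Finset.mem_range.mp hk), zero_mul]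
        rw [this]; simpa using hnn
      · exact absurd ((hmemF r).mpr h) hr
      · have hBr := hB r h
        have hq : ‖∑ k ∈ Finset.range N, a r k * (u : ℂ) ^ k‖ ≤ M r * u ^ N := by
          refine (norm_sum_le _ _).trans ?_
          refine le_trans ?_ (mul_le_mul_of_nonneg_right (hM r) (by positivity))
          rw [Finset.sum_mul]
          refine Finset.sum_le_sum fun k hk => ?_
          rw [norm_mul, norm_pow, Complex.norm_real, Real.norm_of_nonneg (by linarith)]
          exact mul_le_mul_of_nonneg_left (pow_le_pow_right₀ hu (Finset.mem_range.mp hk).le) (norm_nonneg _)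
        rw [norm_mul, Complex.norm_exp]
        have he : Real.exp (-(u * l r)).re ≤ Real.exp (-((u - 1) * B)) * Real.exp (-(l r).re) := by
          rw [← Real.exp_add]
          refine Real.exp_le_exp.mpr ?_
          simp
          nlinarith
        calc _ ≤ (M r * u ^ N) * (Real.exp (-((u - 1) * B)) * Real.exp (-(l r).re)) :=
              mul_le_mul hq he (Real.exp_nonneg _) (mul_nonneg (hMnn r) (by positivity))
          _ = _ := by ring
  have hlim : Tendsto (fun u : ℝ => ∑ r ∈ F, (∑ k ∈ Finset.range N, a r k * (u : ℂ) ^ k) * Complex.exp (-(u * (l r).im) * Complex.I)) atTop (𝓝 0) := by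
    have h1 : Tendsto (fun u : ℝ => u ^ N * Real.exp (-(B - μ) * u) * (Real.exp B * K)) atTop (𝓝 0) := by
      have := (tendsto_rpow_mul_exp_neg_mul_atTop_nhds_zero N (B - μ) (by linarith)).mul_const (Real.exp B * K)
      simpa using this
    refine squeeze_zero_norm' ?_ h1
    filter_upwards [eventually_ge_atTop 1] with u hu
    have e : ∑ r ∈ F, (∑ k ∈ Finset.range N, a r k * (u : ℂ) ^ k) * Complex.exp (-(u * (l r).im) * Complex.I) =
      Complex.exp ((u * μ : ℝ)) * ∑ r ∈ F, (∑ k ∈ Finset.range N, a r k * (u : ℂ) ^ k) * Complex.exp (-(u * l r)) := by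
      rw [Finset.mul_sum]
      refine Finset.sum_congr rfl fun r hr => ?_
      rw [mul_left_comm, ← Complex.exp_add]
      congr 2
      have := (hmemF r).mp hr
      conv_rhs => rw [← Complex.re_add_im (l r), this]
      push_cast; ring
    rw [e, norm_mul, Complex.norm_exp, Complex.ofReal_re]
    calc _ ≤ Real.exp (u * μ) * (u ^ N * Real.exp (-((u - 1) * B)) * K) :=
          mul_le_mul_of_nonneg_left (hbound u hu) (Real.exp_nonneg _)
      _ = u ^ N * (Real.exp (u * μ) * Real.exp (-((u - 1) * B))) * K := by ring
      _ = u ^ N * (Real.exp (-(B - μ) * u) * Real.exp B) * K := by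
          rw [← Real.exp_add, ← Real.exp_add]; ring_nf
      _ ≤ _ := by apply le_of_eq; ring
  refine hne0 (aux_poly_s6 (fun r => (l r).im) F ?_ N a hlim r0 ((hmemF r0).mpr rfl) k0 hk0)
  intro r hr q hq hrq
  exact hl (Complex.ext (((hmemF r).mp hr).trans ((hmemF q).mp hq).symm) hrq)

theorem aux_dir' {ι σ : Type*} [Fintype σ] (deg : σ → ℕ) (l : ι → ℂ) (hl : Function.Injective l)
    (hfin : ∀ B : ℝ, {r | (l r).re ≤ B}.Finite) (b : ι → σ → ℂ)
    (hMs : Summable fun r => (∑ s, ‖b r s‖) * Real.exp (-(l r).re))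
    (hs : ∀ u : ℝ, 1 ≤ u → HasSum (fun r => (∑ s, b r s * (u : ℂ) ^ deg s) * Complex.exp (-(u * l r))) 0) :
    ∀ r, ∑ s, b r s = 0 := by
  classical
  set N := Finset.univ.sup deg + 1 with hN
  have hdeg : ∀ s ∈ Finset.univ, deg s ∈ Finset.range N := fun s hs =>
    Finset.mem_range.mpr (Nat.lt_succ_of_le (Finset.le_sup hs))
  have key := aux_dir l hl hfin N (fun r k => ∑ s with deg s = k, b r s) (fun r => ∑ s, ‖b r s‖) (by
      intro r
      rw [← Finset.sum_fiberwise_of_maps_to hdeg]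
      exact Finset.sum_le_sum fun k _ => norm_sum_le _ _) hMs (by
      intro u hu
      convert hs u hu using 3 with r
      rw [← Finset.sum_fiberwise_of_maps_to hdeg]
      refine Finset.sum_congr rfl fun k _ => ?_
      rw [Finset.sum_mul]
      refine Finset.sum_congr rfl fun s hs => ?_
      rw [(Finset.mem_filter.mp hs).2])
  intro r
  rw [← Finset.sum_fiberwise_of_maps_to hdeg]
  exact Finset.sum_eq_zero fun k hk => key r k (Finset.mem_range.mp hk)

theorem aux_generic {m : ℕ} (R : Set (Fin m → ℂ)) (hR : R.Countable) :
    Dense {t : Fin m → ℝ | ∀ r ∈ R, ∀ q ∈ R, r ≠ q → ∑ i, (t i : ℂ) * r i ≠ ∑ i, (t i : ℂ) * q i} := by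
  apply MeasureTheory.Measure.dense_of_ae (μ := MeasureTheory.volume)
  rw [MeasureTheory.ae_ball_iff hR]
  intro r _
  rw [MeasureTheory.ae_ball_iff hR]
  intro q _
  by_cases hrq : r = q
  · simp [hrq]
  let V : Submodule ℝ (Fin m → ℝ) :=
    { carrier := {t | ∑ i, (t i : ℂ) * r i = ∑ i, (t i : ℂ) * q i}
      add_mem' := by
        intro a b ha hb
        simp only [Set.mem_ofPred_eq, Pi.add_apply, Complex.ofReal_add, add_mul, Finset.sum_add_distrib] at *
        rw [ha, hb]
      zero_mem' := by simp
      smul_mem' := by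
        intro x a ha
        simp only [Set.mem_ofPred_eq, Pi.smul_apply, smul_eq_mul, Complex.ofReal_mul, mul_assoc, ← Finset.mul_sum] at *
        rw [ha] }
  have hV : V ≠ ⊤ := by
    intro h
    apply hrq
    funext j
    have : Pi.single j (1 : ℝ) ∈ V := by rw [h]; trivial
    have h2 : ∑ i, (((Pi.single j (1 : ℝ) : Fin m → ℝ) i : ℝ) : ℂ) * r i = ∑ i, (((Pi.single j (1 : ℝ) : Fin m → ℝ) i : ℝ) : ℂ) * q i := this
    simpa [Pi.single_apply, apply_ite Complex.ofReal] using h2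
  have h0 := MeasureTheory.Measure.addHaar_submodule MeasureTheory.volume V hV
  rw [MeasureTheory.ae_iff]
  refine MeasureTheory.measure_mono_null ?_ h0
  intro t ht
  simp only [Set.mem_ofPred_eq, not_forall, not_not] at ht
  exact ht.2

theorem aux_fin {m : ℕ} (Γ : Finset (Fin m → ℂ)) (t : Fin m → ℝ) (ht : ∀ i, 0 < t i) (B : ℝ) :
    {r : Fin m → ℂ | (∃ γ ∈ Γ, ∃ α : Fin m → ℕ, r = fun i => γ i + (α i : ℂ)) ∧
      (∑ i, (t i : ℂ) * r i).re ≤ B}.Finite := by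
  have : {r : Fin m → ℂ | (∃ γ ∈ Γ, ∃ α : Fin m → ℕ, r = fun i => γ i + (α i : ℂ)) ∧
      (∑ i, (t i : ℂ) * r i).re ≤ B} ⊆ ⋃ γ ∈ Γ, (fun α : Fin m → ℕ => fun i => γ i + (α i : ℂ)) ''
        (Set.Iic (fun i => ⌈(B - (∑ i, (t i : ℂ) * γ i).re) / t i⌉₊)) := by
    rintro r ⟨⟨γ, hγ, α, rfl⟩, h⟩
    simp only [Set.mem_iUnion]
    refine ⟨γ, hγ, α, ?_, rfl⟩
    intro i
    have h1 : (∑ i, (t i : ℂ) * (γ i + (α i : ℂ))).re = (∑ i, (t i : ℂ) * γ i).re + ∑ i, t i * α i := by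
      simp [mul_add, Finset.sum_add_distrib]
    rw [h1] at h
    have h2 : t i * α i ≤ ∑ i, t i * α i :=
      Finset.single_le_sum (f := fun i => t i * (α i : ℝ)) (fun j _ => mul_nonneg (ht j).le (Nat.cast_nonneg _)) (Finset.mem_univ i)
    have h3 : (α i : ℝ) ≤ (B - (∑ i, (t i : ℂ) * γ i).re) / t i := by
      rw [le_div_iff₀ (ht i)]; linarith
    exact_mod_cast h3.trans (Nat.le_ceil _)
  exact (Γ.finite_toSet.biUnion fun γ _ => (Set.finite_Iic _).image _).subset this

theorem aux_mv {m : ℕ} (S : Finset (Fin m → ℕ)) (c : (Fin m → ℕ) → ℂ) (G : Set (Fin m → ℝ)) (hG : Dense G)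
    (h : ∀ t ∈ G, (∀ i, 0 < t i) → ∑ s ∈ S, c s * ∏ i, (-(t i : ℂ)) ^ s i = 0) : ∀ s ∈ S, c s = 0 := by
  classical
  have hall : ∀ t : Fin m → ℝ, (∀ i, 0 < t i) → ∑ s ∈ S, c s * ∏ i, (-(t i : ℂ)) ^ s i = 0 := by
    intro t ht
    have hopen : IsOpen {t : Fin m → ℝ | ∀ i, 0 < t i} := by
      simp only [Set.ofPred_forall]
      exact isOpen_iInter_of_finite fun i => isOpen_lt continuous_const (continuous_apply i)
    have hclosed : IsClosed {t : Fin m → ℝ | ∑ s ∈ S, c s * ∏ i, (-(t i : ℂ)) ^ s i = 0} :=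
      isClosed_eq (by fun_prop) continuous_const
    have h1 := hG.open_subset_closure_inter hopen ht
    exact closure_minimal (fun t ht => h t ht.2 ht.1) hclosed h1
  let p : MvPolynomial (Fin m) ℂ := ∑ s ∈ S, MvPolynomial.monomial (Finsupp.equivFunOnFinite.symm s) (c s)
  have hp : p = 0 := by
    refine MvPolynomial.funext_set (fun _ => (fun x : ℝ => -(x : ℂ)) '' Set.Ioi 0) (fun i => ?_) ?_
    · refine (Set.Ioi_infinite 0).image ?_
      intro x _ y _ hxy
      simpa using hxy
    · intro x hx
      have : ∀ i, ∃ y : ℝ, 0 < y ∧ -(y : ℂ) = x i := fun i => hx i trivial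
      choose t ht htx using this
      have := hall t ht
      simp only [htx] at this
      simp only [p, map_sum, MvPolynomial.eval_monomial, map_zero]
      rw [← this]
      refine Finset.sum_congr rfl fun s _ => ?_
      rw [Finsupp.prod_fintype _ _ (by simp)]
      simp
  intro s hs
  have h1 : p.coeff (Finsupp.equivFunOnFinite.symm s) = c s := by
    simp [p, MvPolynomial.coeff_sum, MvPolynomial.coeff_monomial, hs]
  rw [← h1, hp]; simp

/-- **Vanishing of multivariate power-log series.** Let `Γ ⊆ ℂ^m` and
`S ⊆ ℕ^m` be finite, and let `(c_{r,s})` be coefficients indexed over `(Γ + ℕ^m) × S`.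
If for each `x ∈ (0,1)^m` the family `c_{r,s} x^r (log x)^s` is summable with sum `f(x)`,
then `f` vanishes identically on `(0,1)^m` iff all the coefficients vanish. -/
theorem stmt_6 (m : ℕ) (hm : 1 ≤ m)
    (Γ : Finset (Fin m → ℂ)) (S : Finset (Fin m → ℕ))
    (c : (Fin m → ℂ) → (Fin m → ℕ) → ℂ)
    (R : Set (Fin m → ℂ))
    (hR : R = {r | ∃ γ ∈ Γ, ∃ α : Fin m → ℕ, r = fun i => γ i + (α i : ℂ)})
    (hsum : ∀ x : Fin m → ℝ, (∀ i, x i ∈ Set.Ioo (0 : ℝ) 1) →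
      Summable (fun p : {p : (Fin m → ℂ) × (Fin m → ℕ) // p.1 ∈ R ∧ p.2 ∈ S} =>
        c p.1.1 p.1.2 * (∏ i, (x i : ℂ) ^ (p.1.1 i)) *
          ∏ i, ((Real.log (x i) : ℂ)) ^ (p.1.2 i)))
    (f : (Fin m → ℝ) → ℂ)
    (hf : ∀ x : Fin m → ℝ, (∀ i, x i ∈ Set.Ioo (0 : ℝ) 1) →
      f x = ∑' p : {p : (Fin m → ℂ) × (Fin m → ℕ) // p.1 ∈ R ∧ p.2 ∈ S},
        c p.1.1 p.1.2 * (∏ i, (x i : ℂ) ^ (p.1.1 i)) *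
          ∏ i, ((Real.log (x i) : ℂ)) ^ (p.1.2 i)) :
    (∀ x : Fin m → ℝ, (∀ i, x i ∈ Set.Ioo (0 : ℝ) 1) → f x = 0) ↔
      ∀ r ∈ R, ∀ s ∈ S, c r s = 0 := by
  classical
  constructor
  swap
  · intro hc x hx
    rw [hf x hx]
    convert tsum_zero with p
    rw [hc _ p.2.1 _ p.2.2]; simp
  intro hf0 r hr
  have hRc : R.Countable := by
    have : R ⊆ ⋃ γ ∈ Γ, Set.range (fun α : Fin m → ℕ => fun i => γ i + (α i : ℂ)) := by
      rw [hR]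
      rintro r ⟨γ, hγ, α, rfl⟩
      simp only [Set.mem_iUnion]
      exact ⟨γ, hγ, α, rfl⟩
    exact (Set.Countable.biUnion Γ.countable_toSet fun γ _ => Set.countable_range _).mono this
  refine aux_mv S (c r) _ (aux_generic R hRc) ?_
  intro t htG ht
  -- rewriting along the ray
  have hx : ∀ u : ℝ, 1 ≤ u → ∀ i, Real.exp (-(u * t i)) ∈ Set.Ioo (0 : ℝ) 1 := fun u hu i =>
    ⟨Real.exp_pos _, by rw [Real.exp_lt_one_iff]; have := ht i; nlinarith [mul_pos (by linarith : 0 < u) this]⟩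
  have hterm : ∀ u : ℝ, ∀ p : R × S,
      c p.1.1 p.2.1 * (∏ i, ((Real.exp (-(u * t i)) : ℝ) : ℂ) ^ (p.1.1 i)) *
          ∏ i, ((Real.log (Real.exp (-(u * t i))) : ℂ)) ^ (p.2.1 i) =
      ((c p.1.1 p.2.1 * ∏ i, (-(t i : ℂ)) ^ p.2.1 i) * (u : ℂ) ^ (∑ i, p.2.1 i)) *
        Complex.exp (-(u * ∑ i, (t i : ℂ) * p.1.1 i)) := by
    rintro u ⟨⟨r, hr⟩, ⟨s, hs⟩⟩
    have h1 : ∏ i, ((Real.exp (-(u * t i)) : ℝ) : ℂ) ^ (r i) = Complex.exp (-(u * ∑ i, (t i : ℂ) * r i)) := by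
      rw [Finset.mul_sum, ← Finset.sum_neg_distrib, Complex.exp_sum]
      refine Finset.prod_congr rfl fun i _ => ?_
      rw [Complex.cpow_def_of_ne_zero (by exact_mod_cast (Real.exp_pos _).ne'),
        ← Complex.ofReal_log (Real.exp_pos _).le, Real.log_exp]
      push_cast; ring_nf
    have h2 : ∏ i, ((Real.log (Real.exp (-(u * t i))) : ℂ)) ^ (s i) = (∏ i, (-(t i : ℂ)) ^ s i) * (u : ℂ) ^ (∑ i, s i) := by
      rw [← Finset.prod_pow_eq_pow_sum, ← Finset.prod_mul_distrib]
      refine Finset.prod_congr rfl fun i _ => ?_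
      rw [Real.log_exp, ← mul_pow]
      push_cast; ring_nf
    simp only
    rw [h1, h2]; ring
  let e : {p : (Fin m → ℂ) × (Fin m → ℕ) // p.1 ∈ R ∧ p.2 ∈ S} ≃ R × S :=
    Equiv.subtypeProdEquivProd
  have hsum2 : ∀ u : ℝ, 1 ≤ u → HasSum (fun p : R × S =>
      ((c p.1.1 p.2.1 * ∏ i, (-(t i : ℂ)) ^ p.2.1 i) * (u : ℂ) ^ (∑ i, p.2.1 i)) *
        Complex.exp (-(u * ∑ i, (t i : ℂ) * p.1.1 i))) 0 := by
    intro u hu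
    have h1 := (hsum _ (hx u hu)).hasSum
    rw [← hf _ (hx u hu), hf0 _ (hx u hu)] at h1
    rw [← e.hasSum_iff]
    convert h1 using 1
    funext p
    exact (hterm u (e p)).symm
  have key := aux_dir' (ι := R) (σ := S) (fun s => ∑ i, s.1 i) (fun r => ∑ i, (t i : ℂ) * r.1 i)
    (by
      intro r q hrq
      by_contra hne
      exact htG r.1 r.2 q.1 q.2 (fun h => hne (Subtype.ext h)) hrq)
    (by
      intro B
      have := aux_fin Γ t ht B
      refine Set.Finite.of_finite_image (f := Subtype.val) (this.subset ?_) Subtype.val_injective.injOn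
      rintro _ ⟨⟨r, hr⟩, hrB, rfl⟩
      refine ⟨?_, hrB⟩
      rw [hR] at hr
      exact hr)
    (fun r s => c r.1 s.1 * ∏ i, (-(t i : ℂ)) ^ s.1 i)
    (by
      have h1 := ((hsum2 1 le_rfl).summable.norm).prod
      refine h1.congr fun r => ?_
      rw [tsum_fintype, Finset.sum_mul]
      refine Finset.sum_congr rfl fun s _ => ?_
      rw [norm_mul, Complex.norm_exp]
      simp)
    (by
      intro u hu
      refine (hsum2 u hu).prod_fiberwise fun r => ?_
      rw [Finset.sum_mul]
      exact hasSum_fintype _)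
    ⟨r, hr⟩
  rw [← key]
  exact (Finset.sum_coe_sort S (fun s => c r s * ∏ i, (-(t i : ℂ)) ^ s i)).symm
end

section
/- Let f, φ : ℝ → ℝ be continuously differentiable. Assume that φ' has only finitely many zeros, that there exists R₀ > 0 such that φ'(t) ≠ 0 for |t| ≥ R₀ and the function t ↦ f(t)/φ'(t) is monotone on [R₀, +∞) and monotone on (−∞, −R₀], and that f(t)/φ'(t) → 0 as t → +∞ and as t → −∞. Then the improper integral ∫_ℝ f(t) e^{iφ(t)} dt converges; that is, both limits lim_{R→+∞} ∫_0^R f(t) e^{iφ(t)} dt and lim_{R→+∞} ∫_{−R}^0 f(t) e^{iφ(t)} dt exist in ℂ. -/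
open Filter intervalIntegral

lemma osc_step (f φ g : ℝ → ℝ) (hf : Continuous f) (hφ : ContDiff ℝ 1 φ) (R₀ b K : ℝ)
    (hfg : ∀ t, R₀ ≤ t → f t = g t * deriv φ t)
    (hg : ∀ x t y, R₀ ≤ x → x ≤ t → t ≤ y → |g x - g t| + |g t - g y| ≤ |g x - g y|)
    (hK : ∀ t, R₀ ≤ t → t ≤ b → |deriv φ t| ≤ K) (n : ℕ) :
    ∀ x y, R₀ ≤ x → x ≤ y → y ≤ b →
      ‖(∫ t in x..y, (f t : ℂ) * Complex.exp (Complex.I * (φ t : ℂ)))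
        - (g y * (-Complex.I * Complex.exp (Complex.I * (φ y : ℂ)))
          - g x * (-Complex.I * Complex.exp (Complex.I * (φ x : ℂ))))‖
      ≤ |g x - g y| * (1 + K * (y - x) / 2 ^ n) := by
  have hφc : Continuous φ := hφ.continuous
  have hφ' : Continuous (deriv φ) := hφ.continuous_deriv le_rfl
  have hFc : Continuous fun t => (f t : ℂ) * Complex.exp (Complex.I * (φ t : ℂ)) := by fun_prop
  have hhc : Continuous fun t => ((deriv φ t : ℝ) : ℂ) * Complex.exp (Complex.I * (φ t : ℂ)) := by
    fun_prop
  have hexp : ∀ t, ‖Complex.exp (Complex.I * (φ t : ℂ))‖ = 1 := fun t => by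
    rw [mul_comm]; exact Complex.norm_exp_ofReal_mul_I _
  induction n with
  | zero =>
    intro x y hx hxy hy
    have hd : ∀ t, HasDerivAt (fun t => -Complex.I * Complex.exp (Complex.I * (φ t : ℂ)))
        (((deriv φ t : ℝ) : ℂ) * Complex.exp (Complex.I * (φ t : ℂ))) t := by
      intro t
      have h1 : HasDerivAt (fun t => (φ t : ℂ)) ((deriv φ t : ℝ) : ℂ) t :=
        ((hφ.differentiable one_ne_zero) t).hasDerivAt.ofReal_comp
      have h2 := ((h1.const_mul Complex.I).cexp).const_mul (-Complex.I)
      refine h2.congr_deriv ?_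
      linear_combination (-((deriv φ t : ℝ) : ℂ) * Complex.exp (Complex.I * (φ t : ℂ))) * Complex.I_sq
    have hH := integral_eq_sub_of_hasDerivAt (a := x) (b := y) (fun t _ => hd t)
      (hhc.intervalIntegrable _ _)
    have e1 : (∫ t in x..y, ((f t : ℂ) * Complex.exp (Complex.I * (φ t : ℂ))
        - g x * (((deriv φ t : ℝ) : ℂ) * Complex.exp (Complex.I * (φ t : ℂ))))) =
        (∫ t in x..y, (f t : ℂ) * Complex.exp (Complex.I * (φ t : ℂ))) -
        g x * (-Complex.I * Complex.exp (Complex.I * (φ y : ℂ))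
          - -Complex.I * Complex.exp (Complex.I * (φ x : ℂ))) := by
      rw [← hH, integral_sub (hFc.intervalIntegrable _ _)
        ((hhc.intervalIntegrable _ _).const_mul _), integral_const_mul]
    have e2 : ‖∫ t in x..y, ((f t : ℂ) * Complex.exp (Complex.I * (φ t : ℂ))
        - g x * (((deriv φ t : ℝ) : ℂ) * Complex.exp (Complex.I * (φ t : ℂ))))‖
        ≤ |g x - g y| * K * |y - x| := by
      apply norm_integral_le_of_norm_le_const
      intro t ht
      rw [Set.uIoc_of_le hxy] at ht
      rw [hfg t (hx.trans ht.1.le)]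
      have : ((g t * deriv φ t : ℝ) : ℂ) * Complex.exp (Complex.I * (φ t : ℂ))
        - g x * (((deriv φ t : ℝ) : ℂ) * Complex.exp (Complex.I * (φ t : ℂ))) =
        ((-(g x - g t) * deriv φ t : ℝ) : ℂ) * Complex.exp (Complex.I * (φ t : ℂ)) := by
        push_cast; ring
      rw [this, norm_mul, hexp, mul_one, Complex.norm_real, Real.norm_eq_abs, abs_mul, abs_neg]
      have h1 := hg x t y hx ht.1.le ht.2
      have h2 := abs_nonneg (g t - g y)
      exact mul_le_mul (by linarith) (hK t (hx.trans ht.1.le) (ht.2.trans hy)) (abs_nonneg _)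
        (abs_nonneg _)
    have e3 : (∫ t in x..y, (f t : ℂ) * Complex.exp (Complex.I * (φ t : ℂ)))
        - (g y * (-Complex.I * Complex.exp (Complex.I * (φ y : ℂ)))
          - g x * (-Complex.I * Complex.exp (Complex.I * (φ x : ℂ)))) =
        (∫ t in x..y, ((f t : ℂ) * Complex.exp (Complex.I * (φ t : ℂ))
        - g x * (((deriv φ t : ℝ) : ℂ) * Complex.exp (Complex.I * (φ t : ℂ))))) +
        ((g x - g y : ℝ) : ℂ) * (-Complex.I * Complex.exp (Complex.I * (φ y : ℂ))) := by
      rw [e1]; push_cast; ring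
    rw [e3]
    refine (norm_add_le _ _).trans ?_
    rw [norm_mul, norm_mul, hexp, norm_neg, Complex.norm_I, Complex.norm_real, Real.norm_eq_abs]
    rw [abs_of_nonneg (sub_nonneg.2 hxy)] at e2
    simp only [pow_zero, div_one]
    linarith
  | succ n ih =>
    intro x y hx hxy hy
    set m := (x + y) / 2 with hm
    have hxm : x ≤ m := by linarith
    have hmy : m ≤ y := by linarith
    have h1 := ih x m hx hxm (hmy.trans hy)
    have h2 := ih m y (hx.trans hxm) hmy hy
    have h3 := hg x m y hx hxm hmy
    have hK0 : 0 ≤ K := (abs_nonneg _).trans (hK x hx (hxy.trans hy))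
    rw [← integral_add_adjacent_intervals (hFc.intervalIntegrable x m)
      (hFc.intervalIntegrable m y)]
    have e1 : K * (m - x) / 2 ^ n = K * (y - x) / 2 ^ (n+1) := by
      rw [hm, pow_succ]; field_simp; ring
    have e2 : K * (y - m) / 2 ^ n = K * (y - x) / 2 ^ (n+1) := by
      rw [hm, pow_succ]; field_simp; ring
    rw [e1] at h1
    rw [e2] at h2
    have h0 : 0 ≤ K * (y - x) / 2 ^ (n+1) :=
      div_nonneg (mul_nonneg hK0 (sub_nonneg.2 hxy)) (by positivity)
    refine le_trans (le_trans (le_of_eq ?_) ((norm_add_le _ _).trans (add_le_add h1 h2))) ?_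
    · congr 1; ring
    · rw [← add_mul]
      exact mul_le_mul_of_nonneg_right h3 (by linarith)

lemma osc_tail (f φ : ℝ → ℝ) (hf : Continuous f) (hφ : ContDiff ℝ 1 φ) (R₀ : ℝ)
    (hne : ∀ t, R₀ ≤ t → deriv φ t ≠ 0)
    (hmono : MonotoneOn (fun t => f t / deriv φ t) (Set.Ici R₀) ∨
      AntitoneOn (fun t => f t / deriv φ t) (Set.Ici R₀))
    (hlim : Tendsto (fun t => f t / deriv φ t) atTop (nhds 0)) :
    ∃ L : ℂ, Tendsto (fun R : ℝ =>
        ∫ t in (0 : ℝ)..R, (f t : ℂ) * Complex.exp (Complex.I * (φ t : ℂ)))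
      atTop (nhds L) := by
  have hφc : Continuous φ := hφ.continuous
  have hφ' : Continuous (deriv φ) := hφ.continuous_deriv le_rfl
  have hFc : Continuous fun t => (f t : ℂ) * Complex.exp (Complex.I * (φ t : ℂ)) := by fun_prop
  have hexp : ∀ t, ‖Complex.exp (Complex.I * (φ t : ℂ))‖ = 1 := fun t => by
    rw [mul_comm]; exact Complex.norm_exp_ofReal_mul_I _
  set g : ℝ → ℝ := fun t => f t / deriv φ t with hgdef
  have hfg : ∀ t, R₀ ≤ t → f t = g t * deriv φ t := fun t ht =>
    (div_mul_cancel₀ _ (hne t ht)).symm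
  have hg : ∀ x t y, R₀ ≤ x → x ≤ t → t ≤ y →
      |g x - g t| + |g t - g y| ≤ |g x - g y| := by
    intro x t y hx hxt hty
    have ht := hx.trans hxt
    have hy := ht.trans hty
    rcases hmono with h | h
    · have h1 := h hx ht hxt
      have h2 := h ht hy hty
      change g x ≤ g t at h1
      change g t ≤ g y at h2
      rw [abs_of_nonpos (by linarith), abs_of_nonpos (by linarith), abs_of_nonpos (by linarith)]
      linarith
    · have h1 := h hx ht hxt
      have h2 := h ht hy hty
      change g t ≤ g x at h1
      change g y ≤ g t at h2
      rw [abs_of_nonneg (by linarith), abs_of_nonneg (by linarith), abs_of_nonneg (by linarith)]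
      linarith
  set D : ℝ → ℂ := fun R => (∫ t in (0 : ℝ)..R, (f t : ℂ) * Complex.exp (Complex.I * (φ t : ℂ)))
    - g R * (-Complex.I * Complex.exp (Complex.I * (φ R : ℂ))) with hD
  have key : ∀ x y, R₀ ≤ x → x ≤ y → ‖D y - D x‖ ≤ |g x - g y| := by
    intro x y hx hxy
    obtain ⟨K, hK⟩ := (isCompact_Icc (a := R₀) (b := y)).exists_bound_of_continuousOn
      hφ'.continuousOn
    have hb := fun n => osc_step f φ g hf hφ R₀ y K hfg hg (fun t h1 h2 => hK t ⟨h1, h2⟩) n x y hx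
      hxy le_rfl
    have hl : Tendsto (fun n : ℕ => |g x - g y| * (1 + K * (y - x) / 2 ^ n)) atTop
        (nhds (|g x - g y| * (1 + 0))) := by
      refine (tendsto_const_nhds.add ?_).const_mul _
      exact tendsto_const_nhds.div_atTop (tendsto_pow_atTop_atTop_of_one_lt one_lt_two)
    have := ge_of_tendsto' hl hb
    rw [add_zero, mul_one] at this
    refine le_trans (le_of_eq ?_) this
    have e := integral_add_adjacent_intervals (hFc.intervalIntegrable 0 x)
      (hFc.intervalIntegrable (μ := MeasureTheory.volume) x y)
    simp only [hD]
    rw [← e]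
    congr 1; ring
  have hC : CauchySeq D := by
    have hgC := hlim.cauchySeq
    rw [Metric.cauchySeq_iff'] at hgC ⊢
    intro ε hε
    obtain ⟨N, hN⟩ := hgC ε hε
    obtain ⟨N, hN⟩ := Metric.cauchySeq_iff.1 hlim.cauchySeq ε hε
    refine ⟨max N R₀, fun n hn => ?_⟩
    rw [dist_eq_norm]
    refine (key _ _ (le_max_right _ _) hn).trans_lt ?_
    exact hN _ (le_max_left _ _) _ ((le_max_left _ _).trans hn)
  obtain ⟨L, hL⟩ := cauchySeq_tendsto_of_complete hC
  refine ⟨L, ?_⟩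
  have hz : Tendsto (fun R => (g R : ℂ) * (-Complex.I * Complex.exp (Complex.I * (φ R : ℂ))))
      atTop (nhds 0) := by
    rw [tendsto_zero_iff_norm_tendsto_zero]
    have : ∀ R, ‖(g R : ℂ) * (-Complex.I * Complex.exp (Complex.I * (φ R : ℂ)))‖ = ‖g R‖ := by
      intro R
      rw [norm_mul, norm_mul, hexp, norm_neg, Complex.norm_I, Complex.norm_real]; ring
    simp only [this]
    exact tendsto_zero_iff_norm_tendsto_zero.1 hlim
  have := hL.add hz
  simpa [hD] using this

/-- **Convergence of oscillatory improper integrals.** If `f, φ : ℝ → ℝ` are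
`C¹`, `φ'` has finitely many zeros, `f/φ'` is monotone on `[R₀, ∞)` and on `(-∞, -R₀]`
(where `φ' ≠ 0` off `(-R₀, R₀)`) and tends to `0` at `±∞`, then the improper integral
`∫_ℝ f(t) e^{iφ(t)} dt` converges. -/
theorem stmt_8 (f φ : ℝ → ℝ) (hf : ContDiff ℝ 1 f) (hφ : ContDiff ℝ 1 φ)
    (hzeros : {t : ℝ | deriv φ t = 0}.Finite)
    (R₀ : ℝ) (hR₀ : 0 < R₀)
    (hne : ∀ t : ℝ, R₀ ≤ |t| → deriv φ t ≠ 0)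
    (hmono_pos : MonotoneOn (fun t => f t / deriv φ t) (Set.Ici R₀) ∨
      AntitoneOn (fun t => f t / deriv φ t) (Set.Ici R₀))
    (hmono_neg : MonotoneOn (fun t => f t / deriv φ t) (Set.Iic (-R₀)) ∨
      AntitoneOn (fun t => f t / deriv φ t) (Set.Iic (-R₀)))
    (hlim_pos : Tendsto (fun t => f t / deriv φ t) atTop (nhds 0))
    (hlim_neg : Tendsto (fun t => f t / deriv φ t) atBot (nhds 0)) :
    (∃ L : ℂ, Tendsto (fun R : ℝ =>
        ∫ t in (0 : ℝ)..R, (f t : ℂ) * Complex.exp (Complex.I * (φ t : ℂ)))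
      atTop (nhds L)) ∧
    (∃ L : ℂ, Tendsto (fun R : ℝ =>
        ∫ t in (-R)..(0 : ℝ), (f t : ℂ) * Complex.exp (Complex.I * (φ t : ℂ)))
      atTop (nhds L)) := by
  refine ⟨osc_tail f φ hf.continuous hφ R₀ (fun t ht => hne t (ht.trans (le_abs_self t)))
    hmono_pos hlim_pos, ?_⟩
  have hd : ∀ t, deriv (fun t => φ (-t)) t = -deriv φ (-t) := fun t => deriv_comp_neg φ t
  have hq : (fun t => f (-t) / deriv (fun t => φ (-t)) t) =
      fun t => -((fun t => f t / deriv φ t) (-t)) := by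
    funext t
    rw [hd, div_neg]
  obtain ⟨L, hL⟩ := osc_tail (fun t => f (-t)) (fun t => φ (-t))
    (hf.continuous.comp continuous_neg) (hφ.comp contDiff_neg) R₀
    (fun t ht => by
      rw [hd]
      exact neg_ne_zero.2 (hne _ (by rw [abs_neg]; exact ht.trans (le_abs_self t))))
    (by
      rw [hq]
      rcases hmono_neg with h | h
      · left
        intro x hx y hy hxy
        exact neg_le_neg (h (Set.mem_Iic.2 (neg_le_neg hy)) (Set.mem_Iic.2 (neg_le_neg hx)) (neg_le_neg hxy))
      · right
        intro x hx y hy hxy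
        exact neg_le_neg (h (Set.mem_Iic.2 (neg_le_neg hy)) (Set.mem_Iic.2 (neg_le_neg hx)) (neg_le_neg hxy)))
    (by
      rw [hq]
      simpa using (hlim_neg.comp tendsto_neg_atTop_atBot).neg)
  refine ⟨L, hL.congr fun R => ?_⟩
  have := integral_comp_neg (a := 0) (b := R)
    (fun t => (f t : ℂ) * Complex.exp (Complex.I * (φ t : ℂ)))
  simpa using this
end

section
/- For every ξ ∈ ℝ, the improper integral ∫_ℝ e^{it²} e^{−2πiξt} dt converges and its value is √π · e^{iπ/4} · e^{−i π² ξ²}. -/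
open Filter Real intervalIntegral

lemma aux_line (G : ℂ → ℂ) (hG : ∀ z, HasDerivAt G (Complex.exp (Complex.I * z ^ 2)) z)
    (p v : ℂ) (a b : ℝ) :
    ∫ t in a..b, v * Complex.exp (Complex.I * (p + v * (t : ℂ)) ^ 2)
      = G (p + v * (b : ℂ)) - G (p + v * (a : ℂ)) := by
  have h := integral_eq_sub_of_hasDerivAt (a := a) (b := b)
    (f := fun t : ℝ => G (p + v * (t : ℂ)))
    (f' := fun t : ℝ => v * Complex.exp (Complex.I * (p + v * (t : ℂ)) ^ 2)) ?_ ?_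
  · exact h
  · intro x _
    have h1 : HasDerivAt (fun z : ℂ => p + v * z) v (x : ℂ) := by
      simpa using ((hasDerivAt_id (x : ℂ)).const_mul v).const_add p
    have h2 := ((hG (p + v * (x : ℂ))).comp (x : ℂ) h1).comp_ofReal
    rw [mul_comm] at h2
    exact h2
  · apply Continuous.intervalIntegrable
    fun_prop

lemma aux_side (G : ℂ → ℂ) (hG : ∀ z, HasDerivAt G (Complex.exp (Complex.I * z ^ 2)) z) :
    Tendsto (fun R : ℝ => G ((R : ℂ) + Complex.I * (R : ℂ)) - G (R : ℂ)) atTop (nhds 0) := by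
  have hlim : Tendsto (fun R : ℝ => (2 * R)⁻¹) atTop (nhds 0) :=
    tendsto_inv_atTop_zero.comp (tendsto_id.const_mul_atTop (by norm_num : (0:ℝ) < 2))
  refine squeeze_zero_norm' ?_ hlim
  filter_upwards [eventually_gt_atTop 0] with R hR
  have h := aux_line G hG (R : ℂ) Complex.I 0 R
  simp only [Complex.ofReal_zero, mul_zero, add_zero] at h
  rw [← h]
  have hb : ‖∫ t in (0:ℝ)..R, Complex.I * Complex.exp (Complex.I * ((R : ℂ) + Complex.I * (t : ℂ)) ^ 2)‖
      ≤ ∫ t in (0:ℝ)..R, Real.exp (-(2 * R) * t) := by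
    apply intervalIntegral.norm_integral_le_of_norm_le hR.le
    · refine Filter.Eventually.of_forall fun t _ => ?_
      rw [norm_mul, Complex.norm_I, one_mul, Complex.norm_exp]
      apply le_of_eq
      congr 1
      simp [pow_two]
      ring
    · apply Continuous.intervalIntegrable
      fun_prop
  refine hb.trans ?_
  have hd : ∫ t in (0:ℝ)..R, Real.exp (-(2 * R) * t)
      = (fun t : ℝ => -(2 * R)⁻¹ * Real.exp (-(2 * R) * t)) R
        - (fun t : ℝ => -(2 * R)⁻¹ * Real.exp (-(2 * R) * t)) 0 := by
    apply integral_eq_sub_of_hasDerivAt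
      (f := fun t : ℝ => -(2 * R)⁻¹ * Real.exp (-(2 * R) * t))
    · intro x _
      have h1 := (((hasDerivAt_id x).const_mul (-(2 * R))).exp).const_mul (-(2 * R)⁻¹)
      refine h1.congr_deriv ?_
      simp only [id, mul_one]
      field_simp
    · apply Continuous.intervalIntegrable
      fun_prop
  rw [hd]
  simp only [mul_zero, Real.exp_zero]
  have : 0 < (2 * R)⁻¹ * Real.exp (-(2 * R) * R) := by positivity
  linarith

lemma aux_diag (G : ℂ → ℂ) (hG : ∀ z, HasDerivAt G (Complex.exp (Complex.I * z ^ 2)) z)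
    (h0 : G 0 = 0) :
    Tendsto (fun R : ℝ => G ((R : ℂ) + Complex.I * (R : ℂ))) atTop
      (nhds ((1 + Complex.I) * ((√(π / 2) / 2 : ℝ) : ℂ))) := by
  have hT : Tendsto (fun R : ℝ => ∫ t in (0:ℝ)..R, Real.exp (-2 * t ^ 2)) atTop
      (nhds (√(π / 2) / 2)) := by
    rw [← integral_gaussian_Ioi 2]
    exact MeasureTheory.intervalIntegral_tendsto_integral_Ioi 0
      (integrable_exp_neg_mul_sq (by norm_num)).integrableOn tendsto_id
  have hT2 := ((Complex.continuous_ofReal.tendsto _).comp hT).const_mul (1 + Complex.I)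
  refine hT2.congr fun R => ?_
  have h := aux_line G hG 0 (1 + Complex.I) 0 R
  simp only [Complex.ofReal_zero, mul_zero, add_zero, zero_add, h0, sub_zero] at h
  have e : (R : ℂ) + Complex.I * (R : ℂ) = (1 + Complex.I) * (R : ℂ) := by ring
  rw [e, ← h, intervalIntegral.integral_const_mul]
  simp only [Function.comp]
  rw [← intervalIntegral.integral_ofReal]
  congr 2
  ext t
  push_cast
  congr 1
  linear_combination (-(t:ℂ)^2 * (2 + Complex.I)) * Complex.I_sq

lemma aux_const_s9 : (1 + Complex.I) * ((√(π / 2) / 2 : ℝ) : ℂ)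
    = (Real.sqrt π : ℂ) * Complex.exp (Complex.I * (π : ℂ) / 4) / 2 := by
  have e : Complex.I * (π : ℂ) / 4 = ((π / 4 : ℝ) : ℂ) * Complex.I := by push_cast; ring
  rw [e, Complex.exp_mul_I, ← Complex.ofReal_cos, ← Complex.ofReal_sin, Real.cos_pi_div_four,
    Real.sin_pi_div_four]
  have : √(π / 2) = √π * (√2 / 2) := by
    rw [Real.sqrt_div pi_pos.le]
    have : √2 * √2 = 2 := Real.mul_self_sqrt (by norm_num)
    field_simp
    linarith
  rw [this]
  push_cast
  ring

/-- **Fresnel-type integral.** For every `ξ ∈ ℝ`, the improper integral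
`∫_ℝ e^{it²} e^{-2πiξt} dt` converges and equals `√π e^{iπ/4} e^{-iπ²ξ²}`. -/
theorem stmt_9 (ξ : ℝ) :
    ∃ L₁ L₂ : ℂ,
      Tendsto (fun R : ℝ => ∫ t in (0 : ℝ)..R,
          Complex.exp (Complex.I * (t : ℂ) ^ 2) *
            Complex.exp (-2 * (π : ℂ) * Complex.I * (ξ : ℂ) * (t : ℂ)))
        atTop (nhds L₁) ∧
      Tendsto (fun R : ℝ => ∫ t in (-R)..(0 : ℝ),
          Complex.exp (Complex.I * (t : ℂ) ^ 2) *
            Complex.exp (-2 * (π : ℂ) * Complex.I * (ξ : ℂ) * (t : ℂ)))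
        atTop (nhds L₂) ∧
      L₁ + L₂ = (Real.sqrt π : ℂ) * Complex.exp (Complex.I * (π : ℂ) / 4) *
        Complex.exp (-Complex.I * (π : ℂ) ^ 2 * (ξ : ℂ) ^ 2) := by
  obtain ⟨G, hG'⟩ := (show Differentiable ℂ (fun z : ℂ => Complex.exp (Complex.I * z ^ 2)) by
    fun_prop).isExactOn_univ.with_val_at 0 0
  have h0 : G 0 = 0 := by simpa using hG'.1
  have hG : ∀ z, HasDerivAt G (Complex.exp (Complex.I * z ^ 2)) z := fun z => by
    simpa using hG'.2 z (Set.mem_univ z)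
  set K : ℂ := (1 + Complex.I) * ((√(π / 2) / 2 : ℝ) : ℂ) with hK
  have hlim : Tendsto (fun R : ℝ => G (R : ℂ)) atTop (nhds K) := by
    have := (aux_diag G hG h0).sub (aux_side G hG)
    simp only [sub_sub_cancel, sub_zero] at this
    exact this
  have hodd : ∀ x : ℝ, G (-(x : ℂ)) = - G (x : ℂ) := by
    intro x
    have h1 := aux_line G hG 0 1 0 x
    have h2 := aux_line G hG 0 (-1) 0 x
    simp only [h0, zero_add, one_mul, neg_mul, neg_sq, Complex.ofReal_zero, neg_zero, sub_zero,
      intervalIntegral.integral_neg] at h1 h2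
    rw [← h1, ← h2]
  set c : ℂ := Complex.exp (-Complex.I * (π : ℂ) ^ 2 * (ξ : ℂ) ^ 2) with hc
  have key : ∀ a b : ℝ, ∫ t in a..b, Complex.exp (Complex.I * (t : ℂ) ^ 2) *
            Complex.exp (-2 * (π : ℂ) * Complex.I * (ξ : ℂ) * (t : ℂ))
      = c * (G ((b - π * ξ : ℝ) : ℂ) - G ((a - π * ξ : ℝ) : ℂ)) := by
    intro a b
    have h1 := aux_line G hG (-(π * ξ : ℂ)) 1 a b
    have e : ∀ x : ℝ, ((x - π * ξ : ℝ) : ℂ) = -(π * ξ : ℂ) + 1 * x := by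
      intro x; push_cast; ring
    rw [e, e, ← h1, ← intervalIntegral.integral_const_mul]
    congr 1
    ext t
    rw [hc, one_mul, ← Complex.exp_add, ← Complex.exp_add]
    congr 1
    ring
  refine ⟨c * (K - G ((0 - π * ξ : ℝ) : ℂ)), c * (G ((0 - π * ξ : ℝ) : ℂ) + K), ?_, ?_, ?_⟩
  · simp only [key]
    refine ((Tendsto.sub_const ?_ _)).const_mul c
    exact hlim.comp (tendsto_atTop_add_const_right _ (-(π * ξ)) tendsto_id)
  · simp only [key]
    refine Tendsto.const_mul c ?_
    have := (hlim.comp (tendsto_atTop_add_const_right _ (π * ξ) tendsto_id)).const_add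
      (G ((0 - π * ξ : ℝ) : ℂ))
    refine this.congr fun R => ?_
    have e : ((-R - π * ξ : ℝ) : ℂ) = -((R + π * ξ : ℝ) : ℂ) := by push_cast; ring
    rw [e, hodd]
    simp
  · have := aux_const_s9
    rw [← hK] at this
    linear_combination (2 * c) * this
end

section
/- Let f : ℝ → ℂ be defined by f(t) = t·e^{i t⁴/4}. For every ξ ∈ ℝ the improper integral h(ξ) := ∫_ℝ f(t) e^{−iξt} dt converges, and for each sign σ ∈ {1, −1} one has h(ξ) − σ·√(2π/3) · e^{iπ/4} · e^{−(3i/4)·|ξ|^{4/3}} → 0 as ξ → σ·∞. In particular, |h(ξ)| → √(2π/3) as |ξ| → ∞, so h does not tend to 0 at ±∞. -/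
open Filter Real intervalIntegral

noncomputable def Fz (l : ℝ) (z : ℂ) : ℂ :=
  z * Complex.exp (Complex.I * (z ^ 4 / 4 - (l : ℂ) ^ 3 * z))

lemma Fz_neg (l : ℝ) (z : ℂ) : Fz (-l) (-z) = - Fz l z := by
  unfold Fz
  push_cast
  rw [neg_mul]
  congr 3
  ring

lemma Fz_diff (l : ℝ) : Differentiable ℂ (Fz l) := by
  unfold Fz
  fun_prop

lemma Fz_norm (l x y : ℝ) : ‖Fz l (x + y * Complex.I)‖ =
    ‖(x + y * Complex.I : ℂ)‖ * Real.exp (-(y * (x ^ 3 - x * y ^ 2 - l ^ 3))) := by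
  unfold Fz
  rw [norm_mul, Complex.norm_exp]
  congr 2
  have : Complex.I * (((x : ℂ) + y * Complex.I) ^ 4 / 4 - (l : ℂ) ^ 3 * (x + y * Complex.I)) =
      ((-(y * (x ^ 3 - x * y ^ 2 - l ^ 3)) : ℝ) : ℂ) +
      (((x ^ 4 - 6 * x ^ 2 * y ^ 2 + y ^ 4) / 4 - l ^ 3 * x : ℝ) : ℂ) * Complex.I := by
    push_cast
    ring_nf
    simp only [show Complex.I ^ 5 = Complex.I by rw [show (5:ℕ) = 4 + 1 from rfl, pow_succ]; simp, Complex.I_pow_four, Complex.I_pow_three, Complex.I_sq]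
    ring
  rw [this]
  simp only [Complex.add_re, Complex.ofReal_re, Complex.re_ofReal_mul, Complex.I_re, mul_zero,
    add_zero]

lemma vert (l : ℝ) (G : ℂ → ℂ) (hG : ∀ z, HasDerivAt G (Fz l z) z) :
    Tendsto (fun R : ℝ => G (R + ((R - l) / 2 : ℝ) * Complex.I) - G R) atTop (nhds 0) := by
  have h0 : Tendsto (fun R : ℝ => 8 / R ^ 2) atTop (nhds 0) :=
    tendsto_const_nhds.div_atTop (tendsto_pow_atTop (by norm_num))
  refine squeeze_zero_norm' ?_ h0
  filter_upwards [eventually_ge_atTop (1 + 3 * |l|)] with R hR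
  have hl1 := neg_abs_le l
  have hl2 := le_abs_self l
  have hl0 := abs_nonneg l
  have hR1 : 1 ≤ R := by linarith
  have hRp : 0 < R := by linarith
  have hl3 : l ^ 3 ≤ R ^ 3 / 27 := by
    have : l ^ 3 ≤ (R / 3) ^ 3 := by
      apply (Odd.strictMono_pow (by decide : Odd 3)).monotone
      linarith
    nlinarith
  have hb : 0 ≤ (R - l) / 2 := by linarith
  have key := image_norm_le_of_norm_deriv_right_le_deriv_boundary (a := 0) (b := (R - l) / 2)
    (f := fun y : ℝ => G (R + y * Complex.I) - G R)
    (f' := fun y : ℝ => Fz l (R + y * Complex.I) * Complex.I)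
    (B := fun y => 8 / R ^ 2 * (1 - Real.exp (-(R ^ 3 / 4) * y)))
    (B' := fun y => 2 * R * Real.exp (-(R ^ 3 / 4) * y)) ?_ ?_ ?_ ?_ ?_ (Set.right_mem_Icc.2 hb)
  · refine key.trans ?_
    have : 0 ≤ 8 / R ^ 2 := by positivity
    have := Real.exp_pos (-(R ^ 3 / 4) * ((R - l) / 2))
    nlinarith
  · have : Continuous G := continuous_iff_continuousAt.2 fun z => (hG z).continuousAt
    fun_prop
  · intro y _
    apply HasDerivAt.hasDerivWithinAt
    apply HasDerivAt.sub_const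
    have h1 : HasDerivAt (fun y : ℝ => (R : ℂ) + y * Complex.I) (Complex.I) y := by
      simpa using ((Complex.ofRealCLM.hasDerivAt (x := y)).mul_const Complex.I).const_add (R : ℂ)
    exact (hG _).comp y h1
  · simp
  · intro y
    have h1 : HasDerivAt (fun y : ℝ => -(R ^ 3 / 4) * y) (-(R ^ 3 / 4)) y := by
      simpa using (hasDerivAt_id y).const_mul (-(R ^ 3 / 4))
    have h2 := (h1.exp.const_sub 1).const_mul (8 / R ^ 2)
    refine h2.congr_deriv ?_
    field_simp
    ring
  · rintro y ⟨hy0, hy1⟩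
    rw [norm_mul, Complex.norm_I, mul_one, Fz_norm]
    have hy2 : y ≤ 2 / 3 * R := by linarith
    gcongr
    · refine (norm_add_le _ _).trans ?_
      rw [norm_mul, Complex.norm_I, Complex.norm_real, Complex.norm_real, Real.norm_eq_abs,
        Real.norm_eq_abs, abs_of_pos hRp, abs_of_nonneg hy0]
      linarith
    · have h4 : y ^ 2 ≤ 4 / 9 * R ^ 2 := by nlinarith
      have h5 : R * y ^ 2 ≤ 4 / 9 * R ^ 3 := by nlinarith
      have h6 : R ^ 3 / 4 ≤ R ^ 3 - R * y ^ 2 - l ^ 3 := by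
        have : 0 < R ^ 3 := by positivity
        nlinarith
      nlinarith

noncomputable def Kz (l x : ℝ) : ℂ := Fz l (l + (2 + Complex.I) * x) * (2 + Complex.I)

lemma Kz_neg (l x : ℝ) : Kz (-l) (-x) = - Kz l x := by
  unfold Kz
  rw [← neg_mul, ← Fz_neg]
  congr 2
  push_cast
  ring

lemma Kz_cont (l : ℝ) : Continuous (Kz l) := by
  unfold Kz
  have := (Fz_diff l).continuous
  fun_prop

lemma norm21 : ‖(2 + Complex.I : ℂ)‖ ≤ 3 := by
  refine (norm_add_le _ _).trans ?_
  simp; norm_num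

lemma Kz_bound (l x : ℝ) : ‖Kz l x‖ ≤
    3 * (|l| + 3 * |x|) * Real.exp (-(x ^ 2 * (l ^ 2 + x ^ 2) / 2)) := by
  unfold Kz
  have h : (l : ℂ) + (2 + Complex.I) * x = ((l + 2 * x : ℝ) : ℂ) + x * Complex.I := by
    push_cast; ring
  have h2 : ‖(l : ℂ) + (2 + Complex.I) * x‖ ≤ |l| + 3 * |x| := by
    refine (norm_add_le _ _).trans ?_
    rw [norm_mul, Complex.norm_real, Complex.norm_real, Real.norm_eq_abs, Real.norm_eq_abs]
    gcongr
    exact norm21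
  rw [norm_mul, h, Fz_norm, ← h, mul_comm]
  rw [mul_assoc 3]
  gcongr
  · exact norm21
  · nlinarith [sq_nonneg (x * (l + x))]

lemma Kz_int (l : ℝ) : MeasureTheory.Integrable (Kz l) := by
  have h1 : MeasureTheory.Integrable (fun x : ℝ =>
      (3 * Real.exp (1 / 2)) * (|l| * Real.exp (-1 * x ^ 2) + 3 * |x * Real.exp (-1 * x ^ 2)|)) :=
    (((integrable_exp_neg_mul_sq one_pos).const_mul _).add
      ((integrable_mul_exp_neg_mul_sq one_pos).abs.const_mul 3)).const_mul _
  refine h1.mono' (Kz_cont l).aestronglyMeasurable (MeasureTheory.ae_of_all _ fun x => ?_)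
  refine (Kz_bound l x).trans ?_
  rw [abs_mul, abs_of_pos (Real.exp_pos _)]
  have : Real.exp (-(x ^ 2 * (l ^ 2 + x ^ 2) / 2)) ≤ Real.exp (1 / 2) * Real.exp (-1 * x ^ 2) := by
    rw [← Real.exp_add]
    gcongr
    nlinarith [sq_nonneg (x ^ 2 - 1), sq_nonneg (x * l)]
  calc _ ≤ 3 * (|l| + 3 * |x|) * (Real.exp (1 / 2) * Real.exp (-1 * x ^ 2)) := by gcongr
    _ = _ := by ring

lemma conv (l : ℝ) : ∃ L₁ L₂ : ℂ,
    Tendsto (fun R : ℝ => ∫ t in (0 : ℝ)..R, Fz l t) atTop (nhds L₁) ∧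
    Tendsto (fun R : ℝ => ∫ t in (-R)..(0 : ℝ), Fz l t) atTop (nhds L₂) ∧
    ∫ x, Kz l x = L₁ + L₂ := by
  obtain ⟨G, hG'⟩ := (Fz_diff l).isExactOn_univ
  have hG : ∀ z, HasDerivAt G (Fz l z) z := fun z => hG' z trivial
  have hFc := (Fz_diff l).continuous
  have hreal : ∀ a b : ℝ, ∫ t in a..b, Fz l t = G b - G a := by
    intro a b
    apply intervalIntegral.integral_eq_sub_of_hasDerivAt (f := fun t : ℝ => G t)
    · intro x _
      exact (hG x).comp_ofReal
    · apply Continuous.intervalIntegrable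
      fun_prop
  have hline : ∀ a b : ℝ, ∫ t in a..b, Kz l t =
      G (l + (2 + Complex.I) * b) - G (l + (2 + Complex.I) * a) := by
    intro a b
    apply intervalIntegral.integral_eq_sub_of_hasDerivAt
      (f := fun t : ℝ => G (l + (2 + Complex.I) * t))
    · intro x _
      have h1 : HasDerivAt (fun x : ℝ => (l : ℂ) + (2 + Complex.I) * x) (2 + Complex.I) x := by
        simpa using ((Complex.ofRealCLM.hasDerivAt (x := x)).const_mul (2 + Complex.I)).const_add
          (l : ℂ)
      exact (hG _).comp x h1
    · exact (Kz_cont l).intervalIntegrable _ _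
  have hGn : ∀ z, HasDerivAt (fun z => G (-z)) (Fz (-l) z) z := by
    intro z
    have := (hG (-z)).comp z (hasDerivAt_neg z)
    refine this.congr_deriv ?_
    rw [mul_neg_one, ← Fz_neg, neg_neg]
  have v1 := vert l G hG
  have v2 := vert (-l) _ hGn
  have t1 : Tendsto (fun R : ℝ => (R - l) / 2) atTop atTop :=
    (tendsto_atTop_add_const_right _ (-l) tendsto_id).atTop_div_const (by norm_num)
  have t2 : Tendsto (fun R : ℝ => -((R + l) / 2)) atTop atBot :=
    tendsto_neg_atTop_atBot.comp
    ((tendsto_atTop_add_const_right _ l tendsto_id).atTop_div_const (by norm_num))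
  have i1 := MeasureTheory.intervalIntegral_tendsto_integral_Ioi 0 (Kz_int l).integrableOn t1
  have i2 := MeasureTheory.intervalIntegral_tendsto_integral_Iic 0 (Kz_int l).integrableOn t2
  refine ⟨(∫ x in Set.Ioi 0, Kz l x) + G l - G 0, (∫ x in Set.Iic 0, Kz l x) - G l + G 0,
    ?_, ?_, ?_⟩
  · have := ((i1.sub v1).add_const (G l)).sub_const (G 0)
    rw [sub_zero] at this
    refine this.congr fun R => ?_
    rw [hreal, hline]
    have : (l : ℂ) + (2 + Complex.I) * (((R - l) / 2 : ℝ) : ℂ) =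
      R + ((R - l) / 2 : ℝ) * Complex.I := by push_cast; ring
    rw [this]
    simp
  · have := ((i2.add v2).sub_const (G l)).add_const (G 0)
    rw [add_zero] at this
    refine this.congr fun R => ?_
    rw [hreal, hline]
    have : (l : ℂ) + (2 + Complex.I) * ((-((R + l) / 2) : ℝ) : ℂ) =
      -(R + ((R - -l) / 2 : ℝ) * Complex.I) := by push_cast; ring
    rw [this]
    simp
    ring
  · have := MeasureTheory.integral_add_compl (measurableSet_Iic (a := (0:ℝ))) (Kz_int l)
    rw [Set.compl_Iic] at this
    rw [← this]; ring

lemma gauss : ∫ x : ℝ, (2 + Complex.I) * Complex.exp (-(6 - 9 / 2 * Complex.I) * (x : ℂ) ^ 2) =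
    (Real.sqrt (2 * π / 3) : ℂ) * Complex.exp (Complex.I * (π : ℂ) / 4) := by
  have h1 : 0 < (6 - 9 / 2 * Complex.I : ℂ).re := by simp
  have hne : (2 + Complex.I : ℂ) ≠ 0 := by
    intro h
    simpa using congrArg Complex.re h
  have hne2 : (6 - 9 / 2 * Complex.I : ℂ) ≠ 0 := by
    intro h
    simpa using congrArg Complex.re h
  rw [MeasureTheory.integral_const_mul, integral_gaussian_complex h1]
  have he2 : Complex.exp (Complex.I * (π : ℂ) / 4) ^ 2 = Complex.I := by
    rw [← Complex.exp_nat_mul]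
    refine Eq.trans ?_ Complex.exp_pi_div_two_mul_I
    congr 1
    push_cast; ring
  have he : Complex.exp (Complex.I * (π : ℂ) / 4) = (Real.sqrt 2 / 2 : ℝ) * (1 + Complex.I) := by
    have : Complex.I * (π : ℂ) / 4 = ((π / 4 : ℝ) : ℂ) * Complex.I := by push_cast; ring
    rw [this, Complex.exp_mul_I, ← Complex.ofReal_cos, ← Complex.ofReal_sin, Real.cos_pi_div_four,
      Real.sin_pi_div_four]
    ring
  have hs2 : (Real.sqrt (2 * π / 3) : ℂ) ^ 2 = 2 * π / 3 := by
    rw [← Complex.ofReal_pow, Real.sq_sqrt (by positivity)]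
    push_cast; ring
  set z : ℂ := (Real.sqrt (2 * π / 3) : ℂ) * Complex.exp (Complex.I * (π : ℂ) / 4) / (2 + Complex.I)
    with hz
  have hzsq : (π : ℂ) / (6 - 9 / 2 * Complex.I) = z ^ 2 := by
    rw [hz, div_pow, mul_pow, he2, hs2]
    rw [div_eq_div_iff hne2 (pow_ne_zero _ hne)]
    ring_nf
    rw [Complex.I_sq]
    ring
  have hz' : z = ((Real.sqrt (2 * π / 3) * (Real.sqrt 2 / 2) / 5 : ℝ) : ℂ) * (3 + Complex.I) := by
    rw [hz, he, div_eq_iff hne]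
    push_cast
    ring_nf
    rw [Complex.I_sq]
    ring
  have hre : 0 < z.re := by
    rw [hz', Complex.re_ofReal_mul]
    have : (3 + Complex.I : ℂ).re = 3 := by simp
    rw [this]
    positivity
  rw [hzsq, one_div, Complex.sq_cpow_two_inv hre, hz]
  field_simp

lemma Kz_scale (l x : ℝ) (hl : 0 < l) : (l⁻¹ : ℂ) * Kz l (l⁻¹ * x) =
    Complex.exp (-(3 * Complex.I / 4) * ((l ^ 4 : ℝ) : ℂ)) * ((2 + Complex.I) *
     (1 + (2 + Complex.I) * x * ((l⁻¹ ^ 2 : ℝ) : ℂ)) *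
     Complex.exp (-(6 - 9 / 2 * Complex.I) * (x : ℂ) ^ 2 +
       Complex.I * ((2 + Complex.I) ^ 3 * x ^ 3 * ((l⁻¹ ^ 2 : ℝ) : ℂ)
         + (2 + Complex.I) ^ 4 * x ^ 4 / 4 * ((l⁻¹ ^ 4 : ℝ) : ℂ)))) := by
  have hl' : (l : ℂ) ≠ 0 := by exact_mod_cast hl.ne'
  unfold Kz Fz
  have e1 : ∀ a b c d e: ℂ, Complex.exp a * (b * c * Complex.exp d) = 
      b * c * Complex.exp (a + d) := by
    intros; rw [Complex.exp_add]; ring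
  rw [e1 _ _ _ _ 0]
  have : Complex.I * (((l : ℂ) + (2 + Complex.I) * ((l⁻¹ * x : ℝ) : ℂ)) ^ 4 / 4 -
      (l : ℂ) ^ 3 * (l + (2 + Complex.I) * ((l⁻¹ * x : ℝ) : ℂ))) = 
      -(3 * Complex.I / 4) * ((l ^ 4 : ℝ) : ℂ) + (-(6 - 9 / 2 * Complex.I) * (x : ℂ) ^ 2 +
       Complex.I * ((2 + Complex.I) ^ 3 * x ^ 3 * ((l⁻¹ ^ 2 : ℝ) : ℂ)
         + (2 + Complex.I) ^ 4 * x ^ 4 / 4 * ((l⁻¹ ^ 4 : ℝ) : ℂ))) := by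
    have : -(6 - 9 / 2 * Complex.I) = Complex.I * (3 / 2) * (2 + Complex.I) ^ 2 := by
      ring_nf
      rw [Complex.I_pow_three, Complex.I_sq]
      ring
    rw [this]
    generalize 2 + Complex.I = w
    push_cast
    field_simp
    ring
  rw [this]
  push_cast
  field_simp

lemma asym : Tendsto (fun l : ℝ => (∫ x, Kz l x) - (Real.sqrt (2 * π / 3) : ℂ) *
          Complex.exp (Complex.I * (π : ℂ) / 4) *
          Complex.exp (-(3 * Complex.I / 4) * ((l ^ 4 : ℝ) : ℂ))) atTop (nhds 0) := by
  set H : ℝ → ℝ → ℂ := fun l x => (2 + Complex.I) *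
     (1 + (2 + Complex.I) * x * ((l⁻¹ ^ 2 : ℝ) : ℂ)) *
     Complex.exp (-(6 - 9 / 2 * Complex.I) * (x : ℂ) ^ 2 +
       Complex.I * ((2 + Complex.I) ^ 3 * x ^ 3 * ((l⁻¹ ^ 2 : ℝ) : ℂ)
         + (2 + Complex.I) ^ 4 * x ^ 4 / 4 * ((l⁻¹ ^ 4 : ℝ) : ℂ))) with hH
  have hnorm : ∀ s : ℝ, ‖Complex.exp (-(3 * Complex.I / 4) * (s : ℂ))‖ = 1 := by
    intro s
    rw [Complex.norm_exp]
    simp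
  have hlim : Tendsto (fun l : ℝ => ∫ x, H l x) atTop
      (nhds ((Real.sqrt (2 * π / 3) : ℂ) * Complex.exp (Complex.I * (π : ℂ) / 4))) := by
    rw [← gauss]
    apply MeasureTheory.tendsto_integral_filter_of_dominated_convergence (fun x : ℝ =>
      3 * (Real.exp (-(1 / 2) * x ^ 2) + 3 * |x * Real.exp (-(1 / 2) * x ^ 2)|))
    · refine Eventually.of_forall fun l => Continuous.aestronglyMeasurable ?_
      rw [hH]
      fun_prop
    · filter_upwards [eventually_ge_atTop 1] with l hl
      refine MeasureTheory.ae_of_all _ fun x => ?_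
      have hl0 : 0 < l := by linarith
      have h1 : ‖H l x‖ = ‖(l⁻¹ : ℂ) * Kz l (l⁻¹ * x)‖ := by
        rw [Kz_scale l x hl0, norm_mul (Complex.exp _), hnorm, one_mul]
      have hli : l⁻¹ ≤ 1 := inv_le_one_of_one_le₀ hl
      rw [h1, norm_mul, norm_inv, Complex.norm_real, Real.norm_eq_abs, abs_of_pos hl0]
      calc l⁻¹ * ‖Kz l (l⁻¹ * x)‖ ≤ l⁻¹ * (3 * (|l| + 3 * |l⁻¹ * x|) *
            Real.exp (-((l⁻¹ * x) ^ 2 * (l ^ 2 + (l⁻¹ * x) ^ 2) / 2))) := by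
              gcongr
              exact Kz_bound _ _
        _ = 3 * (1 + 3 * |x| * (l⁻¹ * l⁻¹)) *
            Real.exp (-((l⁻¹ * x) ^ 2 * (l ^ 2 + (l⁻¹ * x) ^ 2) / 2)) := by
              rw [abs_mul, abs_of_pos hl0, abs_of_pos (inv_pos.2 hl0)]
              field_simp
        _ ≤ 3 * (1 + 3 * |x| * 1) * Real.exp (-(1 / 2) * x ^ 2) := by
              gcongr
              · exact mul_le_one₀ hli (by positivity) hli
              · have : (l⁻¹ * x) ^ 2 * l ^ 2 = x ^ 2 := by field_simp
                nlinarith [sq_nonneg ((l⁻¹ * x) ^ 2)]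
        _ = _ := by
              rw [abs_mul, abs_of_pos (Real.exp_pos _)]
              ring
    · exact (((integrable_exp_neg_mul_sq (by norm_num))).add
        ((integrable_mul_exp_neg_mul_sq (by norm_num)).abs.const_mul 3)).const_mul _
    · refine MeasureTheory.ae_of_all _ fun x => ?_
      have c2 : Tendsto (fun l : ℝ => ((l⁻¹ ^ 2 : ℝ) : ℂ)) atTop (nhds 0) := by
        have := (tendsto_inv_atTop_zero (𝕜 := ℝ)).pow 2
        simpa [Function.comp_def] using (Complex.continuous_ofReal.tendsto _).comp this
      have c4 : Tendsto (fun l : ℝ => ((l⁻¹ ^ 4 : ℝ) : ℂ)) atTop (nhds 0) := by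
        have := (tendsto_inv_atTop_zero (𝕜 := ℝ)).pow 4
        simpa [Function.comp_def] using (Complex.continuous_ofReal.tendsto _).comp this
      have hc : Continuous (fun p : ℂ × ℂ => (2 + Complex.I) *
         (1 + (2 + Complex.I) * x * p.1) *
         Complex.exp (-(6 - 9 / 2 * Complex.I) * (x : ℂ) ^ 2 +
         Complex.I * ((2 + Complex.I) ^ 3 * x ^ 3 * p.1
         + (2 + Complex.I) ^ 4 * x ^ 4 / 4 * p.2))) := by fun_prop
      have := (hc.tendsto (0, 0)).comp (c2.prodMk_nhds c4)
      simpa [hH, Function.comp_def] using this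
  rw [tendsto_zero_iff_norm_tendsto_zero]
  have hlim2 := tendsto_iff_norm_sub_tendsto_zero.1 hlim
  refine hlim2.congr' ?_
  filter_upwards [eventually_gt_atTop 0] with l hl
  have h1 : ∫ x, Kz l x = Complex.exp (-(3 * Complex.I / 4) * ((l ^ 4 : ℝ) : ℂ)) * ∫ x, H l x := by
    rw [← MeasureTheory.integral_const_mul]
    simp_rw [hH, ← Kz_scale l _ hl]
    rw [MeasureTheory.integral_const_mul, MeasureTheory.Measure.integral_comp_inv_mul_left,
      abs_of_pos hl, Complex.real_smul, inv_mul_cancel_left₀ (by exact_mod_cast hl.ne')]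
  rw [h1, mul_comm _ (Complex.exp (-(3 * Complex.I / 4) * ((l ^ 4 : ℝ) : ℂ))), ← mul_sub,
    norm_mul, hnorm, one_mul]

noncomputable def cr (ξ : ℝ) : ℝ := if 0 ≤ ξ then ξ ^ (1 / 3 : ℝ) else -((-ξ) ^ (1 / 3 : ℝ))

lemma rp3 (x : ℝ) (hx : 0 ≤ x) : (x ^ (1 / 3 : ℝ)) ^ 3 = x := by
  rw [← Real.rpow_natCast, ← Real.rpow_mul hx]; norm_num

lemma rp4 (x : ℝ) (hx : 0 ≤ x) : (x ^ (1 / 3 : ℝ)) ^ 4 = x ^ ((4 : ℝ) / 3) := by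
  rw [← Real.rpow_natCast, ← Real.rpow_mul hx]; norm_num

lemma cr3 (ξ : ℝ) : cr ξ ^ 3 = ξ := by
  unfold cr
  split_ifs with h
  · exact rp3 _ h
  · rw [Odd.neg_pow (by decide), rp3 _ (by linarith), neg_neg]

theorem stmt_10 (f : ℝ → ℂ)
    (hf : ∀ t : ℝ, f t = (t : ℂ) * Complex.exp (Complex.I * (t : ℂ) ^ 4 / 4)) :
    ∃ h : ℝ → ℂ,
      (∀ ξ : ℝ, ∃ L₁ L₂ : ℂ,
        Tendsto (fun R : ℝ => ∫ t in (0 : ℝ)..R,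
            f t * Complex.exp (-Complex.I * (ξ : ℂ) * (t : ℂ))) atTop (nhds L₁) ∧
        Tendsto (fun R : ℝ => ∫ t in (-R)..(0 : ℝ),
            f t * Complex.exp (-Complex.I * (ξ : ℂ) * (t : ℂ))) atTop (nhds L₂) ∧
        h ξ = L₁ + L₂) ∧
      Tendsto (fun ξ : ℝ => h ξ - (Real.sqrt (2 * π / 3) : ℂ) *
          Complex.exp (Complex.I * (π : ℂ) / 4) *
          Complex.exp (-(3 * Complex.I / 4) * ((|ξ| ^ ((4 : ℝ) / 3) : ℝ) : ℂ)))
        atTop (nhds 0) ∧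
      Tendsto (fun ξ : ℝ => h ξ - (-1 : ℂ) * (Real.sqrt (2 * π / 3) : ℂ) *
          Complex.exp (Complex.I * (π : ℂ) / 4) *
          Complex.exp (-(3 * Complex.I / 4) * ((|ξ| ^ ((4 : ℝ) / 3) : ℝ) : ℂ)))
        atBot (nhds 0) ∧
      Tendsto (fun ξ : ℝ => ‖h ξ‖) atTop (nhds (Real.sqrt (2 * π / 3))) ∧
      Tendsto (fun ξ : ℝ => ‖h ξ‖) atBot (nhds (Real.sqrt (2 * π / 3))) ∧
      ¬ Tendsto h atTop (nhds 0) ∧ ¬ Tendsto h atBot (nhds 0) := by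
  have hfun : ∀ ξ t : ℝ, f t * Complex.exp (-Complex.I * (ξ : ℂ) * (t : ℂ)) = Fz (cr ξ) t := by
    intro ξ t
    rw [hf, Fz, mul_assoc, ← Complex.exp_add, ← Complex.ofReal_pow (cr ξ), cr3]
    congr 2
    ring
  have hsq : 0 < Real.sqrt (2 * π / 3) := by positivity
  have hcr : Tendsto (fun ξ : ℝ => ξ ^ (1 / 3 : ℝ)) atTop atTop :=
    tendsto_rpow_atTop (by norm_num)
  have A1 : Tendsto (fun ξ : ℝ => (∫ x, Kz (cr ξ) x) - (Real.sqrt (2 * π / 3) : ℂ) *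
          Complex.exp (Complex.I * (π : ℂ) / 4) *
          Complex.exp (-(3 * Complex.I / 4) * ((|ξ| ^ ((4 : ℝ) / 3) : ℝ) : ℂ)))
        atTop (nhds 0) := by
    refine (asym.comp hcr).congr' ?_
    filter_upwards [eventually_ge_atTop 0] with ξ hξ
    simp only [Function.comp_apply]
    rw [rp4 ξ hξ, abs_of_nonneg hξ, cr, if_pos hξ]
  have A2 : Tendsto (fun ξ : ℝ => (∫ x, Kz (cr ξ) x) - (-1 : ℂ) * (Real.sqrt (2 * π / 3) : ℂ) *
          Complex.exp (Complex.I * (π : ℂ) / 4) *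
          Complex.exp (-(3 * Complex.I / 4) * ((|ξ| ^ ((4 : ℝ) / 3) : ℝ) : ℂ)))
        atBot (nhds 0) := by
    have := (A1.comp tendsto_neg_atBot_atTop).neg
    rw [neg_zero] at this
    refine this.congr' ?_
    filter_upwards [eventually_lt_atBot 0] with ξ hξ
    simp only [Function.comp_apply]
    have h1 : cr ξ = - cr (-ξ) := by
      rw [cr, cr, if_neg (by linarith), if_pos (by linarith)]
    have h2 : ∫ x, Kz (cr ξ) x = - ∫ x, Kz (cr (-ξ)) x := by
      rw [h1, ← MeasureTheory.integral_neg, ← MeasureTheory.integral_neg_eq_self]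
      simp_rw [Kz_neg]
    rw [h2, abs_neg]
    ring
  have hn1 : ∀ s : ℝ, ‖Complex.exp (-(3 * Complex.I / 4) * (s : ℂ))‖ = 1 := by
    intro s
    rw [Complex.norm_exp]
    simp
  have hn2 : ‖Complex.exp (Complex.I * (π : ℂ) / 4)‖ = 1 := by
    rw [Complex.norm_exp]
    simp
  have N : ∀ (h a : ℝ → ℂ) (F : Filter ℝ) (c : ℝ), (∀ ξ, ‖a ξ‖ = c) →
      Tendsto (fun ξ => h ξ - a ξ) F (nhds 0) → Tendsto (fun ξ => ‖h ξ‖) F (nhds c) := by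
    intro h a F c ha ht
    rw [tendsto_iff_norm_sub_tendsto_zero]
    refine squeeze_zero (fun _ => norm_nonneg _) (fun ξ => ?_)
      (tendsto_zero_iff_norm_tendsto_zero.1 ht)
    rw [← ha ξ]
    exact abs_norm_sub_norm_le _ _
  have B1 := N _ _ _ (Real.sqrt (2 * π / 3)) (fun ξ => by
    rw [norm_mul, norm_mul, hn1, hn2, Complex.norm_real, Real.norm_of_nonneg hsq.le]; ring) A1
  have B2 := N _ _ _ (Real.sqrt (2 * π / 3)) (fun ξ => by
    rw [norm_mul, norm_mul, norm_mul, hn1, hn2, Complex.norm_real, Real.norm_of_nonneg hsq.le]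
    simp) A2
  refine ⟨fun ξ => ∫ x, Kz (cr ξ) x, fun ξ => ?_, A1, A2, B1, B2, fun h => ?_, fun h => ?_⟩
  · simp_rw [hfun]
    exact conv (cr ξ)
  · exact hsq.ne' (tendsto_nhds_unique B1 (by simpa using h.norm))
  · exact hsq.ne' (tendsto_nhds_unique B2 (by simpa using h.norm))
end

section
/- Let f : ℝ → ℂ be defined by f(t) = t·e^{i t⁴/4}. Then for every x ∈ ℝ the limit L(x) := lim_{R→+∞} ∫_x^R f(t) dt exists in ℂ, and the function g : ℝ → ℂ defined by g(x) = −L(x) is continuous on ℝ and Lebesgue integrable on ℝ. -/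
open Filter MeasureTheory intervalIntegral

/-- For `f(t) = t e^{it⁴/4}`, the improper integral
`L(x) = lim_{R→∞} ∫_x^R f(t) dt` exists for every `x ∈ ℝ`, and `g = -L` is continuous
and Lebesgue integrable on `ℝ`. -/
theorem stmt_11 (f : ℝ → ℂ)
    (hf : ∀ t : ℝ, f t = (t : ℂ) * Complex.exp (Complex.I * (t : ℂ) ^ 4 / 4)) :
    ∃ L : ℝ → ℂ,
      (∀ x : ℝ, Tendsto (fun R : ℝ => ∫ t in x..R, f t) atTop (nhds (L x))) ∧
      Continuous (fun x => -L x) ∧ Integrable (fun x => -L x) := by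
  have hfc : Continuous f := by
    have : f = fun t : ℝ => (t : ℂ) * Complex.exp (Complex.I * (t : ℂ) ^ 4 / 4) := funext hf
    rw [this]; fun_prop
  set e : ℝ → ℂ := fun t => Complex.exp (Complex.I * (t : ℂ) ^ 4 / 4) with he
  have hec : Continuous e := by rw [he]; fun_prop
  have hen : ∀ t, ‖e t‖ = 1 := by
    intro t
    have : Complex.I * (t : ℂ) ^ 4 / 4 = ((t ^ 4 / 4 : ℝ) : ℂ) * Complex.I := by
      push_cast; ring
    simp only [he]; rw [this, Complex.norm_exp_ofReal_mul_I]
  set F : ℝ → ℂ := fun x => ∫ t in (0:ℝ)..x, f t with hF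
  have hFd : ∀ x, HasDerivAt F (f x) x := fun x =>
    integral_hasDerivAt_right (hfc.intervalIntegrable _ _)
      hfc.stronglyMeasurable.stronglyMeasurableAtFilter hfc.continuousAt
  have hFc : Continuous F := continuous_iff_continuousAt.2 fun x => (hFd x).continuousAt
  have hFe : ∀ x, F (-x) = F x := by
    intro x
    have h1 : ∫ t in (0:ℝ)..x, f (-t) = ∫ t in (-x)..(-0), f t := integral_comp_neg f
    have h2 : ∀ t, f (-t) = - f t := by
      intro t; rw [hf, hf]; push_cast
      rw [show (-(t:ℂ))^4 = (t:ℂ)^4 by ring]; ring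
    simp only [h2, intervalIntegral.integral_neg, neg_zero] at h1
    rw [integral_symm (0:ℝ) (-x)] at h1
    exact (neg_injective h1).symm
  set H : ℝ → ℂ := fun t => -Complex.I * e t / (t : ℂ) ^ 2 with hH
  set k : ℝ → ℂ := fun t => -2 * Complex.I * e t / (t : ℂ) ^ 3 with hk
  have hHd : ∀ x : ℝ, 0 < x → HasDerivAt H (f x - k x) x := by
    intro x hx
    have hx' : (x : ℂ) ≠ 0 := by exact_mod_cast hx.ne'
    have h0 : HasDerivAt (fun t : ℝ => (t : ℂ)) 1 x := Complex.ofRealCLM.hasDerivAt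
    have h1 : HasDerivAt e (e x * (Complex.I * (x:ℂ)^3)) x := by
      have := ((((h0.pow 4).const_mul Complex.I).div_const 4)).cexp
      refine this.congr_deriv ?_
      change e x * _ = e x * _
      congr 1
      push_cast
      ring
    have h2 := (h1.const_mul (-Complex.I)).div (h0.pow 2) (pow_ne_zero 2 hx')
    refine h2.congr_deriv ?_
    rw [hf]
    change (-Complex.I * (e x * (Complex.I * (x:ℂ)^3)) * (x:ℂ)^2
      - -Complex.I * e x * (((2:ℕ):ℂ) * (x:ℂ) ^ (2 - 1) * 1)) / ((x:ℂ)^2)^2 =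
      (x:ℂ) * e x - -2 * Complex.I * e x / (x : ℂ) ^ 3
    have hI : -Complex.I * (e x * (Complex.I * (x:ℂ)^3)) = e x * (x:ℂ)^3 := by
      linear_combination (-(e x * (x:ℂ)^3)) * Complex.I_mul_I
    rw [hI]
    push_cast
    field_simp
  have hkn : ∀ t : ℝ, 0 < t → ‖k t‖ = 2 * t ^ (-3 : ℝ) := by
    intro t ht
    have : t ^ (-3 : ℝ) = (t ^ 3)⁻¹ := by
      rw [Real.rpow_neg ht.le]; norm_cast
    simp [hk, hen, this, abs_of_pos ht, div_eq_mul_inv]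
  have hHn : ∀ t : ℝ, 0 < t → ‖H t‖ = t ^ (-2 : ℝ) := by
    intro t ht
    have : t ^ (-2 : ℝ) = (t ^ 2)⁻¹ := by
      rw [Real.rpow_neg ht.le]; norm_cast
    simp [hH, hen, this, div_eq_mul_inv]
  have hki : ∀ a : ℝ, 0 < a → IntegrableOn k (Set.Ioi a) := by
    intro a ha
    refine Integrable.mono' ((integrableOn_Ioi_rpow_of_lt (by norm_num : (-3:ℝ) < -1) ha).const_mul 2) ?_ ?_
    · have : Measurable k := by
        rw [hk]; exact (measurable_const.mul hec.measurable).div (by fun_prop)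
      exact this.aestronglyMeasurable
    · filter_upwards [ae_restrict_mem measurableSet_Ioi] with t ht
      exact (hkn t (ha.trans ht)).le
  have hGd : ∀ x : ℝ, 0 < x → HasDerivAt (fun t => F t - H t) (k x) x := by
    intro x hx
    exact ((hFd x).sub (hHd x hx)).congr_deriv (by ring)
  have hG := tendsto_limUnder_of_hasDerivAt_of_integrableOn_Ioi (a := 1)
    (fun x hx => hGd x (one_pos.trans hx)) (hki 1 one_pos)
  set c := limUnder atTop (fun t => F t - H t)
  have hH0 : Tendsto H atTop (nhds 0) := by
    rw [tendsto_zero_iff_norm_tendsto_zero]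
    refine (tendsto_rpow_neg_atTop (y := 2) (by norm_num)).congr' ?_
    filter_upwards [eventually_gt_atTop 0] with t ht
    exact (hHn t ht).symm
  have hFt : Tendsto F atTop (nhds c) := by
    simpa using hG.add hH0
  have hb : ∀ x : ℝ, 0 < x → ‖c - F x‖ ≤ 2 * x ^ (-2 : ℝ) := by
    intro x hx
    have h1 := integral_Ioi_of_hasDerivAt_of_tendsto' (a := x)
      (fun y hy => hGd y (lt_of_lt_of_le hx hy)) (hki x hx) hG
    have h2 : ‖∫ t in Set.Ioi x, k t‖ ≤ x ^ (-2 : ℝ) := by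
      refine (MeasureTheory.norm_integral_le_integral_norm _).trans ?_
      rw [setIntegral_congr_fun measurableSet_Ioi
        (g := fun t => 2 * t ^ (-3:ℝ)) (fun t ht => hkn t (hx.trans ht))]
      rw [MeasureTheory.integral_const_mul, integral_Ioi_rpow_of_lt (by norm_num) hx]
      norm_num
      linarith
    have h3 : c - F x = (∫ t in Set.Ioi x, k t) - H x := by rw [h1]; ring
    rw [h3]
    have := norm_sub_le (∫ t in Set.Ioi x, k t) (H x)
    rw [hHn x hx] at this
    linarith
  have hgc : Continuous (fun x => -(c - F x)) := by fun_prop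
  refine ⟨fun x => c - F x, ?_, hgc, ?_⟩
  · intro x
    refine (hFt.sub_const (F x)).congr fun R => ?_
    exact integral_interval_sub_left (hfc.intervalIntegrable _ _) (hfc.intervalIntegrable _ _)
  · refine hgc.locallyIntegrable.integrable_of_isBigO_atTop_of_norm_isNegInvariant
      (g := fun x : ℝ => x ^ (-2:ℝ)) ?_ ?_ ?_
    · exact Eventually.of_forall fun x => by simp [hFe]
    · refine Asymptotics.IsBigO.of_bound 2 ?_
      filter_upwards [eventually_gt_atTop 0] with x hx
      rw [norm_neg, Real.norm_of_nonneg (Real.rpow_nonneg hx.le _)]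
      exact hb x hx
    · exact ⟨Set.Ioi 1, Ioi_mem_atTop 1, integrableOn_Ioi_rpow_of_lt (by norm_num) one_pos⟩
end

section
/- Let f : ℝ → ℂ be defined by f(t) = t·e^{i t⁴/4}, and let g : ℝ → ℂ be the function defined by g(x) = −lim_{R→+∞} ∫_x^R f(t) dt (this limit exists for every x, and g is continuous and Lebesgue integrable on ℝ). Then for every ξ ∈ ℝ with ξ ≠ 0, the limit lim_{R→+∞} ∫_{−R}^{R} f(t) e^{−2πiξt} dt exists and equals 2πiξ·𝓕[g](ξ); moreover, the Fourier transform 𝓕[g] is not Lebesgue integrable on ℝ. -/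
open Filter MeasureTheory FourierTransform Real intervalIntegral

lemma fence (F F' : ℝ → ℂ) (v v' : ℝ → ℝ) (a b : ℝ) (hab : a ≤ b)
    (hF : ∀ x ∈ Set.Icc a b, HasDerivAt F (F' x) x)
    (hv : ∀ x ∈ Set.Icc a b, HasDerivAt v (v' x) x)
    (hle : ∀ x ∈ Set.Icc a b, ‖F' x‖ ≤ v' x) : ‖F b - F a‖ ≤ v b - v a := by
  refine image_norm_le_of_norm_deriv_right_le_deriv_boundary' (f := fun x => F x - F a) (f' := F')
    (a := a) (b := b) (B := fun x => v x - v a) (B' := v') ?_ ?_ ?_ ?_ ?_ ?_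
    (Set.right_mem_Icc.2 hab)
  · exact fun x hx => ((hF x hx).sub_const _).continuousAt.continuousWithinAt
  · exact fun x hx => ((hF x (Set.Ico_subset_Icc_self hx)).sub_const _).hasDerivWithinAt
  · simp
  · exact fun x hx => ((hv x hx).sub_const _).continuousAt.continuousWithinAt
  · exact fun x hx => ((hv x (Set.Ico_subset_Icc_self hx)).sub_const _).hasDerivWithinAt
  · exact fun x hx => hle x (Set.Ico_subset_Icc_self hx)

/-- oscillating factor -/
noncomputable def osc (θ x : ℝ) : ℂ := Complex.exp (-(Complex.I * ((x ^ 4 / 4 + θ * x : ℝ) : ℂ)))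

lemma osc_norm (θ x : ℝ) : ‖osc θ x‖ = 1 := by
  unfold osc
  rw [Complex.norm_exp]
  rw [Complex.neg_re, Complex.mul_re, Complex.ofReal_re, Complex.ofReal_im]
  simp

lemma osc_deriv (θ x : ℝ) :
    HasDerivAt (osc θ) (osc θ x * (-(Complex.I * ((x ^ 3 + θ : ℝ) : ℂ)))) x := by
  unfold osc
  have h : HasDerivAt (fun x : ℝ => x ^ 4 / 4 + θ * x) (x ^ 3 + θ) x := by
    have := ((hasDerivAt_pow 4 x).div_const 4).add ((hasDerivAt_id x).const_mul θ)
    refine this.congr_deriv ?_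
    simp
  exact ((h.ofReal_comp.const_mul Complex.I).neg).cexp

lemma osc_cont (θ : ℝ) : Continuous (osc θ) :=
  continuous_iff_continuousAt.2 fun x => (osc_deriv θ x).continuousAt

lemma prim_deriv (u : ℝ → ℂ) (hu : Continuous u) (a x : ℝ) :
    HasDerivAt (fun x => ∫ t in a..x, u t) (u x) x :=
  integral_hasDerivAt_right (hu.intervalIntegrable _ _)
    hu.stronglyMeasurable.stronglyMeasurableAtFilter hu.continuousAt

lemma int_cont (θ : ℝ) : Continuous (fun t : ℝ => (t : ℂ) * osc θ t) :=
  Complex.continuous_ofReal.mul (osc_cont θ)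

lemma vdc_base (θ a b : ℝ) (hab : a ≤ b) (v v' : ℝ → ℝ)
    (hne : ∀ x ∈ Set.Icc a b, x ^ 3 + θ ≠ 0)
    (hv : ∀ x ∈ Set.Icc a b, HasDerivAt v (v' x) x)
    (hle : ∀ x ∈ Set.Icc a b, |(θ - 2 * x ^ 3) / (x ^ 3 + θ) ^ 2| ≤ v' x) :
    ‖∫ t in a..b, (t : ℂ) * osc θ t‖ ≤
      |a / (a ^ 3 + θ)| + |b / (b ^ 3 + θ)| + (v b - v a) := by
  have hw : ∀ x ∈ Set.Icc a b, HasDerivAt (fun x : ℝ => x / (x ^ 3 + θ))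
      ((θ - 2 * x ^ 3) / (x ^ 3 + θ) ^ 2) x := by
    intro x hx
    have := (hasDerivAt_id x).div ((hasDerivAt_pow 3 x).add_const θ) (hne x hx)
    refine this.congr_deriv ?_
    simp; ring
  have key := fence (fun x => (∫ t in a..x, (t : ℂ) * osc θ t)
      - Complex.I * ((x / (x ^ 3 + θ) : ℝ) : ℂ) * osc θ x)
    (fun x => - (Complex.I * (((θ - 2 * x ^ 3) / (x ^ 3 + θ) ^ 2 : ℝ) : ℂ) * osc θ x)) v v' a b hab
    ?_ hv ?_
  · simp only [integral_same] at key
    set J := ∫ t in a..b, (t : ℂ) * osc θ t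
    set A := Complex.I * ((a / (a ^ 3 + θ) : ℝ) : ℂ) * osc θ a with hA
    set B := Complex.I * ((b / (b ^ 3 + θ) : ℝ) : ℂ) * osc θ b with hB
    have nA : ‖A‖ = |a / (a ^ 3 + θ)| := by
      rw [hA, norm_mul, norm_mul, osc_norm, Complex.norm_I, Complex.norm_real, Real.norm_eq_abs]; ring
    have nB : ‖B‖ = |b / (b ^ 3 + θ)| := by
      rw [hB, norm_mul, norm_mul, osc_norm, Complex.norm_I, Complex.norm_real, Real.norm_eq_abs]; ring
    have : J = (J - B - (0 - A)) + B - A := by ring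
    rw [this, ← nA, ← nB]
    have h1 := norm_sub_le ((J - B - (0 - A)) + B) A
    have h2 := norm_add_le (J - B - (0 - A)) B
    linarith
  · intro x hx
    have h1 := (prim_deriv _ (int_cont θ) a x).sub
      ((((hw x hx).ofReal_comp).const_mul Complex.I).mul (osc_deriv θ x))
    refine h1.congr_deriv ?_
    have hc : ((x:ℂ) ^ 3 + (θ:ℂ)) ≠ 0 := by exact_mod_cast hne x hx
    push_cast
    field_simp
    ring_nf
    simp only [Complex.I_sq]
    ring
  · intro x hx
    rw [norm_neg, norm_mul, norm_mul, osc_norm, Complex.norm_I, Complex.norm_real, one_mul, mul_one]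
    exact hle x hx

lemma vdc_pos (θ R : ℝ) (hθ : 0 ≤ θ) (hR : 1 ≤ R) :
    ‖∫ t in (1:ℝ)..R, (t : ℂ) * osc θ t‖ ≤ 3 := by
  have h := vdc_base θ 1 R hR (fun x => -(x ^ 2)⁻¹) (fun x => 2 / x ^ 3) ?_ ?_ ?_
  · have e1 : ∀ x : ℝ, 1 ≤ x → |x / (x ^ 3 + θ)| ≤ 1 := by
      intro x hx
      have : x ≤ x ^ 3 := le_self_pow₀ hx (by norm_num)
      rw [abs_of_nonneg (by positivity), div_le_one (by positivity)]
      linarith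
    have := e1 1 le_rfl
    have := e1 R hR
    have : 0 ≤ (R ^ 2)⁻¹ := by positivity
    simp only [one_pow, inv_one] at *
    linarith
  · intro x hx
    have : 0 < x := by linarith [hx.1]
    positivity
  · intro x hx
    have h0 : 0 < x := by linarith [hx.1]
    have := ((hasDerivAt_pow 2 x).inv (by positivity)).neg
    refine this.congr_deriv ?_
    simp; field_simp
  · intro x hx
    have h0 : 0 < x := by linarith [hx.1]
    rw [abs_div, abs_of_pos (show 0 < (x ^ 3 + θ) ^ 2 by positivity),
      div_le_div_iff₀ (by positivity) (by positivity)]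
    have h3 : 0 < x ^ 3 := by positivity
    have : |θ - 2 * x ^ 3| ≤ 2 * (x ^ 3 + θ) := by
      rw [abs_le]; constructor <;> linarith
    calc |θ - 2 * x ^ 3| * x ^ 3 ≤ 2 * (x ^ 3 + θ) * (x ^ 3 + θ) := by
          gcongr; linarith
      _ = _ := by ring

lemma vdc_neg_away (θ a b : ℝ) (hθ : θ ≤ 0) (ha : 1 ≤ a) (hab : a ≤ b)
    (hx : ∀ x ∈ Set.Icc a b, x ≤ |x ^ 3 + θ|) :
    ‖∫ t in a..b, (t : ℂ) * osc θ t‖ ≤ 4 := by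
  have hne : ∀ x ∈ Set.Icc a b, x ^ 3 + θ ≠ 0 := by
    intro x hx' h0
    have := hx x hx'
    rw [h0, abs_zero] at this
    linarith [hx'.1]
  have h := vdc_base θ a b hab (fun x => -(x / (x ^ 3 + θ)))
    (fun x => -((θ - 2 * x ^ 3) / (x ^ 3 + θ) ^ 2)) hne ?_ ?_
  · have e1 : ∀ x ∈ Set.Icc a b, |x / (x ^ 3 + θ)| ≤ 1 := by
      intro x hx'
      rw [abs_div, abs_of_pos (show 0 < x by linarith [hx'.1])]
      exact div_le_one_of_le₀ (hx x hx') (abs_nonneg _)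
    have h1 := e1 a (Set.left_mem_Icc.2 hab)
    have h2 := e1 b (Set.right_mem_Icc.2 hab)
    have h3 := abs_le.1 h1
    have h4 := abs_le.1 h2
    linarith
  · intro x hx
    have := ((hasDerivAt_id x).div ((hasDerivAt_pow 3 x).add_const θ) (hne x hx)).neg
    refine this.congr_deriv ?_
    simp; ring
  · intro x hx
    have h0 : 0 < x := by linarith [hx.1]
    have h3 : 0 < x ^ 3 := by positivity
    rw [abs_of_nonpos]
    exact div_nonpos_of_nonpos_of_nonneg (by linarith) (by positivity)

lemma vdc_mid (θ a b : ℝ) (ha : 0 ≤ a) (hab : a ≤ b) :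
    ‖∫ t in a..b, (t : ℂ) * osc θ t‖ ≤ b ^ 2 / 2 - a ^ 2 / 2 := by
  have key := fence (fun x => (∫ t in a..x, (t : ℂ) * osc θ t)) (fun t => (t : ℂ) * osc θ t)
    (fun x => x ^ 2 / 2) (fun x => x) a b hab (fun x _ => prim_deriv _ (int_cont θ) a x) ?_ ?_
  · simpa using key
  · intro x _
    refine ((hasDerivAt_pow 2 x).div_const 2).congr_deriv ?_
    simp
  · intro x hx
    rw [norm_mul, osc_norm, Complex.norm_real, mul_one, Real.norm_of_nonneg (by linarith [hx.1])]

lemma vdc_neg (s R : ℝ) (hs : 0 ≤ s) (hR : 1 ≤ R) :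
    ‖∫ t in (1:ℝ)..R, (t : ℂ) * osc (-s ^ 3) t‖ ≤ 9 := by
  set U : ℝ → ℝ := fun v => min (R ^ 2) (max 1 v) with hU
  have hR2 : 1 ≤ R ^ 2 := one_le_pow₀ hR
  have U1 : ∀ v, 1 ≤ U v := fun v => le_min hR2 (le_max_left _ _)
  have UR : ∀ v, U v ≤ R ^ 2 := fun v => min_le_left _ _
  set p := √(U (s ^ 2 - 1)) with hp
  set q := √(U (s ^ 2 + 1)) with hq
  have p2 : p ^ 2 = U (s ^ 2 - 1) := Real.sq_sqrt (by linarith [U1 (s ^ 2 - 1)])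
  have q2 : q ^ 2 = U (s ^ 2 + 1) := Real.sq_sqrt (by linarith [U1 (s ^ 2 + 1)])
  have hp1 : 1 ≤ p := Real.one_le_sqrt.2 (U1 _)
  have hpq : p ≤ q := Real.sqrt_le_sqrt (min_le_min le_rfl (max_le_max le_rfl (by linarith)))
  have hqR : q ≤ R := (Real.sqrt_le_left (by linarith)).2 (UR _)
  have hθ : -s ^ 3 ≤ 0 := by have : 0 ≤ s ^ 3 := by positivity
                             linarith
  have split : ∫ t in (1:ℝ)..R, (t : ℂ) * osc (-s ^ 3) t =
      (∫ t in (1:ℝ)..p, (t : ℂ) * osc (-s ^ 3) t) + (∫ t in p..q, (t : ℂ) * osc (-s ^ 3) t)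
      + (∫ t in q..R, (t : ℂ) * osc (-s ^ 3) t) := by
    have hi : ∀ a b, IntervalIntegrable (fun t : ℝ => (t : ℂ) * osc (-s ^ 3) t) volume a b :=
      fun a b => (int_cont _).intervalIntegrable a b
    rw [integral_add_adjacent_intervals (hi _ _) (hi _ _),
      integral_add_adjacent_intervals (hi _ _) (hi _ _)]
  have b1 : ‖∫ t in (1:ℝ)..p, (t : ℂ) * osc (-s ^ 3) t‖ ≤ 4 := by
    rcases eq_or_lt_of_le hp1 with h | h
    · rw [← h]; simp
    · apply vdc_neg_away _ _ _ hθ le_rfl hp1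
      intro x hx
      have hU' : U (s ^ 2 - 1) ≤ s ^ 2 - 1 := by
        have : 1 < U (s ^ 2 - 1) := by rw [← p2]; nlinarith
        have h2 : U (s ^ 2 - 1) ≤ max 1 (s ^ 2 - 1) := min_le_right _ _
        rcases le_total 1 (s ^ 2 - 1) with h3 | h3
        · rwa [max_eq_right h3] at h2
        · rw [max_eq_left h3] at h2; linarith
      have hx0 : 1 ≤ x := hx.1
      have hxs : x ^ 2 ≤ s ^ 2 - 1 := by
        have : x ^ 2 ≤ p ^ 2 := by gcongr; exact hx.2
        linarith
      have hxs' : x ≤ s := by nlinarith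
      have : x ^ 3 + x ≤ s ^ 3 := by nlinarith [mul_le_mul_of_nonneg_left hxs (by linarith : 0 ≤ x), mul_le_mul_of_nonneg_right hxs' (sq_nonneg s)]
      rw [abs_of_nonpos (by linarith)]; linarith
  have b3 : ‖∫ t in q..R, (t : ℂ) * osc (-s ^ 3) t‖ ≤ 4 := by
    rcases eq_or_lt_of_le hqR with h | h
    · rw [← h]; simp
    · apply vdc_neg_away _ _ _ hθ (hp1.trans hpq) hqR
      intro x hx
      have hU' : s ^ 2 + 1 ≤ U (s ^ 2 + 1) := by
        have : U (s ^ 2 + 1) < R ^ 2 := by rw [← q2]; nlinarith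
        rcases min_choice (R ^ 2) (max 1 (s ^ 2 + 1)) with h3 | h3
        · exact absurd h3 (ne_of_lt this)
        · exact (le_max_right _ _).trans h3.ge
      have hx0 : 1 ≤ x := hp1.trans (hpq.trans hx.1)
      have hxs : s ^ 2 + 1 ≤ x ^ 2 := by
        have : q ^ 2 ≤ x ^ 2 := by gcongr; exact hx.1
        linarith
      have hxs' : s ≤ x := by nlinarith
      have : s ^ 3 + x ≤ x ^ 3 := by nlinarith [mul_le_mul_of_nonneg_left hxs (by linarith : 0 ≤ x), mul_le_mul_of_nonneg_right hxs' (sq_nonneg s)]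
      rw [abs_of_nonneg (by linarith)]; linarith
  have b2 : ‖∫ t in p..q, (t : ℂ) * osc (-s ^ 3) t‖ ≤ 1 := by
    refine (vdc_mid _ p q (by linarith) hpq).trans ?_
    rw [p2, q2]
    have : U (s ^ 2 + 1) ≤ U (s ^ 2 - 1) + 2 := by
      simp only [hU]
      rcases le_total (R ^ 2) (max 1 (s ^ 2 - 1)) with h | h
      · rw [min_eq_left h]; linarith [min_le_left (R ^ 2) (max 1 (s ^ 2 + 1))]
      · rw [min_eq_right h]
        refine (min_le_right _ _).trans (max_le ?_ ?_)
        · linarith [le_max_left 1 (s ^ 2 - 1)]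
        · linarith [le_max_right 1 (s ^ 2 - 1)]
    linarith
  rw [split]
  refine (norm_add₃_le).trans ?_
  linarith

lemma vdc (θ R : ℝ) (hR : 1 ≤ R) : ‖∫ t in (1:ℝ)..R, (t : ℂ) * osc θ t‖ ≤ 9 := by
  rcases le_total 0 θ with h | h
  · linarith [vdc_pos θ R h hR]
  · have h0 : 0 ≤ -θ := by linarith
    have := vdc_neg ((-θ) ^ ((3:ℝ)⁻¹)) R (by positivity) hR
    have e : ((-θ) ^ ((3:ℝ)⁻¹)) ^ 3 = -θ := by
      rw [← Real.rpow_natCast, ← Real.rpow_mul h0]; norm_num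
    rw [e, neg_neg] at this
    exact this

/-- conjugate factor -/
noncomputable def ee (x : ℝ) : ℂ := Complex.exp (Complex.I * (x : ℂ) ^ 4 / 4)

lemma ee_norm (x : ℝ) : ‖ee x‖ = 1 := by
  have : Complex.I * (x : ℂ) ^ 4 / 4 = ((x ^ 4 / 4 : ℝ) : ℂ) * Complex.I := by push_cast; ring
  unfold ee
  rw [this, Complex.norm_exp_ofReal_mul_I]

lemma ee_deriv (x : ℝ) : HasDerivAt ee (ee x * (Complex.I * (x : ℂ) ^ 3)) x := by
  unfold ee
  have h : HasDerivAt (fun x : ℝ => (x : ℂ)) 1 x := Complex.ofRealCLM.hasDerivAt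
  have := (((h.pow 4).const_mul Complex.I).div_const 4).cexp
  refine this.congr_deriv ?_
  simp; ring

lemma ee_cont : Continuous ee :=
  continuous_iff_continuousAt.2 fun x => (ee_deriv x).continuousAt

lemma ee_osc (x : ℝ) : ee x * osc 0 x = 1 := by
  unfold ee osc
  rw [← Complex.exp_add, Complex.exp_eq_one_iff]
  exact ⟨0, by push_cast; ring⟩

lemma asym1 (f : ℝ → ℂ) (hf : ∀ t : ℝ, f t = (t : ℂ) * ee t) (hc : Continuous f) (x R : ℝ)
    (hx : 0 < x) (hR : x ≤ R) :
    ‖(∫ t in x..R, f t) - ((-Complex.I / (R : ℂ) ^ 2 - 2 / (R : ℂ) ^ 6) * ee R)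
      + (-Complex.I / (x : ℂ) ^ 2 - 2 / (x : ℂ) ^ 6) * ee x‖ ≤ 2 / x ^ 6 := by
  have key := fence (fun y => (∫ t in x..y, f t) -
      (-Complex.I / (y : ℂ) ^ 2 - 2 / (y : ℂ) ^ 6) * ee y)
    (fun y => -(12 / (y : ℂ) ^ 7 * ee y)) (fun y => -(2 / y ^ 6)) (fun y => 12 / y ^ 7) x R hR
    ?_ ?_ ?_
  · simp only [integral_same] at key
    have : 0 ≤ 2 / R ^ 6 := by have : 0 < R := hx.trans_le hR
                               positivity
    refine le_trans (le_of_eq ?_) (key.trans (by linarith))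
    congr 1; ring
  · intro y hy
    have h0 : 0 < y := hx.trans_le hy.1
    have hy0 : (y : ℂ) ≠ 0 := by exact_mod_cast h0.ne'
    have h : HasDerivAt (fun x : ℝ => (x : ℂ)) 1 y := Complex.ofRealCLM.hasDerivAt
    have h2 := ((hasDerivAt_const y (-Complex.I)).div (h.pow 2) (pow_ne_zero 2 hy0)).sub
      ((hasDerivAt_const y (2:ℂ)).div (h.pow 6) (pow_ne_zero 6 hy0))
    have h1 := (prim_deriv f hc x y).sub (h2.mul (ee_deriv y))
    refine h1.congr_deriv ?_
    rw [hf]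
    simp
    field_simp
    ring_nf
    simp only [Complex.I_sq]
    ring
  · intro y hy
    have h0 : 0 < y := hx.trans_le hy.1
    have := ((hasDerivAt_const y (2:ℝ)).div (hasDerivAt_pow 6 y) (by positivity)).neg
    refine this.congr_deriv ?_
    simp
    field_simp
    norm_num
  · intro y hy
    have h0 : 0 < y := hx.trans_le hy.1
    rw [norm_neg, norm_mul, ee_norm, norm_div, norm_pow, Complex.norm_real,
      Real.norm_of_nonneg h0.le]
    simp

lemma asym2 (f g : ℝ → ℂ) (hf : ∀ t : ℝ, f t = (t : ℂ) * ee t) (hc : Continuous f)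
    (hg : ∀ x : ℝ, Tendsto (fun R : ℝ => ∫ t in x..R, f t) atTop (nhds (-g x))) (x : ℝ)
    (hx : 0 < x) : ‖g x + Complex.I / (x : ℂ) ^ 2 * ee x‖ ≤ 4 / x ^ 6 := by
  have hz : Tendsto (fun R : ℝ => (-Complex.I / (R : ℂ) ^ 2 - 2 / (R : ℂ) ^ 6) * ee R) atTop
      (nhds 0) := by
    have hb : Tendsto (fun R : ℝ => 1 / R ^ 2 + 2 / R ^ 6) atTop (nhds 0) := by
      have h1 : Tendsto (fun R : ℝ => 1 / R ^ 2) atTop (nhds 0) :=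
        tendsto_const_nhds.div_atTop (tendsto_pow_atTop (by norm_num))
      have h2 : Tendsto (fun R : ℝ => 2 / R ^ 6) atTop (nhds 0) :=
        tendsto_const_nhds.div_atTop (tendsto_pow_atTop (by norm_num))
      simpa using h1.add h2
    refine squeeze_zero_norm' ?_ hb
    filter_upwards [eventually_gt_atTop 0] with R hR
    rw [norm_mul, ee_norm, mul_one]
    refine (norm_sub_le _ _).trans (le_of_eq ?_)
    simp [abs_of_pos hR]
  have hl := (((hg x).sub hz).add_const
    ((-Complex.I / (x : ℂ) ^ 2 - 2 / (x : ℂ) ^ 6) * ee x)).norm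
  have h1 := le_of_tendsto hl (by
    filter_upwards [eventually_ge_atTop x] with R hR
    exact asym1 f hf hc x R hx hR)
  have e : g x + Complex.I / (x : ℂ) ^ 2 * ee x =
    -(-g x - 0 + (-Complex.I / (x : ℂ) ^ 2 - 2 / (x : ℂ) ^ 6) * ee x) - 2 / (x : ℂ) ^ 6 * ee x := by
    ring
  rw [e]
  refine (norm_sub_le _ _).trans ?_
  rw [norm_neg, norm_mul, ee_norm, norm_div, norm_pow, Complex.norm_real,
      Real.norm_of_nonneg hx.le]
  have : ‖(2:ℂ)‖ = 2 := by simp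
  rw [this]
  have : 4 / x ^ 6 = 2 / x ^ 6 + 2 / x ^ 6 * 1 := by ring
  linarith

theorem stmt_12 (f g : ℝ → ℂ)
    (hf : ∀ t : ℝ, f t = (t : ℂ) * Complex.exp (Complex.I * (t : ℂ) ^ 4 / 4))
    (hg : ∀ x : ℝ, Tendsto (fun R : ℝ => ∫ t in x..R, f t) atTop (nhds (-g x))) :
    (∀ ξ : ℝ, ξ ≠ 0 →
      Tendsto (fun R : ℝ => ∫ t in (-R)..R,
          f t * Complex.exp (-2 * (π : ℂ) * Complex.I * (ξ : ℂ) * (t : ℂ)))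
        atTop (nhds (2 * (π : ℂ) * Complex.I * (ξ : ℂ) * 𝓕 g ξ))) ∧
    ¬ Integrable (fun ξ : ℝ => 𝓕 g ξ) := by
  have hf' : ∀ t : ℝ, f t = (t : ℂ) * ee t := hf
  have hfc : Continuous f := by
    rw [show f = fun t : ℝ => (t : ℂ) * ee t from funext hf']
    exact Complex.continuous_ofReal.mul ee_cont
  have hfi : ∀ a b, IntervalIntegrable f volume a b := fun a b => hfc.intervalIntegrable a b
  have hgd0 : ∀ a b, g b = g a + ∫ t in a..b, f t := by
    intro a b
    have h1 : Tendsto (fun R : ℝ => (∫ t in a..b, f t) + ∫ t in b..R, f t) atTop (nhds (-g a)) := by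
      refine (hg a).congr fun R => ?_
      rw [integral_add_adjacent_intervals (hfi _ _) (hfi _ _)]
    have := tendsto_nhds_unique h1 ((hg b).const_add _)
    linear_combination this
  have hgd : ∀ x, HasDerivAt g (f x) x := by
    intro x
    rw [show g = fun b => g 0 + ∫ t in (0:ℝ)..b, f t from funext fun b => hgd0 0 b]
    exact (prim_deriv f hfc 0 x).const_add _
  have hgc : Continuous g := continuous_iff_continuousAt.2 fun x => (hgd x).continuousAt
  have hfodd : ∀ t, f (-t) = - f t := by
    intro t; rw [hf, hf]; push_cast; rw [Even.neg_pow (by decide)]; ring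
  have hgeven : ∀ x, g (-x) = g x := by
    intro x
    have h1 := hgd0 0 x
    have h2 := hgd0 0 (-x)
    have h3 : ∫ t in (0:ℝ)..(-x), f t = ∫ t in (0:ℝ)..x, f t := by
      have := intervalIntegral.integral_comp_neg (a := 0) (b := x) f
      rw [neg_zero, integral_symm 0 (-x)] at this
      simp only [hfodd, intervalIntegral.integral_neg] at this
      exact (neg_injective this).symm
    rw [h1, h2, h3]
  have hasy := asym2 f g hf' hfc hg
  have hg5 : ∀ x, 1 ≤ x → ‖g x‖ ≤ 5 / x ^ 2 := by
    intro x hx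
    have h0 : 0 < x := by linarith
    have h1 := hasy x h0
    have e : g x = (g x + Complex.I / (x : ℂ) ^ 2 * ee x) - Complex.I / (x : ℂ) ^ 2 * ee x := by
      ring
    rw [e]
    refine (norm_sub_le _ _).trans ?_
    have h2 : ‖Complex.I / (x : ℂ) ^ 2 * ee x‖ = 1 / x ^ 2 := by
      rw [norm_mul, ee_norm]; simp
    have h3 : 4 / x ^ 6 ≤ 4 / x ^ 2 := by
      gcongr
      norm_num
    rw [h2]
    have : 5 / x ^ 2 = 4 / x ^ 2 + 1 / x ^ 2 := by ring
    linarith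
  have hgi : Integrable g := by
    obtain ⟨C, hC⟩ := (isCompact_Icc (a := (-1:ℝ)) (b := 1)).exists_bound_of_continuousOn
      hgc.continuousOn
    refine (integrable_inv_one_add_sq.const_mul (2 * |C| + 10)).mono' hgc.aestronglyMeasurable
      (Eventually.of_forall fun x => ?_)
    have big : ∀ x : ℝ, 1 ≤ x → ‖g x‖ ≤ (2 * |C| + 10) * (1 + x ^ 2)⁻¹ := by
      intro x hx
      refine (hg5 x hx).trans ?_
      rw [← div_eq_mul_inv, div_le_div_iff₀ (by positivity) (by positivity)]
      nlinarith [abs_nonneg C, mul_nonneg (abs_nonneg C) (sq_nonneg x)]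
    rcases le_total 1 x with h | h
    · exact big x h
    rcases le_total x (-1) with h' | h'
    · have := big (-x) (by linarith)
      rwa [hgeven, neg_sq] at this
    · refine (hC x ⟨h', h⟩).trans ?_
      rw [← div_eq_mul_inv, le_div_iff₀ (by positivity)]
      have hx2 : x ^ 2 ≤ 1 := by nlinarith
      nlinarith [abs_nonneg C, le_abs_self C, mul_le_mul_of_nonneg_left hx2 (abs_nonneg C), mul_le_mul_of_nonneg_right (le_abs_self C) (by positivity : 0 ≤ 1 + x ^ 2)]
  have hg0 : Tendsto g atTop (nhds 0) := by
    have h1 : Tendsto (fun R : ℝ => 5 / R ^ 2) atTop (nhds 0) :=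
      tendsto_const_nhds.div_atTop (tendsto_pow_atTop (by norm_num))
    refine squeeze_zero_norm' ?_ h1
    filter_upwards [eventually_ge_atTop 1] with x hx using hg5 x hx
  refine ⟨fun ξ _ => ?_, fun hint => ?_⟩
  · set k : ℝ → ℂ := fun t => Complex.exp (-2 * (π : ℂ) * Complex.I * (ξ : ℂ) * (t : ℂ)) with hk
    have hkd : ∀ t, HasDerivAt k (k t * (-2 * (π : ℂ) * Complex.I * (ξ : ℂ))) t := by
      intro t
      have h : HasDerivAt (fun x : ℝ => (x : ℂ)) 1 t := Complex.ofRealCLM.hasDerivAt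
      refine ((h.const_mul (-2 * (π : ℂ) * Complex.I * (ξ : ℂ))).cexp).congr_deriv ?_
      simp [hk]
    have hkc : Continuous k := continuous_iff_continuousAt.2 fun x => (hkd x).continuousAt
    have hkn : ∀ t, ‖k t‖ = 1 := by
      intro t
      have : -2 * (π : ℂ) * Complex.I * (ξ : ℂ) * (t : ℂ) = ((-2 * π * ξ * t : ℝ) : ℂ) * Complex.I := by
        push_cast; ring
      simp only [hk]
      rw [this, Complex.norm_exp_ofReal_mul_I]
    have hF : 𝓕 g ξ = ∫ t, g t * k t := by
      rw [Real.fourier_real_eq_integral_exp_smul]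
      congr 1; ext t
      rw [smul_eq_mul, mul_comm]
      simp only [hk]
      congr 2
      push_cast; ring
    have hgk : Integrable (fun t => g t * k t) :=
      hgi.mul_bdd (c := 1) hkc.aestronglyMeasurable (Eventually.of_forall fun t => (hkn t).le)
    have hlim : Tendsto (fun R : ℝ => ∫ t in (-R)..R, g t * k t) atTop (nhds (𝓕 g ξ)) := by
      rw [hF]
      exact intervalIntegral_tendsto_integral hgk tendsto_neg_atTop_atBot tendsto_id
    have hibp : ∀ R : ℝ, ∫ t in (-R)..R, f t * k t =
        g R * k R - g R * k (-R) + 2 * (π : ℂ) * Complex.I * (ξ : ℂ) * ∫ t in (-R)..R, g t * k t := by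
      intro R
      have := integral_deriv_mul_eq_sub (a := -R) (b := R) (u := g) (v := k) (u' := f)
        (v' := fun t => k t * (-2 * (π : ℂ) * Complex.I * (ξ : ℂ))) (fun x _ => hgd x)
        (fun x _ => hkd x) (hfi _ _) ((hkc.mul continuous_const).intervalIntegrable _ _)
      rw [hgeven] at this
      have i1 : IntervalIntegrable (fun t => f t * k t) volume (-R) R :=
        (hfc.mul hkc).intervalIntegrable _ _
      have i2 : IntervalIntegrable (fun t => g t * (k t * (-2 * (π : ℂ) * Complex.I * (ξ : ℂ))))
        volume (-R) R := (hgc.mul (hkc.mul continuous_const)).intervalIntegrable _ _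
      rw [integral_add i1 i2] at this
      have e : ∀ t, g t * (k t * (-2 * (π : ℂ) * Complex.I * (ξ : ℂ))) =
        (g t * k t) * (-2 * (π : ℂ) * Complex.I * (ξ : ℂ)) := fun t => by ring
      simp only [e] at this
      rw [intervalIntegral.integral_mul_const] at this
      linear_combination this
    have hz : ∀ s : ℝ → ℝ, Tendsto (fun R => g R * k (s R)) atTop (nhds 0) := by
      intro s
      rw [tendsto_zero_iff_norm_tendsto_zero]
      simp only [norm_mul, hkn, mul_one]
      exact tendsto_zero_iff_norm_tendsto_zero.1 hg0
    have := ((hz id).sub (hz fun R => -R)).add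
      (hlim.const_mul (2 * (π : ℂ) * Complex.I * (ξ : ℂ)))
    rw [sub_zero, zero_add] at this
    exact this.congr fun R => (hibp R).symm
  · have hint' : Integrable (𝓕 g) := hint
    have hinv : 𝓕 (𝓕 g) = g := by
      have h1 := hgc.fourierInv_fourier_eq hgi hint'
      ext x
      have h2 := congrFun h1 (-x)
      rw [Real.fourierInv_eq_fourier_neg, neg_neg, hgeven] at h2
      exact h2
    have hub : ∀ R : ℝ, 1 ≤ R → ‖∫ x in (1:ℝ)..R, g x * ((x : ℂ) * osc 0 x)‖ ≤
        ∫ ξ, ‖𝓕 g ξ‖ * 9 := by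
      intro R hR
      set φ : ℝ → ℂ := (Set.Ioc 1 R).indicator (fun x : ℝ => (x : ℂ) * osc 0 x) with hφ
      have hφi : Integrable φ := by
        rw [hφ, integrable_indicator_iff measurableSet_Ioc]
        exact ((int_cont 0).intervalIntegrable 1 R).1
      have e1 : ∫ x in (1:ℝ)..R, g x * ((x : ℂ) * osc 0 x) = ∫ x, 𝓕 (𝓕 g) x • φ x := by
        rw [hinv, integral_of_le hR, ← MeasureTheory.integral_indicator measurableSet_Ioc]
        congr 1; ext x
        by_cases hx : x ∈ Set.Ioc 1 R <;> simp [hφ, hx]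
      have e2 : ∫ x, 𝓕 (𝓕 g) x • φ x = ∫ ξ, 𝓕 g ξ • 𝓕 φ ξ := by
        have := VectorFourier.integral_fourierIntegral_smul_eq_flip (L := innerₗ ℝ) (μ := volume)
          (ν := volume) (e := 𝐞) Real.continuous_fourierChar (by exact continuous_inner) hint' hφi
        rw [flip_innerₗ] at this
        exact this
      have e3 : ∀ ξ, ‖𝓕 φ ξ‖ ≤ 9 := by
        intro ξ
        have : 𝓕 φ ξ = ∫ t in (1:ℝ)..R, (t : ℂ) * osc (2 * π * ξ) t := by
          rw [Real.fourier_real_eq_integral_exp_smul, integral_of_le hR,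
            ← MeasureTheory.integral_indicator measurableSet_Ioc]
          congr 1; ext x
          by_cases hx : x ∈ Set.Ioc 1 R
          · simp only [hφ, Set.indicator_of_mem hx, smul_eq_mul]
            rw [mul_left_comm]
            congr 1
            unfold osc
            rw [← Complex.exp_add]
            congr 1
            push_cast; ring
          · simp [hφ, hx]
        rw [this]
        exact vdc _ R hR
      rw [e1, e2]
      refine norm_integral_le_of_norm_le (hint'.norm.mul_const 9) (Eventually.of_forall fun ξ => ?_)
      rw [norm_smul]
      exact mul_le_mul_of_nonneg_left (e3 ξ) (norm_nonneg _)
    have hlb : ∀ R : ℝ, 1 ≤ R →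
        Real.log R ≤ 1 + ‖∫ x in (1:ℝ)..R, g x * ((x : ℂ) * osc 0 x)‖ := by
      intro R hR
      have key := fence (fun y => (∫ x in (1:ℝ)..y, g x * ((x : ℂ) * osc 0 x))
          + Complex.I * (Real.log y : ℂ))
        (fun y => (g y + Complex.I / (y : ℂ) ^ 2 * ee y) * ((y : ℂ) * osc 0 y))
        (fun y => -(1 / y ^ 4)) (fun y => 4 / y ^ 5) 1 R hR ?_ ?_ ?_
      · simp only [integral_same, Real.log_one] at key
        set J := ∫ x in (1:ℝ)..R, g x * ((x : ℂ) * osc 0 x)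
        have h1 : Complex.I * (Real.log R : ℂ) =
          (J + Complex.I * (Real.log R : ℂ) - (0 + Complex.I * ((0:ℝ) : ℂ))) - J := by
          push_cast; ring
        have h2 : ‖Complex.I * (Real.log R : ℂ)‖ = Real.log R := by
          rw [norm_mul, Complex.norm_I, one_mul, Complex.norm_real,
            Real.norm_of_nonneg (Real.log_nonneg hR)]
        rw [h1] at h2
        have h3 := norm_sub_le (J + Complex.I * (Real.log R : ℂ) - (0 + Complex.I * ((0:ℝ) : ℂ))) J
        have h4 : 0 ≤ 1 / R ^ 4 := by positivity
        norm_num only at key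
        linarith
      · intro y hy
        have h0 : 0 < y := by linarith [hy.1]
        have hy0 : (y : ℂ) ≠ 0 := by exact_mod_cast h0.ne'
        refine ((prim_deriv _ (hgc.mul (int_cont 0)) 1 y).add
          ((Real.hasDerivAt_log h0.ne').ofReal_comp.const_mul Complex.I)).congr_deriv ?_
        have := ee_osc y
        push_cast
        have h5 : Complex.I / (y : ℂ) ^ 2 * ee y * ((y : ℂ) * osc 0 y) = Complex.I * (y : ℂ)⁻¹ := by
          calc _ = Complex.I / (y : ℂ) ^ 2 * y * (ee y * osc 0 y) := by ring
            _ = _ := by rw [this]; field_simp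
        rw [add_mul, h5]
        rfl
      · intro y hy
        have h0 : 0 < y := by linarith [hy.1]
        have := ((hasDerivAt_const y (1:ℝ)).div (hasDerivAt_pow 4 y) (by positivity)).neg
        refine this.congr_deriv ?_
        simp
        field_simp
      · intro y hy
        have h0 : 0 < y := by linarith [hy.1]
        rw [norm_mul, norm_mul, osc_norm, Complex.norm_real, Real.norm_of_nonneg h0.le, mul_one]
        calc _ ≤ 4 / y ^ 6 * y := mul_le_mul_of_nonneg_right (hasy y h0) h0.le
          _ = 4 / y ^ 5 := by field_simp
    set M := ∫ ξ, ‖𝓕 g ξ‖ * 9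
    obtain ⟨R, hR1, hR2⟩ := ((Real.tendsto_log_atTop.eventually_gt_atTop (1 + M)).and
      (eventually_ge_atTop 1)).exists
    linarith [hub R hR2, hlb R hR2]
end
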